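/- arXiv:1403.6385 — 4 statements merged into one kernel-verified Lean document; each statement's English description precedes it below -/
import Mathlib

section
/- Assume the additive-noise setting, let α, q ∈ (0,∞), ε ∈ ( (α−1/2)⁺/(1+2α), 2α/(1+2α) ), set p = (1+2α)/(ε(1+2α)+1), let c ∈ [p,∞), c̃ ∈ [0,∞), assume that α − c̃·x^c ≤ x·μ(x) ≤ c̃(1+x²) for all x ∈ (0,∞), and assume E[ (X_0)^{ max{c−1,1} · max{ p, q, (q−p)(1+2α+p)/(1+2α−p) } } ] < ∞. Then ‖ sup_{s,t∈[0,T], s≠t} |(X_t − W_t) − (X_s − W_s)| / |t−s|^{2α/(1+2α)−ε} ‖_{L^q(Ω;ℝ)} ≤ ‖ (∫_0^T |μ(X_r)|^p dr)^{1/p} ‖_{L^q(Ω;ℝ)} < ∞. -/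
open MeasureTheory ProbabilityTheory Filter Set
open scoped ENNReal NNReal

noncomputable section

open scoped Topology

/-!
On an interval `[s, t]` the increment of `X - W` is the integral of `μ(X)`, so Hölder's inequality
in time bounds the `(1 - 1/p)`-Hölder seminorm of `X - W` by the `L^p` norm of `μ(X)`. Since
`|μ(x)| ≤ κ (x⁻¹ + (x² + 1)^(k/2))`, it remains to bound the moments of the time integrals of
`X^(-p)` and of powers of `X² + 1`.

Both bounds are instances of the Feynman–Kac inequality
`E[φ(X_T) exp (∫₀ᵀ g(X_r) dr)] ≤ E[φ(X_0)]` for supersolutions `φ' μ + φ'' / 2 + g φ ≤ 0`. Bounded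
approximations of `(x² + 1)^a` with constant `g < 0` give the positive moments. For the negative
ones take `φ = exp (-L (x² + δ)^((2 - p)/2) / (2 - p))`: the drift term `α / x` makes the
generator of the exponent at least a multiple of `(x² + δ)^(-p/2)`, up to lower-order terms, because
`p < 1 + 2 α`, and the resulting exponential moment is uniform in `δ`, which then tends to `0`.

Instead of Itô's formula, the Feynman–Kac inequality uses Taylor expansion along uniform grids: the
discrete martingale part is centred and bounded in `L²`, and along almost every path the remainder
is eventually below `η` times one plus the quadratic variation of the grid, for every `η > 0`. The
mean of that quadratic variation is bounded, so nothing survives in the limit.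
-/

section Calculus

/-- `φ₁`, `φ₂`, `φ₃` are the first three derivatives of `φ`, and all three are bounded by `K`.
This is the regularity asked of the test functions in the Taylor expansion along grids. -/
structure HasBoundedDerivs (φ φ₁ φ₂ φ₃ : ℝ → ℝ) (K : ℝ) : Prop where
  hasDerivAt : ∀ x, HasDerivAt φ (φ₁ x) x
  hasDerivAt₁ : ∀ x, HasDerivAt φ₁ (φ₂ x) x
  hasDerivAt₂ : ∀ x, HasDerivAt φ₂ (φ₃ x) x
  abs_le₁ : ∀ x, |φ₁ x| ≤ K
  abs_le₂ : ∀ x, |φ₂ x| ≤ K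
  abs_le₃ : ∀ x, |φ₃ x| ≤ K

lemma abs_image_sub_le_of_hasDerivAt {φ φ₁ : ℝ → ℝ} (h : ∀ x, HasDerivAt φ (φ₁ x) x) {K : ℝ}
    (hK : ∀ x, |φ₁ x| ≤ K) (a b : ℝ) : |φ b - φ a| ≤ K * |b - a| :=
  convex_univ.norm_image_sub_le_of_norm_hasDerivWithin_le (fun x _ ↦ (h x).hasDerivWithinAt)
    (fun x _ ↦ hK x) trivial trivial

lemma abs_image_sub_sub_mul_le_of_hasDerivAt {φ φ₁ : ℝ → ℝ} (h : ∀ x, HasDerivAt φ (φ₁ x) x)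
    {K z η : ℝ} (hK : ∀ x, |x - z| ≤ η → |φ₁ x - φ₁ z| ≤ K) {a b : ℝ} (ha : |a - z| ≤ η)
    (hb : |b - z| ≤ η) : |φ b - φ a - φ₁ z * (b - a)| ≤ K * |b - a| := by
  have hmvt := (convex_closedBall z η).norm_image_sub_le_of_norm_hasDerivWithin_le
    (f := fun x ↦ φ x - φ₁ z * x)
    (fun x _ ↦ ((h x).sub ((hasDerivAt_id x).const_mul (φ₁ z))).hasDerivWithinAt)
    (fun x hx ↦ by simpa using hK x (by simpa [Real.dist_eq] using hx))
    (by simpa [Real.dist_eq] using ha) (by simpa [Real.dist_eq] using hb)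
  rw [Real.norm_eq_abs, Real.norm_eq_abs] at hmvt
  convert hmvt using 2
  ring

lemma image_add_sub_le_taylor_two {φ φ₁ φ₂ : ℝ → ℝ} (h₁ : ∀ x, HasDerivAt φ (φ₁ x) x)
    (h₂ : ∀ x, HasDerivAt φ₁ (φ₂ x) x) {K x h : ℝ}
    (hK : ∀ y, |y - x| ≤ |h| → |φ₂ y - φ₂ x| ≤ K) :
    φ (x + h) - φ x ≤ φ₁ x * h + 1 / 2 * φ₂ x * h ^ 2 + K * h ^ 2 := by
  have hx : |x - x| ≤ |h| := by simp
  have hK0 : 0 ≤ K := (abs_nonneg _).trans (hK x hx)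
  have hderiv (y : ℝ) :
      HasDerivAt (fun y ↦ φ y - φ₂ x * ((y - x) ^ 2 / 2)) (φ₁ y - φ₂ x * (y - x)) y := by
    refine ((h₁ y).sub
      (((((hasDerivAt_id y).sub_const x).pow 2).div_const 2).const_mul (φ₂ x))).congr_deriv ?_
    simp
  have hderiv_osc (y : ℝ) (hy : |y - x| ≤ |h|) :
      |(φ₁ y - φ₂ x * (y - x)) - (φ₁ x - φ₂ x * (x - x))| ≤ K * |h| := by
    calc |(φ₁ y - φ₂ x * (y - x)) - (φ₁ x - φ₂ x * (x - x))|
        = |φ₁ y - φ₁ x - φ₂ x * (y - x)| := by congr 1; ring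
      _ ≤ K * |y - x| := abs_image_sub_sub_mul_le_of_hasDerivAt h₂ hK hx hy
      _ ≤ K * |h| := by gcongr
  have hmvt := le_of_abs_le
    (abs_image_sub_sub_mul_le_of_hasDerivAt hderiv hderiv_osc hx (b := x + h) (by simp))
  simp only [add_sub_cancel_left, sub_self] at hmvt
  nlinarith [abs_mul_abs_self h]

namespace HasBoundedDerivs

variable {φ φ₁ φ₂ φ₃ : ℝ → ℝ} {K : ℝ}

lemma continuous (hφ : HasBoundedDerivs φ φ₁ φ₂ φ₃ K) : Continuous φ :=
  continuous_iff_continuousAt.2 fun x ↦ (hφ.hasDerivAt x).continuousAt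

lemma continuous₁ (hφ : HasBoundedDerivs φ φ₁ φ₂ φ₃ K) : Continuous φ₁ :=
  continuous_iff_continuousAt.2 fun x ↦ (hφ.hasDerivAt₁ x).continuousAt

lemma continuous₂ (hφ : HasBoundedDerivs φ φ₁ φ₂ φ₃ K) : Continuous φ₂ :=
  continuous_iff_continuousAt.2 fun x ↦ (hφ.hasDerivAt₂ x).continuousAt

lemma nonneg (hφ : HasBoundedDerivs φ φ₁ φ₂ φ₃ K) : 0 ≤ K :=
  (abs_nonneg _).trans (hφ.abs_le₁ 0)

lemma mono (hφ : HasBoundedDerivs φ φ₁ φ₂ φ₃ K) {K' : ℝ} (h : K ≤ K') :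
    HasBoundedDerivs φ φ₁ φ₂ φ₃ K' where
  hasDerivAt := hφ.hasDerivAt
  hasDerivAt₁ := hφ.hasDerivAt₁
  hasDerivAt₂ := hφ.hasDerivAt₂
  abs_le₁ x := (hφ.abs_le₁ x).trans h
  abs_le₂ x := (hφ.abs_le₂ x).trans h
  abs_le₃ x := (hφ.abs_le₃ x).trans h

lemma const_mul (hφ : HasBoundedDerivs φ φ₁ φ₂ φ₃ K) {a : ℝ} (ha : 0 ≤ a) :
    HasBoundedDerivs (fun x ↦ a * φ x) (fun x ↦ a * φ₁ x) (fun x ↦ a * φ₂ x)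
      (fun x ↦ a * φ₃ x) (a * K) where
  hasDerivAt x := (hφ.hasDerivAt x).const_mul a
  hasDerivAt₁ x := (hφ.hasDerivAt₁ x).const_mul a
  hasDerivAt₂ x := (hφ.hasDerivAt₂ x).const_mul a
  abs_le₁ x := by rw [abs_mul, abs_of_nonneg ha]; gcongr; exact hφ.abs_le₁ x
  abs_le₂ x := by rw [abs_mul, abs_of_nonneg ha]; gcongr; exact hφ.abs_le₂ x
  abs_le₃ x := by rw [abs_mul, abs_of_nonneg ha]; gcongr; exact hφ.abs_le₃ x

lemma sub (hφ : HasBoundedDerivs φ φ₁ φ₂ φ₃ K) {ψ ψ₁ ψ₂ ψ₃ : ℝ → ℝ} {L : ℝ}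
    (hψ : HasBoundedDerivs ψ ψ₁ ψ₂ ψ₃ L) :
    HasBoundedDerivs (fun x ↦ φ x - ψ x) (fun x ↦ φ₁ x - ψ₁ x) (fun x ↦ φ₂ x - ψ₂ x)
      (fun x ↦ φ₃ x - ψ₃ x) (K + L) where
  hasDerivAt x := (hφ.hasDerivAt x).sub (hψ.hasDerivAt x)
  hasDerivAt₁ x := (hφ.hasDerivAt₁ x).sub (hψ.hasDerivAt₁ x)
  hasDerivAt₂ x := (hφ.hasDerivAt₂ x).sub (hψ.hasDerivAt₂ x)
  abs_le₁ x := (abs_sub _ _).trans (add_le_add (hφ.abs_le₁ x) (hψ.abs_le₁ x))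
  abs_le₂ x := (abs_sub _ _).trans (add_le_add (hφ.abs_le₂ x) (hψ.abs_le₂ x))
  abs_le₃ x := (abs_sub _ _).trans (add_le_add (hφ.abs_le₃ x) (hψ.abs_le₃ x))

lemma exp_neg (hφ : HasBoundedDerivs φ φ₁ φ₂ φ₃ K) (h0 : ∀ x, 0 ≤ φ x) :
    HasBoundedDerivs (fun x ↦ Real.exp (-φ x)) (fun x ↦ -φ₁ x * Real.exp (-φ x))
      (fun x ↦ (φ₁ x ^ 2 - φ₂ x) * Real.exp (-φ x))
      (fun x ↦ (3 * φ₁ x * φ₂ x - φ₃ x - φ₁ x ^ 3) * Real.exp (-φ x))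
      (K + K ^ 2 + 3 * K ^ 2 + K ^ 3) := by
  have hK := hφ.nonneg
  have hexp (x : ℝ) : HasDerivAt (fun x ↦ Real.exp (-φ x)) (Real.exp (-φ x) * -φ₁ x) x :=
    (hφ.hasDerivAt x).neg.exp
  have hmul_exp {y C : ℝ} (x : ℝ) (hy : |y| ≤ C) : |y * Real.exp (-φ x)| ≤ C := by
    rw [abs_mul, abs_of_pos (Real.exp_pos _)]
    exact (mul_le_of_le_one_right (abs_nonneg _)
      (Real.exp_le_one_iff.2 (neg_nonpos.2 (h0 x)))).trans hy
  have hpow (x : ℝ) (k : ℕ) : |φ₁ x ^ k| ≤ K ^ k := by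
    rw [abs_pow]; exact pow_le_pow_left₀ (abs_nonneg _) (hφ.abs_le₁ x) k
  refine ⟨fun x ↦ (hexp x).congr_deriv (by ring), fun x ↦ ?_, fun x ↦ ?_, fun x ↦ hmul_exp x ?_,
    fun x ↦ hmul_exp x ?_, fun x ↦ hmul_exp x ?_⟩
  · exact ((hφ.hasDerivAt₁ x).neg.mul (hexp x)).congr_deriv (by simp only [Pi.neg_apply]; ring)
  · exact ((((hφ.hasDerivAt₁ x).pow 2).sub (hφ.hasDerivAt₂ x)).mul (hexp x)).congr_deriv
      (by simp only [Pi.sub_apply, Pi.pow_apply]; push_cast; ring)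
  · rw [abs_neg]
    nlinarith [hφ.abs_le₁ x, pow_nonneg hK 2, pow_nonneg hK 3]
  · refine (abs_sub _ _).trans ?_
    nlinarith [hpow x 2, hφ.abs_le₂ x, pow_nonneg hK 2, pow_nonneg hK 3]
  · have hprod : |3 * φ₁ x * φ₂ x| ≤ 3 * K ^ 2 := by
      rw [abs_mul, abs_mul, abs_of_pos three_pos, mul_assoc, sq]
      gcongr
      exacts [hφ.abs_le₁ x, hφ.abs_le₂ x]
    refine ((abs_sub _ _).trans (add_le_add_left (abs_sub _ _) _)).trans ?_
    nlinarith [hpow x 3, hφ.abs_le₃ x, pow_nonneg hK 2]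

end HasBoundedDerivs

end Calculus

section PathwiseIto

/-- A nonnegative continuous path `x` solving the integral equation `dx = μ(x) dt + dw` on `[0, T]`
for a continuous noise path `w`; this is what a single sample path of the SDE satisfies. -/
structure IsSolutionPath (T : ℝ) (μ x w : ℝ → ℝ) : Prop where
  continuousOn : ContinuousOn x (Icc 0 T)
  continuousOn_noise : ContinuousOn w (Icc 0 T)
  nonneg : ∀ t ∈ Icc 0 T, 0 ≤ x t
  intervalIntegrable : IntervalIntegrable (fun r ↦ μ (x r)) volume 0 T
  eq : ∀ t ∈ Icc 0 T, x t = x 0 + (∫ r in (0 : ℝ)..t, μ (x r)) + w t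

/-- A bounded nonnegative test function `φ` with `φ' μ + φ'' / 2 + g φ ≤ 0` on `[0, ∞)`: the
Feynman-Kac functional with potential `g` of a solution of `dX = μ(X) dt + dW` does not increase
in mean. The potential need only be bounded above. -/
structure IsSupersolution (μ φ φ₁ φ₂ φ₃ g : ℝ → ℝ) (K : ℝ) : Prop
    extends HasBoundedDerivs φ φ₁ φ₂ φ₃ K where
  nonneg_fun : ∀ x, 0 ≤ φ x
  fun_le : ∀ x, φ x ≤ K
  continuous_potential : Continuous g
  potential_le : ∀ x, g x ≤ K
  generator_le : ∀ x, 0 ≤ x → φ₁ x * μ x + 1 / 2 * φ₂ x + φ x * g x ≤ 0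

/-- The Feynman-Kac weight `exp (∫₀ᵗ g(x_r) dr)`. -/
def expWeight (g x : ℝ → ℝ) (t : ℝ) : ℝ := Real.exp (∫ r in (0 : ℝ)..t, g (x r))

/-- `h` varies by at most `η` between points of `[0, T]` at distance at most `δ`. -/
def OscillationLE (h : ℝ → ℝ) (T δ η : ℝ) : Prop :=
  ∀ s ∈ Icc 0 T, ∀ r ∈ Icc 0 T, |r - s| ≤ δ → |h r - h s| ≤ η

/-- The `i`-th point of the uniform grid on `[0, T]` with `N` cells. -/
def gridPoint (T : ℝ) (N i : ℕ) : ℝ := i * (T / N)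

/-- The increment of `w` over the `i`-th cell of the uniform grid. -/
def gridIncrement (w : ℝ → ℝ) (T : ℝ) (N i : ℕ) : ℝ :=
  w (gridPoint T N (i + 1)) - w (gridPoint T N i)

/-- The quadratic variation of `w` along the uniform grid. -/
def gridQuadVar (w : ℝ → ℝ) (T : ℝ) (N : ℕ) : ℝ :=
  ∑ i ∈ Finset.range N, gridIncrement w T N i ^ 2

/-- The contribution of the `i`-th cell to the martingale part of the discretized Itô formula for
`φ(x_t) exp (∫₀ᵗ g(x_r) dr)`, where `φ₁ = φ'` and `φ₂ = φ''`. -/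
def itoIncrement (φ₁ φ₂ g x w : ℝ → ℝ) (T : ℝ) (N i : ℕ) : ℝ :=
  expWeight g x (gridPoint T N i) * (φ₁ (x (gridPoint T N i)) * gridIncrement w T N i
    + 1 / 2 * φ₂ (x (gridPoint T N i)) * (gridIncrement w T N i ^ 2 - T / N))

lemma eventually_oscillationLE {h : ℝ → ℝ} {T : ℝ} (hh : ContinuousOn h (Icc 0 T)) {η : ℝ}
    (hη : 0 < η) : ∀ᶠ N : ℕ in atTop, OscillationLE h T (T / N) η := by
  obtain ⟨δ, hδ, hosc⟩ := Metric.uniformContinuousOn_iff.1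
    (isCompact_Icc.uniformContinuousOn_of_continuous hh) η hη
  filter_upwards [(tendsto_const_div_atTop_nhds_zero_nat T).eventually (gt_mem_nhds hδ)]
    with N hN s hs r hr hrs
  exact (hosc r hr s hs (hrs.trans_lt hN)).le

lemma div_natCast_le {T : ℝ} (hT : 0 ≤ T) (N : ℕ) : T / N ≤ T := by
  rcases N.eq_zero_or_pos with rfl | hN
  · simpa using hT
  · exact div_le_self hT (mod_cast hN)

lemma natCast_mul_div_natCast_le {T : ℝ} (hT : 0 ≤ T) (N : ℕ) : N * (T / N) ≤ T := by
  rcases eq_or_ne N 0 with rfl | hN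
  · simpa using hT
  · rw [mul_div_cancel₀ _ (Nat.cast_ne_zero.2 hN)]

lemma gridPoint_zero (T : ℝ) (N : ℕ) : gridPoint T N 0 = 0 := by simp [gridPoint]

lemma gridPoint_self (T : ℝ) {N : ℕ} (hN : N ≠ 0) : gridPoint T N N = T := by
  rw [gridPoint]; field_simp

lemma gridPoint_succ_sub (T : ℝ) (N i : ℕ) : gridPoint T N (i + 1) - gridPoint T N i = T / N := by
  rw [gridPoint, gridPoint]; push_cast; ring

lemma gridPoint_mono {T : ℝ} (hT : 0 ≤ T) (N : ℕ) : Monotone (gridPoint T N) := fun i j hij ↦ by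
  rw [gridPoint, gridPoint]; gcongr

lemma gridPoint_mem_Icc {T : ℝ} (hT : 0 ≤ T) {N i : ℕ} (hi : i ≤ N) :
    gridPoint T N i ∈ Icc 0 T := by
  refine ⟨by rw [gridPoint]; positivity, ?_⟩
  rcases eq_or_ne N 0 with rfl | hN
  · simpa [gridPoint] using hT
  · exact (gridPoint_mono hT N hi).trans (gridPoint_self T hN).le

lemma expWeight_le {g x : ℝ → ℝ} {K T t : ℝ} (hK : 0 ≤ K) (hg : ∀ y, g y ≤ K)
    (ht : t ∈ Icc 0 T) : expWeight g x t ≤ Real.exp (K * T) := by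
  refine Real.exp_le_exp.2 ?_
  by_cases hint : IntervalIntegrable (fun r ↦ g (x r)) volume 0 t
  · calc ∫ r in (0 : ℝ)..t, g (x r)
        ≤ ∫ _ in (0 : ℝ)..t, K :=
          intervalIntegral.integral_mono_on ht.1 hint (by simp) fun r _ ↦ hg _
      _ = K * t := by simp [mul_comm]
      _ ≤ K * T := by gcongr; exact ht.2
  · rw [intervalIntegral.integral_undef hint]
    exact mul_nonneg hK (ht.1.trans ht.2)

lemma hasDerivWithinAt_expWeight {g x : ℝ → ℝ} {T t : ℝ}
    (hgx : ContinuousOn (fun r ↦ g (x r)) (Icc 0 T)) (ht : t ∈ Icc 0 T) :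
    HasDerivWithinAt (expWeight g x) (g (x t) * expWeight g x t) (Icc 0 T) t := by
  have : Fact (t ∈ Icc 0 T) := ⟨ht⟩
  have hint : IntervalIntegrable (fun r ↦ g (x r)) volume 0 t :=
    (hgx.mono (Icc_subset_Icc_right ht.2)).intervalIntegrable_of_Icc ht.1
  exact ((intervalIntegral.integral_hasDerivWithinAt_right hint
    (hgx.stronglyMeasurableAtFilter_nhdsWithin measurableSet_Icc t) (hgx t ht)).exp).congr_deriv
    (mul_comm _ _)

lemma continuousOn_mul_expWeight {g x : ℝ → ℝ} {T : ℝ}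
    (hgx : ContinuousOn (fun r ↦ g (x r)) (Icc 0 T)) :
    ContinuousOn (fun r ↦ g (x r) * expWeight g x r) (Icc 0 T) :=
  hgx.mul fun _ ht ↦ (hasDerivWithinAt_expWeight hgx ht).continuousWithinAt

lemma abs_expWeight_sub_le {g x : ℝ → ℝ} {T s t z C : ℝ}
    (hgx : ContinuousOn (fun r ↦ g (x r)) (Icc 0 T)) (hs : 0 ≤ s) (hst : s ≤ t) (ht : t ≤ T)
    (hC : ∀ r ∈ Icc s t, |g (x r) * expWeight g x r - z| ≤ C) :
    |expWeight g x t - expWeight g x s - z * (t - s)| ≤ C * (t - s) := by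
  have hmvt := (convex_Icc s t).norm_image_sub_le_of_norm_hasDerivWithin_le
    (f := fun r ↦ expWeight g x r - z * r)
    (fun r hr ↦ ((hasDerivWithinAt_expWeight hgx ⟨hs.trans hr.1, hr.2.trans ht⟩).mono
      (Icc_subset_Icc hs ht)).sub ((hasDerivWithinAt_id r _).const_mul z))
    (fun r hr ↦ by simpa using hC r hr) (left_mem_Icc.2 hst) (right_mem_Icc.2 hst)
  rw [Real.norm_eq_abs, Real.norm_of_nonneg (sub_nonneg.2 hst)] at hmvt
  convert hmvt using 2
  ring

namespace IsSolutionPath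

variable {T : ℝ} {μ x w : ℝ → ℝ}

lemma intervalIntegrable_of_mem (h : IsSolutionPath T μ x w) {s t : ℝ} (hs : s ∈ Icc 0 T)
    (ht : t ∈ Icc 0 T) : IntervalIntegrable (fun r ↦ μ (x r)) volume s t := by
  refine h.intervalIntegrable.mono_set ?_
  rw [uIcc_of_le (hs.1.trans hs.2)]
  exact uIcc_subset_Icc hs ht

lemma sub_eq (h : IsSolutionPath T μ x w) {s t : ℝ} (hs : s ∈ Icc 0 T) (ht : t ∈ Icc 0 T) :
    x t - x s = (∫ r in s..t, μ (x r)) + (w t - w s) := by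
  have h0 : (0 : ℝ) ∈ Icc 0 T := ⟨le_rfl, hs.1.trans hs.2⟩
  rw [h.eq t ht, h.eq s hs, ← intervalIntegral.integral_add_adjacent_intervals
    (h.intervalIntegrable_of_mem h0 hs) (h.intervalIntegrable_of_mem hs ht)]
  ring

variable {φ φ₁ φ₂ φ₃ g : ℝ → ℝ} {K s t η : ℝ}

lemma image_sub_image_add_noise_le (h : IsSolutionPath T μ x w)
    (hφ : HasBoundedDerivs φ φ₁ φ₂ φ₃ K) (hs : 0 ≤ s) (hst : s ≤ t) (ht : t ≤ T)
    (hx : ∀ r ∈ Icc s t, |x r - x s| ≤ η) (hw : |w t - w s| ≤ η) :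
    φ (x t) - φ (x s + (w t - w s)) ≤
      (∫ r in s..t, φ₁ (x r) * μ (x r)) + 2 * K * η * ∫ r in s..t, |μ (x r)| := by
  have hK := hφ.nonneg
  have hη : 0 ≤ η := (abs_nonneg _).trans hw
  have hint := h.intervalIntegrable_of_mem ⟨hs, hst.trans ht⟩ ⟨hs.trans hst, ht⟩
  have hlip {a b : ℝ} (hab : |b - a| ≤ η) : |φ₁ b - φ₁ a| ≤ K * η :=
    (abs_image_sub_le_of_hasDerivAt hφ.hasDerivAt₁ hφ.abs_le₂ a b).trans (by gcongr)
  set d := ∫ r in s..t, μ (x r)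
  have hd : x t - (x s + (w t - w s)) = d := by
    rw [← sub_sub, h.sub_eq ⟨hs, hst.trans ht⟩ ⟨hs.trans hst, ht⟩, add_sub_cancel_right]
  have hd_le : K * η * |d| ≤ K * η * ∫ r in s..t, |μ (x r)| := by
    gcongr; exact intervalIntegral.abs_integral_le_integral_abs hst
  have hmvt := le_of_abs_le (abs_image_sub_sub_mul_le_of_hasDerivAt hφ.hasDerivAt (z := x s)
    (fun _ ↦ hlip) (a := x s + (w t - w s)) (by simpa using hw) (hx t ⟨hst, le_rfl⟩))
  have hI : IntervalIntegrable (fun r ↦ φ₁ (x r) * μ (x r)) volume s t :=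
    hint.continuousOn_mul <| hφ.continuous₁.comp_continuousOn <| h.continuousOn.mono <|
      uIcc_of_le hst ▸ Icc_subset_Icc hs ht
  have hfreeze : φ₁ (x s) * d ≤
      (∫ r in s..t, φ₁ (x r) * μ (x r)) + K * η * ∫ r in s..t, |μ (x r)| := by
    rw [← intervalIntegral.integral_const_mul, ← intervalIntegral.integral_const_mul,
      ← intervalIntegral.integral_add hI (hint.abs.const_mul _)]
    refine intervalIntegral.integral_mono_on hst (hint.const_mul _)
      (hI.add (hint.abs.const_mul _)) fun r hr ↦ ?_
    have hr' : |(φ₁ (x s) - φ₁ (x r)) * μ (x r)| ≤ K * η * |μ (x r)| := by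
      rw [abs_mul, abs_sub_comm]; gcongr; exact hlip (hx r hr)
    linarith [le_of_abs_le hr']
  rw [hd] at hmvt
  linarith

lemma integral_deriv_mul_drift_le (h : IsSolutionPath T μ x w)
    (hφ : IsSupersolution μ φ φ₁ φ₂ φ₃ g K) (hs : 0 ≤ s) (hst : s ≤ t) (ht : t ≤ T)
    (hosc : ∀ r ∈ Icc s t,
      |(1 / 2 * φ₂ (x r) + φ (x r) * g (x r)) - (1 / 2 * φ₂ (x s) + φ (x s) * g (x s))| ≤ η) :
    ∫ r in s..t, φ₁ (x r) * μ (x r) ≤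
      (η - (1 / 2 * φ₂ (x s) + φ (x s) * g (x s))) * (t - s) := by
  have hI : IntervalIntegrable (fun r ↦ φ₁ (x r) * μ (x r)) volume s t :=
    (h.intervalIntegrable_of_mem ⟨hs, hst.trans ht⟩ ⟨hs.trans hst, ht⟩).continuousOn_mul <|
      hφ.continuous₁.comp_continuousOn <| h.continuousOn.mono <|
        uIcc_of_le hst ▸ Icc_subset_Icc hs ht
  calc ∫ r in s..t, φ₁ (x r) * μ (x r)
      ≤ ∫ _ in s..t, (η - (1 / 2 * φ₂ (x s) + φ (x s) * g (x s))) := by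
        refine intervalIntegral.integral_mono_on hst hI (by simp) fun r hr ↦ ?_
        have hgen := hφ.generator_le _ (h.nonneg r ⟨hs.trans hr.1, hr.2.trans ht⟩)
        linarith [neg_le_of_abs_le (hosc r hr)]
    _ = _ := by rw [intervalIntegral.integral_const, smul_eq_mul, mul_comm]

lemma image_sub_le (h : IsSolutionPath T μ x w) (hφ : IsSupersolution μ φ φ₁ φ₂ φ₃ g K)
    (hs : 0 ≤ s) (hst : s ≤ t) (ht : t ≤ T)
    (hx : ∀ r ∈ Icc s t, |x r - x s| ≤ η) (hw : |w t - w s| ≤ η)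
    (hosc : ∀ r ∈ Icc s t,
      |(1 / 2 * φ₂ (x r) + φ (x r) * g (x r)) - (1 / 2 * φ₂ (x s) + φ (x s) * g (x s))| ≤ η) :
    φ (x t) - φ (x s) + φ (x s) * g (x s) * (t - s) ≤
      φ₁ (x s) * (w t - w s) + 1 / 2 * φ₂ (x s) * ((w t - w s) ^ 2 - (t - s))
        + η * (2 * K * (∫ r in s..t, |μ (x r)|) + K * (w t - w s) ^ 2 + (t - s)) := by
  have hK := hφ.toHasBoundedDerivs.nonneg
  have hdrift := h.image_sub_image_add_noise_le hφ.toHasBoundedDerivs hs hst ht hx hw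
  have hgen := h.integral_deriv_mul_drift_le hφ hs hst ht hosc
  have hnoise := image_add_sub_le_taylor_two hφ.hasDerivAt hφ.hasDerivAt₁ (K := K * η) (x := x s)
    (h := w t - w s) fun y hy ↦
      (abs_image_sub_le_of_hasDerivAt hφ.hasDerivAt₂ hφ.abs_le₃ _ y).trans
        (mul_le_mul_of_nonneg_left (hy.trans hw) hK)
  linarith

lemma image_mul_expWeight_sub_le (h : IsSolutionPath T μ x w)
    (hφ : IsSupersolution μ φ φ₁ φ₂ φ₃ g K) {G : ℝ}
    (hG : ∀ r ∈ Icc 0 T, |g (x r) * expWeight g x r| ≤ G)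
    (hs : 0 ≤ s) (hst : s ≤ t) (ht : t ≤ T)
    (hx : ∀ r ∈ Icc s t, |x r - x s| ≤ η) (hw : |w t - w s| ≤ η)
    (hosc : ∀ r ∈ Icc s t,
      |(1 / 2 * φ₂ (x r) + φ (x r) * g (x r)) - (1 / 2 * φ₂ (x s) + φ (x s) * g (x s))| ≤ η)
    (hoscE : ∀ r ∈ Icc s t, |g (x r) * expWeight g x r - g (x s) * expWeight g x s| ≤ η) :
    φ (x t) * expWeight g x t - φ (x s) * expWeight g x s ≤
      expWeight g x s * (φ₁ (x s) * (w t - w s)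
          + 1 / 2 * φ₂ (x s) * ((w t - w s) ^ 2 - (t - s)))
        + η * (((2 * K + 1) * Real.exp (K * T) + K + K * G)
          * ((∫ r in s..t, |μ (x r)|) + (w t - w s) ^ 2 + (t - s))) := by
  have hK := hφ.toHasBoundedDerivs.nonneg
  have hη : 0 ≤ η := (abs_nonneg _).trans hw
  have hgx : ContinuousOn (fun r ↦ g (x r)) (Icc 0 T) :=
    hφ.continuous_potential.comp_continuousOn h.continuousOn
  have hG0 : 0 ≤ G := (abs_nonneg _).trans (hG s ⟨hs, hst.trans ht⟩)
  have : 0 ≤ t - s := sub_nonneg.2 hst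
  have hJ : 0 ≤ ∫ r in s..t, |μ (x r)| :=
    intervalIntegral.integral_nonneg hst fun _ _ ↦ abs_nonneg _
  have hE : 0 < expWeight g x s := Real.exp_pos _
  have hEB : expWeight g x s ≤ Real.exp (K * T) :=
    expWeight_le hK hφ.potential_le ⟨hs, hst.trans ht⟩
  set J := ∫ r in s..t, |μ (x r)|
  set E := expWeight g x
  set B := Real.exp (K * T)
  have hspace := mul_le_mul_of_nonneg_left (h.image_sub_le hφ hs hst ht hx hw hosc) hE.le
  have hspace_err : E s * (η * (2 * K * J + K * (w t - w s) ^ 2 + (t - s))) ≤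
      B * (η * (2 * K * J + K * (w t - w s) ^ 2 + (t - s))) := by gcongr
  have htime := mul_le_mul_of_nonneg_left
    (le_of_abs_le (abs_expWeight_sub_le hgx hs hst ht hoscE)) (hφ.nonneg_fun (x s))
  have htime_err : φ (x s) * (η * (t - s)) ≤ K * (η * (t - s)) := by
    gcongr; exact hφ.fun_le _
  have hcross : (φ (x t) - φ (x s)) * (E t - E s) ≤ K * η * (G * (t - s)) := by
    refine (le_abs_self _).trans ?_
    rw [abs_mul]
    gcongr
    · exact (abs_image_sub_le_of_hasDerivAt hφ.hasDerivAt hφ.abs_le₁ _ _).trans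
        (mul_le_mul_of_nonneg_left (hx t ⟨hst, le_rfl⟩) hK)
    · simpa using abs_expWeight_sub_le (z := 0) hgx hs hst ht fun r hr ↦ by
        simpa using hG r ⟨hs.trans hr.1, hr.2.trans ht⟩
  have hspare : 0 ≤ η * ((B + K + K * G) * J + (B + K * B + K + K * G) * (w t - w s) ^ 2
      + 2 * K * B * (t - s)) := by positivity
  linarith

lemma discounted_sub_itoSum_le (h : IsSolutionPath T μ x w) (hT : 0 ≤ T)
    (hφ : IsSupersolution μ φ φ₁ φ₂ φ₃ g K) {G : ℝ}
    (hG : ∀ r ∈ Icc 0 T, |g (x r) * expWeight g x r| ≤ G) {N : ℕ} (hN : N ≠ 0)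
    (hx : OscillationLE x T (T / N) η) (hw : OscillationLE w T (T / N) η)
    (hosc : OscillationLE (fun r ↦ 1 / 2 * φ₂ (x r) + φ (x r) * g (x r)) T (T / N) η)
    (hoscE : OscillationLE (fun r ↦ g (x r) * expWeight g x r) T (T / N) η) :
    φ (x T) * expWeight g x T - φ (x 0) - ∑ i ∈ Finset.range N, itoIncrement φ₁ φ₂ g x w T N i ≤
      η * (((2 * K + 1) * Real.exp (K * T) + K + K * G)
        * ((∫ r in (0 : ℝ)..T, |μ (x r)|) + gridQuadVar w T N + T)) := by
  set C := (2 * K + 1) * Real.exp (K * T) + K + K * G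
  set τ := gridPoint T N
  have hτ {i : ℕ} (hi : i ≤ N) : τ i ∈ Icc 0 T := gridPoint_mem_Icc hT hi
  have hτ0 : τ 0 = 0 := gridPoint_zero T N
  have hτN : τ N = T := gridPoint_self T hN
  have hcell (i : ℕ) (hi : i ∈ Finset.range N) :
      φ (x (τ (i + 1))) * expWeight g x (τ (i + 1)) - φ (x (τ i)) * expWeight g x (τ i)
        ≤ itoIncrement φ₁ φ₂ g x w T N i + η * (C * ((∫ r in τ i..τ (i + 1), |μ (x r)|)
          + gridIncrement w T N i ^ 2 + (τ (i + 1) - τ i))) := by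
    have hs := hτ (Finset.mem_range.1 hi).le
    have ht := hτ (Finset.mem_range.1 hi)
    have hst := gridPoint_mono hT N i.le_succ
    have hmem {r : ℝ} (hr : r ∈ Icc (τ i) (τ (i + 1))) : r ∈ Icc 0 T ∧ |r - τ i| ≤ T / N :=
      ⟨⟨hs.1.trans hr.1, hr.2.trans ht.2⟩, by
        rw [abs_of_nonneg (sub_nonneg.2 hr.1), ← gridPoint_succ_sub T N i]
        exact sub_le_sub_right hr.2 _⟩
    rw [itoIncrement, ← gridPoint_succ_sub T N i]
    exact h.image_mul_expWeight_sub_le hφ hG hs.1 hst ht.2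
      (fun r hr ↦ hx _ hs _ (hmem hr).1 (hmem hr).2)
      (hw _ hs _ ht (hmem (right_mem_Icc.2 hst)).2)
      (fun r hr ↦ hosc _ hs _ (hmem hr).1 (hmem hr).2)
      (fun r hr ↦ hoscE _ hs _ (hmem hr).1 (hmem hr).2)
  have hJ : ∑ i ∈ Finset.range N, ∫ r in τ i..τ (i + 1), |μ (x r)| =
      ∫ r in (0 : ℝ)..T, |μ (x r)| := by
    rw [intervalIntegral.sum_integral_adjacent_intervals fun i hi ↦
      (h.intervalIntegrable_of_mem (hτ hi.le) (hτ hi)).abs, hτ0, hτN]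
  have hsum := Finset.sum_le_sum hcell
  rw [Finset.sum_range_sub (fun i ↦ φ (x (τ i)) * expWeight g x (τ i)), Finset.sum_add_distrib,
    ← Finset.mul_sum, ← Finset.mul_sum, Finset.sum_add_distrib, Finset.sum_add_distrib, hJ,
    Finset.sum_range_sub τ, hτ0, hτN] at hsum
  simp only [expWeight, intervalIntegral.integral_same, Real.exp_zero, mul_one, sub_zero] at hsum ⊢
  rw [gridQuadVar]
  linarith

theorem eventually_discounted_sub_itoSum_le (h : IsSolutionPath T μ x w) (hT : 0 ≤ T)
    (hφ : IsSupersolution μ φ φ₁ φ₂ φ₃ g K) (hη : 0 < η) :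
    ∀ᶠ N : ℕ in atTop, φ (x T) * expWeight g x T - φ (x 0)
        - ∑ i ∈ Finset.range N, itoIncrement φ₁ φ₂ g x w T N i ≤ η * (1 + gridQuadVar w T N) := by
  have hK := hφ.toHasBoundedDerivs.nonneg
  have hgx : ContinuousOn (fun r ↦ g (x r)) (Icc 0 T) :=
    hφ.continuous_potential.comp_continuousOn h.continuousOn
  have hgE := continuousOn_mul_expWeight hgx
  have hpot : ContinuousOn (fun r ↦ 1 / 2 * φ₂ (x r) + φ (x r) * g (x r)) (Icc 0 T) :=
    ((hφ.continuous₂.comp_continuousOn h.continuousOn).const_mul _).add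
      ((hφ.continuous.comp_continuousOn h.continuousOn).mul hgx)
  obtain ⟨G, hG⟩ := isCompact_Icc.exists_bound_of_continuousOn hgE
  have hG0 : 0 ≤ G := (norm_nonneg _).trans (hG 0 ⟨le_rfl, hT⟩)
  have hJ : 0 ≤ ∫ r in (0 : ℝ)..T, |μ (x r)| :=
    intervalIntegral.integral_nonneg hT fun _ _ ↦ abs_nonneg _
  set J := ∫ r in (0 : ℝ)..T, |μ (x r)|
  set C := (2 * K + 1) * Real.exp (K * T) + K + K * G
  have hC : 0 < C := by positivity
  have hη' : 0 < η / (C * (1 + J + T)) := by positivity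
  filter_upwards [eventually_oscillationLE h.continuousOn hη',
    eventually_oscillationLE h.continuousOn_noise hη', eventually_oscillationLE hpot hη',
    eventually_oscillationLE hgE hη', eventually_ne_atTop 0] with N hx hw hosc hoscE hN
  have hQV : 0 ≤ gridQuadVar w T N := Finset.sum_nonneg fun _ _ ↦ sq_nonneg _
  refine (h.discounted_sub_itoSum_le hT hφ hG hN hx hw hosc hoscE).trans ?_
  calc η / (C * (1 + J + T)) * (C * (J + gridQuadVar w T N + T))
      ≤ η / (C * (1 + J + T)) * (C * ((1 + J + T) * (1 + gridQuadVar w T N))) := by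
        gcongr; nlinarith
    _ = η * (1 + gridQuadVar w T N) := by field_simp

end IsSolutionPath

end PathwiseIto

section GaussianIncrements

variable {Ω : Type*} {m0 : MeasurableSpace Ω} {P : Measure Ω} {U : Ω → ℝ} {v : ℝ≥0}

lemma memLp_of_hasLaw_gaussianReal {m : ℝ} (hU : HasLaw U (gaussianReal m v) P) (p : ℝ≥0) :
    MemLp U p P :=
  (hU.map_eq ▸ memLp_id_gaussianReal (μ := m) (v := v) p).comp_of_map hU.aemeasurable

lemma memLp_two_sq_sub_of_hasLaw_gaussianReal {m : ℝ} (hU : HasLaw U (gaussianReal m v) P) (a : ℝ) :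
    MemLp (fun ω ↦ U ω ^ 2 - a) 2 P := by
  have := hU.isProbabilityMeasure
  refine MemLp.sub ?_ (memLp_const a)
  convert (memLp_of_hasLaw_gaussianReal hU 4).norm_rpow_div 2 using 1
  · simp
  · exact (ENNReal.eq_div_iff two_ne_zero ENNReal.ofNat_ne_top).2 (by norm_num)

lemma integral_sq_of_hasLaw_gaussianReal_zero (hU : HasLaw U (gaussianReal 0 v) P) :
    ∫ ω, U ω ^ 2 ∂P = v := by
  have hvar := hU.variance_eq
  rwa [variance_of_integral_eq_zero hU.aemeasurable (by simpa using hU.integral_eq),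
    variance_id_gaussianReal] at hvar

lemma integral_sq_sub_sq_of_hasLaw_gaussianReal_zero (hU : HasLaw U (gaussianReal 0 v) P) :
    ∫ ω, (U ω ^ 2 - v) ^ 2 ∂P = v ^ 2 * ∫ x, (x ^ 2 - 1) ^ 2 ∂gaussianReal 0 1 := by
  have hscale : gaussianReal 0 v = (gaussianReal 0 1).map (√v * ·) := by
    rw [gaussianReal_map_const_mul, mul_zero, mul_one]
    congr
    ext
    simp
  rw [show ∫ ω, (U ω ^ 2 - v) ^ 2 ∂P = _ from
    hU.integral_comp (f := fun x ↦ (x ^ 2 - v) ^ 2) (by fun_prop), hscale,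
    integral_map (by fun_prop) (by fun_prop), ← integral_const_mul]
  congr with x
  rw [mul_pow, Real.sq_sqrt v.coe_nonneg]
  ring

lemma condExp_mul_comp_eq_zero_of_indep [IsFiniteMeasure P] {m : MeasurableSpace Ω} (hm : m ≤ m0)
    {C : ℝ} {a : Ω → ℝ} (ha : StronglyMeasurable[m] a) (haC : ∀ ω, |a ω| ≤ C)
    (hU : Measurable[m0] U) (hind : Indep (MeasurableSpace.comap U inferInstance) m P)
    {ψ : ℝ → ℝ} (hψ : Measurable ψ) (hint : Integrable (fun ω ↦ ψ (U ω)) P)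
    (hzero : ∫ ω, ψ (U ω) ∂P = 0) :
    P[fun ω ↦ a ω * ψ (U ω) | m] =ᵐ[P] 0 := by
  filter_upwards [condExp_stronglyMeasurable_mul_of_bound hm ha hint C (ae_of_all _ haC),
    condExp_indep_eq hU.comap_le hm (hψ.comp (comap_measurable U)).stronglyMeasurable hind]
    with ω hpull hconst
  rw [show P[fun ω ↦ a ω * ψ (U ω) | m] ω = _ from hpull, Pi.mul_apply,
    show P[fun ω ↦ ψ (U ω) | m] ω = _ from hconst]
  simp [hzero]

lemma memLp_two_mul_of_bound {C : ℝ} {a V : Ω → ℝ} (hV : MemLp V 2 P)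
    (ha : AEStronglyMeasurable a P) (haC : ∀ ω, |a ω| ≤ C) : MemLp (fun ω ↦ a ω * V ω) 2 P :=
  hV.of_le_mul (c := C) (ha.mul hV.1) (ae_of_all _ fun ω ↦ by
    rw [norm_mul]; exact mul_le_mul_of_nonneg_right (haC ω) (norm_nonneg _))

section LinearQuadratic

variable {C : ℝ} {a b : Ω → ℝ}

lemma memLp_two_linear_add_quadratic (hU : HasLaw U (gaussianReal 0 v) P)
    (ha : AEStronglyMeasurable a P) (haC : ∀ ω, |a ω| ≤ C) (hb : AEStronglyMeasurable b P)
    (hbC : ∀ ω, |b ω| ≤ C) : MemLp (fun ω ↦ a ω * U ω + b ω * (U ω ^ 2 - v)) 2 P :=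
  (memLp_two_mul_of_bound (memLp_of_hasLaw_gaussianReal hU 2) ha haC).add
    (memLp_two_mul_of_bound (memLp_two_sq_sub_of_hasLaw_gaussianReal hU v) hb hbC)

lemma condExp_linear_add_quadratic_eq_zero [IsFiniteMeasure P] {m : MeasurableSpace Ω}
    (hm : m ≤ m0) (hU : HasLaw U (gaussianReal 0 v) P) (hUm : Measurable[m0] U)
    (hind : Indep (MeasurableSpace.comap U inferInstance) m P) (ha : StronglyMeasurable[m] a)
    (haC : ∀ ω, |a ω| ≤ C) (hb : StronglyMeasurable[m] b) (hbC : ∀ ω, |b ω| ≤ C) :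
    P[fun ω ↦ a ω * U ω + b ω * (U ω ^ 2 - v) | m] =ᵐ[P] 0 := by
  have := hU.isProbabilityMeasure
  have hL2 : MemLp U 2 P := memLp_of_hasLaw_gaussianReal hU 2
  have hL2' := memLp_two_sq_sub_of_hasLaw_gaussianReal hU v
  have hlin : P[fun ω ↦ a ω * U ω | m] =ᵐ[P] 0 :=
    condExp_mul_comp_eq_zero_of_indep hm ha haC hUm hind measurable_id
      (hL2.integrable one_le_two) (by simpa using hU.integral_eq)
  have hquad : P[fun ω ↦ b ω * (U ω ^ 2 - v) | m] =ᵐ[P] 0 := by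
    refine condExp_mul_comp_eq_zero_of_indep hm hb hbC hUm hind (ψ := fun x ↦ x ^ 2 - v)
      (by fun_prop) (hL2'.integrable one_le_two) ?_
    rw [integral_sub hL2.integrable_sq (integrable_const _),
      integral_sq_of_hasLaw_gaussianReal_zero hU]
    simp
  have hadd := condExp_add
    ((memLp_two_mul_of_bound hL2 (ha.mono hm).aestronglyMeasurable haC).integrable one_le_two)
    ((memLp_two_mul_of_bound hL2' (hb.mono hm).aestronglyMeasurable hbC).integrable one_le_two) m
  refine hadd.trans ?_
  filter_upwards [hlin, hquad] with ω hω hω'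
  simp [hω, hω']

lemma integral_sq_linear_add_quadratic_le (hU : HasLaw U (gaussianReal 0 v) P)
    (ha : AEStronglyMeasurable a P) (haC : ∀ ω, |a ω| ≤ C) (hb : AEStronglyMeasurable b P)
    (hbC : ∀ ω, |b ω| ≤ C) :
    ∫ ω, (a ω * U ω + b ω * (U ω ^ 2 - v)) ^ 2 ∂P ≤
      2 * C ^ 2 * (v + v ^ 2 * ∫ x, (x ^ 2 - 1) ^ 2 ∂gaussianReal 0 1) := by
  have hL2 : MemLp U 2 P := memLp_of_hasLaw_gaussianReal hU 2
  have hL2' := memLp_two_sq_sub_of_hasLaw_gaussianReal hU v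
  calc ∫ ω, (a ω * U ω + b ω * (U ω ^ 2 - v)) ^ 2 ∂P
      ≤ ∫ ω, 2 * C ^ 2 * (U ω ^ 2 + (U ω ^ 2 - v) ^ 2) ∂P := by
        refine integral_mono (memLp_two_linear_add_quadratic hU ha haC hb hbC).integrable_sq
          ((hL2.integrable_sq.add hL2'.integrable_sq).const_mul _) fun ω ↦ ?_
        have ha2 : a ω ^ 2 ≤ C ^ 2 := sq_le_sq' (neg_le_of_abs_le (haC ω)) (le_of_abs_le (haC ω))
        have hb2 : b ω ^ 2 ≤ C ^ 2 := sq_le_sq' (neg_le_of_abs_le (hbC ω)) (le_of_abs_le (hbC ω))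
        calc (a ω * U ω + b ω * (U ω ^ 2 - v)) ^ 2
            ≤ 2 * ((a ω * U ω) ^ 2 + (b ω * (U ω ^ 2 - v)) ^ 2) := add_sq_le
          _ = 2 * (a ω ^ 2 * U ω ^ 2 + b ω ^ 2 * (U ω ^ 2 - v) ^ 2) := by ring
          _ ≤ 2 * (C ^ 2 * U ω ^ 2 + C ^ 2 * (U ω ^ 2 - v) ^ 2) := by gcongr
          _ = 2 * C ^ 2 * (U ω ^ 2 + (U ω ^ 2 - v) ^ 2) := by ring
    _ = _ := by
        rw [integral_const_mul, integral_add hL2.integrable_sq hL2'.integrable_sq,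
          integral_sq_of_hasLaw_gaussianReal_zero hU,
          integral_sq_sub_sq_of_hasLaw_gaussianReal_zero hU]

end LinearQuadratic

lemma integral_mul_eq_zero_of_condExp_eq_zero {m : MeasurableSpace Ω} (hm : m ≤ m0)
    [SigmaFinite (P.trim hm)] {f g : Ω → ℝ} (hf : StronglyMeasurable[m] f)
    (hfg : Integrable (f * g) P) (hg : Integrable g P) (h : P[g | m] =ᵐ[P] 0) :
    ∫ ω, f ω * g ω ∂P = 0 := by
  have hcond : P[f * g | m] =ᵐ[P] 0 := by
    filter_upwards [condExp_mul_of_stronglyMeasurable_left hf hfg hg, h] with ω hω hω0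
    rw [hω, Pi.mul_apply, hω0, Pi.zero_apply, mul_zero]
  calc ∫ ω, f ω * g ω ∂P = ∫ ω, P[f * g | m] ω ∂P := (integral_condExp hm).symm
    _ = 0 := by simp [integral_congr_ae hcond]

variable {𝒢 : Filtration ℕ m0} {D : ℕ → Ω → ℝ} {n : ℕ}

lemma integral_sum_eq_zero_of_condExp_eq_zero [IsFiniteMeasure P]
    (hint : ∀ i < n, Integrable (D i) P) (hcond : ∀ i < n, P[D i | 𝒢 i] =ᵐ[P] 0) :
    ∫ ω, ∑ i ∈ Finset.range n, D i ω ∂P = 0 := by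
  rw [integral_finsetSum _ fun i hi ↦ hint i (Finset.mem_range.1 hi)]
  refine Finset.sum_eq_zero fun i hi ↦ ?_
  rw [← integral_condExp (𝒢.le i), integral_congr_ae (hcond i (Finset.mem_range.1 hi))]
  simp

lemma integral_sq_sum_le_of_condExp_eq_zero [IsFiniteMeasure P] {c : ℝ}
    (hmeas : ∀ i < n, StronglyMeasurable[𝒢 (i + 1)] (D i)) (hL2 : ∀ i < n, MemLp (D i) 2 P)
    (hcond : ∀ i < n, P[D i | 𝒢 i] =ᵐ[P] 0) (hsq : ∀ i < n, ∫ ω, D i ω ^ 2 ∂P ≤ c) :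
    ∫ ω, (∑ i ∈ Finset.range n, D i ω) ^ 2 ∂P ≤ n * c := by
  induction n with
  | zero => simp
  | succ n ih =>
    have hlt {i : ℕ} (hi : i < n) : i < n + 1 := hi.trans n.lt_succ_self
    have hSmeas : StronglyMeasurable[𝒢 n] (fun ω ↦ ∑ i ∈ Finset.range n, D i ω) :=
      Finset.stronglyMeasurable_fun_sum _ fun i hi ↦
        (hmeas i (hlt (Finset.mem_range.1 hi))).mono (𝒢.mono (Finset.mem_range.1 hi))
    have hS : MemLp (fun ω ↦ ∑ i ∈ Finset.range n, D i ω) 2 P :=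
      memLp_finsetSum _ fun i hi ↦ hL2 i (hlt (Finset.mem_range.1 hi))
    have hD := hL2 n n.lt_succ_self
    have hSD : ∫ ω, (∑ i ∈ Finset.range n, D i ω) * D n ω ∂P = 0 :=
      integral_mul_eq_zero_of_condExp_eq_zero (𝒢.le n) hSmeas (hS.integrable_mul hD)
        (hD.integrable one_le_two) (hcond n n.lt_succ_self)
    have hcross : Integrable (fun ω ↦ 2 * ((∑ i ∈ Finset.range n, D i ω) * D n ω)) P :=
      (hS.integrable_mul hD).const_mul 2
    have hsq_cross : Integrable (fun ω ↦ (∑ i ∈ Finset.range n, D i ω) ^ 2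
        + 2 * ((∑ i ∈ Finset.range n, D i ω) * D n ω)) P := hS.integrable_sq.add hcross
    calc ∫ ω, (∑ i ∈ Finset.range (n + 1), D i ω) ^ 2 ∂P
        = ∫ ω, ((∑ i ∈ Finset.range n, D i ω) ^ 2
            + 2 * ((∑ i ∈ Finset.range n, D i ω) * D n ω) + D n ω ^ 2) ∂P := by
          congr with ω; rw [Finset.sum_range_succ]; ring
      _ = (∫ ω, (∑ i ∈ Finset.range n, D i ω) ^ 2 ∂P) + ∫ ω, D n ω ^ 2 ∂P := by
          rw [integral_add hsq_cross hD.integrable_sq, integral_add hS.integrable_sq hcross,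
            integral_const_mul, hSD, mul_zero, add_zero]
      _ ≤ n * c + c := add_le_add
          (ih (fun i hi ↦ hmeas i (hlt hi)) (fun i hi ↦ hL2 i (hlt hi))
            (fun i hi ↦ hcond i (hlt hi)) fun i hi ↦ hsq i (hlt hi)) (hsq n n.lt_succ_self)
      _ = (n + 1 : ℕ) * c := by push_cast; ring

end GaussianIncrements

section AsymptoticSign

variable {Ω : Type*} {m0 : MeasurableSpace Ω} {P : Measure Ω} [IsProbabilityMeasure P]
  {f r : ℕ → Ω → ℝ}

lemma tendsto_integral_min_posPart_of_eventually_nonpos {h : ℕ → Ω → ℝ}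
    (hmeas : ∀ N, AEStronglyMeasurable (h N) P) (hev : ∀ᵐ ω ∂P, ∀ᶠ N in atTop, h N ω ≤ 0) {R : ℝ}
    (hR : 0 ≤ R) : Tendsto (fun N ↦ ∫ ω, min (max (h N ω) 0) R ∂P) atTop (𝓝 0) := by
  have hlim := tendsto_integral_of_dominated_convergence (μ := P)
    (F := fun N ω ↦ min (max (h N ω) 0) R) (f := 0) (fun _ ↦ R)
    (fun N ↦ ((hmeas N).sup aestronglyMeasurable_const).inf aestronglyMeasurable_const)
    (integrable_const R)
    (fun N ↦ ae_of_all _ fun ω ↦ by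
      rw [Real.norm_of_nonneg (le_min (le_max_right _ _) hR)]; exact min_le_right _ _)
    (hev.mono fun ω hω ↦ tendsto_const_nhds.congr' <| hω.mono fun N hN ↦ by
      simp [max_eq_right hN, hR])
  simpa using hlim

lemma le_add_min_posPart_add_sq_div {x y R : ℝ} (hy : 0 ≤ y) (hR : 0 < R) :
    x ≤ y + min (max (x - y) 0) R + x ^ 2 / R := by
  rcases le_total (max (x - y) 0) R with h | h
  · rw [min_eq_left h]
    have : 0 ≤ x ^ 2 / R := by positivity
    linarith [le_max_left (x - y) 0]
  · rw [min_eq_right h]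
    have hx : R ≤ x - y := (le_max_iff.1 h).resolve_right hR.not_ge
    have : x ≤ x ^ 2 / R := by rw [le_div_iff₀ hR]; nlinarith
    linarith

-- The `L²` bound on `f` makes it uniformly integrable, which rules out an escape of mass.
lemma nonpos_of_le_integral_of_eventually_le_mul {c L L' : ℝ} (hf : ∀ N, MemLp (f N) 2 P)
    (hsq : ∀ N, ∫ ω, f N ω ^ 2 ∂P ≤ L) (hc : ∀ N, c ≤ ∫ ω, f N ω ∂P)
    (hr : ∀ N, Integrable (r N) P) (hr0 : ∀ N ω, 0 ≤ r N ω) (hrL : ∀ N, ∫ ω, r N ω ∂P ≤ L')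
    (hev : ∀ᵐ ω ∂P, ∀ η > 0, ∀ᶠ N in atTop, f N ω ≤ η * (1 + r N ω)) : c ≤ 0 := by
  have hbound (R : ℝ) (hR : 0 < R) : c ≤ (1 + L' + L) / R := by
    have hr1 (N : ℕ) : Integrable (fun ω ↦ R⁻¹ * (1 + r N ω)) P :=
      ((integrable_const 1).add (hr N)).const_mul _
    have hfi (N : ℕ) : Integrable (f N) P := (hf N).integrable one_le_two
    have hmeas (N : ℕ) : AEStronglyMeasurable (fun ω ↦ f N ω - R⁻¹ * (1 + r N ω)) P :=
      ((hfi N).sub (hr1 N)).1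
    have htrunc (N : ℕ) :
        Integrable (fun ω ↦ min (max (f N ω - R⁻¹ * (1 + r N ω)) 0) R) P :=
      ((((hfi N).sub (hr1 N)).pos_part).inf (integrable_const R))
    have hlim := (tendsto_integral_min_posPart_of_eventually_nonpos hmeas
      (hev.mono fun ω hω ↦ (hω R⁻¹ (by positivity)).mono fun N hN ↦ sub_nonpos.2 hN)
      hR.le).add_const ((1 + L' + L) / R)
    rw [zero_add] at hlim
    refine ge_of_tendsto' hlim fun N ↦ ?_
    calc c ≤ ∫ ω, f N ω ∂P := hc N
      _ ≤ ∫ ω, (R⁻¹ * (1 + r N ω) + min (max (f N ω - R⁻¹ * (1 + r N ω)) 0) R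
            + f N ω ^ 2 / R) ∂P := by
          refine integral_mono (hfi N) (((hr1 N).add (htrunc N)).add
            ((hf N).integrable_sq.div_const R)) fun ω ↦ ?_
          exact le_add_min_posPart_add_sq_div (by have := hr0 N ω; positivity) hR
      _ = R⁻¹ * (1 + ∫ ω, r N ω ∂P) + (∫ ω, min (max (f N ω - R⁻¹ * (1 + r N ω)) 0) R ∂P)
            + (∫ ω, f N ω ^ 2 ∂P) / R := by
          rw [integral_add (by exact (hr1 N).add (htrunc N)) ((hf N).integrable_sq.div_const R),
            integral_add (hr1 N) (htrunc N), integral_const_mul,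
            integral_add (integrable_const 1) (hr N), integral_div]
          simp
      _ ≤ R⁻¹ * (1 + L') + (∫ ω, min (max (f N ω - R⁻¹ * (1 + r N ω)) 0) R ∂P) + L / R := by
          gcongr
          exacts [hrL N, hsq N]
      _ = (∫ ω, min (max (f N ω - R⁻¹ * (1 + r N ω)) 0) R ∂P) + (1 + L' + L) / R := by
          field_simp; ring
  exact ge_of_tendsto (tendsto_const_nhds.div_atTop tendsto_id)
    ((eventually_gt_atTop 0).mono hbound)

end AsymptoticSign

section ContinuousProcess

variable {Ω : Type*} {m : MeasurableSpace Ω} {Y : ℝ → Ω → ℝ} {a b : ℝ}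

lemma measurable_uncurry_projIcc (hab : a ≤ b) (hcont : ∀ ω, ContinuousOn (fun t ↦ Y t ω) (Icc a b))
    (hmeas : ∀ t ∈ Icc a b, Measurable (Y t)) :
    Measurable fun z : ℝ × Ω ↦ Y (projIcc a b hab z.1) z.2 :=
  measurable_uncurry_of_continuous_of_measurable (u := fun r ω ↦ Y (projIcc a b hab r) ω)
    (fun ω ↦ (hcont ω).comp_continuous (continuous_subtype_val.comp continuous_projIcc)
      fun r ↦ (projIcc a b hab r).2)
    fun r ↦ hmeas _ (projIcc a b hab r).2

lemma measurable_intervalIntegral_comp_of_continuousOn (hab : a ≤ b)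
    (hcont : ∀ ω, ContinuousOn (fun t ↦ Y t ω) (Icc a b))
    (hmeas : ∀ t ∈ Icc a b, Measurable (Y t)) {g : ℝ → ℝ} (hg : Measurable g) :
    Measurable fun ω ↦ ∫ r in a..b, g (Y r ω) := by
  have hproj (ω : Ω) : ∫ r in a..b, g (Y r ω) =
      ∫ r in Ioc a b, g (Y (projIcc a b hab r) ω) := by
    rw [intervalIntegral.integral_of_le hab]
    exact setIntegral_congr_fun measurableSet_Ioc fun r hr ↦ by
      simp only [projIcc_of_mem hab (Ioc_subset_Icc_self hr)]
  simp_rw [hproj]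
  exact (hg.comp (measurable_uncurry_projIcc hab hcont
    hmeas)).stronglyMeasurable.integral_prod_left'.measurable

lemma aemeasurable_uncurry_of_continuousOn {P : Measure Ω} [SFinite P] (hab : a ≤ b)
    (hcont : ∀ ω, ContinuousOn (fun t ↦ Y t ω) (Icc a b))
    (hmeas : ∀ t ∈ Icc a b, Measurable (Y t)) :
    AEMeasurable (fun z : ℝ × Ω ↦ Y z.1 z.2) ((volume.restrict (Ioc a b)).prod P) := by
  refine ⟨_, measurable_uncurry_projIcc hab hcont hmeas, ?_⟩
  have hmem : ∀ᵐ z ∂(volume.restrict (Ioc a b)).prod P, z.1 ∈ Ioc a b :=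
    Measure.quasiMeasurePreserving_fst.ae (ae_restrict_mem measurableSet_Ioc)
  filter_upwards [hmem] with z hz
  rw [projIcc_of_mem hab (Ioc_subset_Icc_self hz)]

end ContinuousProcess

section Solution

variable {Ω : Type*} {m0 : MeasurableSpace Ω}

/-- `X` is a nonnegative continuous adapted solution of `dX = μ(X) dt + dW` on `[0, T]`, where `W`
is a Brownian motion relative to the filtration `F`. The condition `W 0 = 0` is not a field: up to a
null set it follows from the equation at time `0`. -/
structure IsNonnegSolution (P : Measure Ω) (T : ℝ) (F : Filtration ℝ m0) (μ : ℝ → ℝ)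
    (W X : ℝ → Ω → ℝ) : Prop where
  measurable_drift : Measurable μ
  measurable_noise : ∀ t ∈ Icc 0 T, Measurable[F t] (W t)
  continuousOn_noise : ∀ ω, ContinuousOn (fun t ↦ W t ω) (Icc 0 T)
  hasLaw_noise_sub : ∀ s t, 0 ≤ s → s ≤ t → t ≤ T →
    HasLaw (fun ω ↦ W t ω - W s ω) (gaussianReal 0 (t - s).toNNReal) P
  indep_noise_sub : ∀ s t, 0 ≤ s → s ≤ t → t ≤ T →
    Indep (MeasurableSpace.comap (fun ω ↦ W t ω - W s ω) inferInstance) (F s) P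
  nonneg : ∀ t ∈ Icc 0 T, ∀ ω, 0 ≤ X t ω
  measurable : ∀ t ∈ Icc 0 T, Measurable[F t] (X t)
  continuousOn : ∀ ω, ContinuousOn (fun t ↦ X t ω) (Icc 0 T)
  intervalIntegrable : ∀ᵐ ω ∂P, IntervalIntegrable (fun s ↦ |μ (X s ω)|) volume 0 T
  eq : ∀ t ∈ Icc 0 T, ∀ᵐ ω ∂P, X t ω = X 0 ω + (∫ s in (0 : ℝ)..t, μ (X s ω)) + W t ω

/-- The filtration `F` sampled along the uniform grid on `[0, T]` with `N` cells. -/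
def gridFiltration (F : Filtration ℝ m0) {T : ℝ} (hT : 0 ≤ T) (N : ℕ) : Filtration ℕ m0 where
  seq i := F (gridPoint T N i)
  mono' _ _ hij := F.mono (gridPoint_mono hT N hij)
  le' _ := F.le _

namespace IsNonnegSolution

variable {P : Measure Ω} {T : ℝ} {F : Filtration ℝ m0} {μ : ℝ → ℝ} {W X : ℝ → Ω → ℝ}

lemma restrict (h : IsNonnegSolution P T F μ W X) {t : ℝ} (ht : t ∈ Icc 0 T) :
    IsNonnegSolution P t F μ W X := by
  have hsub : Icc 0 t ⊆ Icc 0 T := Icc_subset_Icc_right ht.2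
  exact
    { measurable_drift := h.measurable_drift
      measurable_noise := fun s hs ↦ h.measurable_noise s (hsub hs)
      continuousOn_noise := fun ω ↦ (h.continuousOn_noise ω).mono hsub
      hasLaw_noise_sub := fun r s hr hrs hs ↦ h.hasLaw_noise_sub r s hr hrs (hs.trans ht.2)
      indep_noise_sub := fun r s hr hrs hs ↦ h.indep_noise_sub r s hr hrs (hs.trans ht.2)
      nonneg := fun s hs ↦ h.nonneg s (hsub hs)
      measurable := fun s hs ↦ h.measurable s (hsub hs)
      continuousOn := fun ω ↦ (h.continuousOn ω).mono hsub
      intervalIntegrable := h.intervalIntegrable.mono fun ω hω ↦ hω.mono_set <| by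
        rwa [uIcc_of_le ht.1, uIcc_of_le (ht.1.trans ht.2)]
      eq := fun s hs ↦ h.eq s (hsub hs) }

lemma aemeasurable_path (h : IsNonnegSolution P T F μ W X) (ω : Ω) :
    AEMeasurable (fun t ↦ X t ω) (volume.restrict (Ioc 0 T)) :=
  ((h.continuousOn ω).aemeasurable measurableSet_Icc).mono_set Ioc_subset_Icc_self

lemma ae_isSolutionPath (h : IsNonnegSolution P T F μ W X) (hT : 0 ≤ T) :
    ∀ᵐ ω ∂P, IsSolutionPath T μ (fun t ↦ X t ω) (fun t ↦ W t ω) := by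
  obtain ⟨D, hDc, hD⟩ := TopologicalSpace.exists_countable_dense (Icc 0 T)
  have heq : ∀ᵐ ω ∂P, ∀ t ∈ D, X t ω = X 0 ω + (∫ s in (0 : ℝ)..t, μ (X s ω)) + W t ω :=
    (ae_ball_iff hDc).2 fun t _ ↦ h.eq t t.2
  filter_upwards [heq, h.intervalIntegrable] with ω hω hint
  have hint' : IntervalIntegrable (fun s ↦ μ (X s ω)) volume 0 T := by
    have hmeas : AEStronglyMeasurable (fun s ↦ μ (X s ω)) (volume.restrict (Ioc 0 T)) :=
      (h.measurable_drift.comp_aemeasurable (h.aemeasurable_path ω)).aestronglyMeasurable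
    rw [intervalIntegrable_iff_integrableOn_Ioc_of_le hT] at hint ⊢
    exact (integrable_norm_iff hmeas).1 hint
  have hprim : ContinuousOn (fun t ↦ ∫ s in (0 : ℝ)..t, μ (X s ω)) (Icc 0 T) := by
    have := intervalIntegral.continuousOn_primitive_interval' hint' left_mem_uIcc
    rwa [uIcc_of_le hT] at this
  have hext := Continuous.ext_on hD (h.continuousOn ω).domRestrict
    ((continuousOn_const.add hprim).add (h.continuousOn_noise ω)).domRestrict hω
  exact ⟨h.continuousOn ω, h.continuousOn_noise ω, fun t ht ↦ h.nonneg t ht ω, hint',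
    fun t ht ↦ congrFun hext ⟨t, ht⟩⟩

lemma measurable_integral_comp (h : IsNonnegSolution P T F μ W X) {t : ℝ} (ht : t ∈ Icc 0 T)
    {g : ℝ → ℝ} (hg : Measurable g) : Measurable[F t] fun ω ↦ ∫ r in (0 : ℝ)..t, g (X r ω) :=
  measurable_intervalIntegral_comp_of_continuousOn ht.1
    (fun ω ↦ (h.continuousOn ω).mono (Icc_subset_Icc_right ht.2))
    (fun r hr ↦ (h.measurable r ⟨hr.1, hr.2.trans ht.2⟩).mono (F.mono hr.2) le_rfl) hg

lemma aemeasurable_uncurry [SFinite P] (h : IsNonnegSolution P T F μ W X) (hT : 0 ≤ T) :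
    AEMeasurable (fun z : ℝ × Ω ↦ X z.1 z.2) ((volume.restrict (Ioc 0 T)).prod P) :=
  aemeasurable_uncurry_of_continuousOn hT h.continuousOn
    fun r hr ↦ (h.measurable r hr).mono (F.le r) le_rfl

lemma aemeasurable_lintegral_comp [SFinite P] (h : IsNonnegSolution P T F μ W X) (hT : 0 ≤ T)
    {g : ℝ → ℝ≥0∞} (hg : Measurable g) :
    AEMeasurable (fun ω ↦ ∫⁻ r in Ioc 0 T, g (X r ω)) P :=
  (hg.comp_aemeasurable (h.aemeasurable_uncurry hT)).lintegral_prod_left'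

section Martingale

variable {φ φ₁ φ₂ φ₃ g : ℝ → ℝ} {K : ℝ}

lemma measurable_gridIncrement (h : IsNonnegSolution P T F μ W X) (hT : 0 ≤ T) {N i : ℕ}
    (hi : i < N) : Measurable[F (gridPoint T N (i + 1))] fun ω ↦ gridIncrement (W · ω) T N i :=
  (h.measurable_noise _ (gridPoint_mem_Icc hT hi)).sub
    ((h.measurable_noise _ (gridPoint_mem_Icc hT hi.le)).mono
      (F.mono (gridPoint_mono hT N i.le_succ)) le_rfl)

lemma hasLaw_gridIncrement (h : IsNonnegSolution P T F μ W X) (hT : 0 ≤ T) {N i : ℕ} (hi : i < N) :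
    HasLaw (fun ω ↦ gridIncrement (W · ω) T N i) (gaussianReal 0 (T / N).toNNReal) P := by
  rw [← gridPoint_succ_sub T N i]
  exact h.hasLaw_noise_sub _ _ (gridPoint_mem_Icc hT hi.le).1 (gridPoint_mono hT N i.le_succ)
    (gridPoint_mem_Icc hT hi).2

lemma indep_gridIncrement (h : IsNonnegSolution P T F μ W X) (hT : 0 ≤ T) {N i : ℕ} (hi : i < N) :
    Indep (MeasurableSpace.comap (fun ω ↦ gridIncrement (W · ω) T N i) inferInstance)
      (F (gridPoint T N i)) P :=
  h.indep_noise_sub _ _ (gridPoint_mem_Icc hT hi.le).1 (gridPoint_mono hT N i.le_succ)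
    (gridPoint_mem_Icc hT hi).2

lemma integrable_gridQuadVar (h : IsNonnegSolution P T F μ W X) (hT : 0 ≤ T) (N : ℕ) :
    Integrable (fun ω ↦ gridQuadVar (W · ω) T N) P :=
  integrable_finsetSum _ fun _ hi ↦ (memLp_of_hasLaw_gaussianReal
    (h.hasLaw_gridIncrement hT (Finset.mem_range.1 hi)) 2).integrable_sq

lemma integral_gridQuadVar_le (h : IsNonnegSolution P T F μ W X) (hT : 0 ≤ T) (N : ℕ) :
    ∫ ω, gridQuadVar (W · ω) T N ∂P ≤ T := by
  have hlaw {i : ℕ} (hi : i ∈ Finset.range N) :=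
    h.hasLaw_gridIncrement hT (Finset.mem_range.1 hi)
  calc ∫ ω, gridQuadVar (W · ω) T N ∂P
      = ∑ i ∈ Finset.range N, ∫ ω, gridIncrement (W · ω) T N i ^ 2 ∂P :=
        integral_finsetSum _ fun i hi ↦ (memLp_of_hasLaw_gaussianReal (hlaw hi) 2).integrable_sq
    _ = ∑ _ ∈ Finset.range N, T / N := Finset.sum_congr rfl fun _ hi ↦ by
        rw [integral_sq_of_hasLaw_gaussianReal_zero (hlaw hi), Real.coe_toNNReal _ (by positivity)]
    _ = N * (T / N) := by simp
    _ ≤ T := natCast_mul_div_natCast_le hT N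

lemma exists_itoIncrement_eq (h : IsNonnegSolution P T F μ W X) (hT : 0 ≤ T)
    (hφ : IsSupersolution μ φ φ₁ φ₂ φ₃ g K) {N i : ℕ} (hi : i < N) :
    ∃ a b : Ω → ℝ, StronglyMeasurable[F (gridPoint T N i)] a ∧
      (∀ ω, |a ω| ≤ Real.exp (K * T) * K) ∧ StronglyMeasurable[F (gridPoint T N i)] b ∧
      (∀ ω, |b ω| ≤ Real.exp (K * T) * K) ∧
      ∀ ω, itoIncrement φ₁ φ₂ g (X · ω) (W · ω) T N i = a ω * gridIncrement (W · ω) T N i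
        + b ω * (gridIncrement (W · ω) T N i ^ 2 - (T / N).toNNReal) := by
  set τ := gridPoint T N i with hτ
  have hτT : τ ∈ Icc 0 T := gridPoint_mem_Icc hT hi.le
  have hE : Measurable[F τ] fun ω ↦ expWeight g (X · ω) τ :=
    Real.measurable_exp.comp (h.measurable_integral_comp hτT hφ.continuous_potential.measurable)
  have hbound {y : ℝ} (hy : |y| ≤ K) (ω : Ω) :
      |expWeight g (X · ω) τ * y| ≤ Real.exp (K * T) * K := by
    rw [abs_mul, expWeight, abs_of_pos (Real.exp_pos _), ← expWeight]
    gcongr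
    exact expWeight_le hφ.toHasBoundedDerivs.nonneg hφ.potential_le hτT
  refine ⟨fun ω ↦ expWeight g (X · ω) τ * φ₁ (X τ ω),
    fun ω ↦ expWeight g (X · ω) τ * (1 / 2 * φ₂ (X τ ω)),
    (hE.mul (hφ.continuous₁.measurable.comp (h.measurable τ hτT))).stronglyMeasurable,
    fun ω ↦ hbound (hφ.abs_le₁ _) ω,
    (hE.mul ((hφ.continuous₂.measurable.comp (h.measurable τ hτT)).const_mul _)).stronglyMeasurable,
    fun ω ↦ hbound ?_ ω, fun ω ↦ ?_⟩
  · rw [abs_mul, abs_of_pos one_half_pos]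
    linarith [hφ.abs_le₂ (X τ ω), hφ.toHasBoundedDerivs.nonneg]
  · rw [itoIncrement, Real.coe_toNNReal _ (by positivity), ← hτ]
    ring

lemma stronglyMeasurable_itoIncrement (h : IsNonnegSolution P T F μ W X) (hT : 0 ≤ T)
    (hφ : IsSupersolution μ φ φ₁ φ₂ φ₃ g K) {N i : ℕ} (hi : i < N) :
    StronglyMeasurable[F (gridPoint T N (i + 1))]
      fun ω ↦ itoIncrement φ₁ φ₂ g (X · ω) (W · ω) T N i := by
  obtain ⟨a, b, ha, -, hb, -, hab⟩ := h.exists_itoIncrement_eq hT hφ hi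
  have hmono := F.mono (gridPoint_mono hT N i.le_succ)
  have hU := h.measurable_gridIncrement hT hi
  simp_rw [hab]
  exact ((ha.mono hmono).mul hU.stronglyMeasurable).add
    ((hb.mono hmono).mul ((hU.pow_const 2).sub_const _).stronglyMeasurable)

lemma memLp_itoIncrement (h : IsNonnegSolution P T F μ W X) (hT : 0 ≤ T)
    (hφ : IsSupersolution μ φ φ₁ φ₂ φ₃ g K) {N i : ℕ} (hi : i < N) :
    MemLp (fun ω ↦ itoIncrement φ₁ φ₂ g (X · ω) (W · ω) T N i) 2 P := by
  obtain ⟨a, b, ha, haC, hb, hbC, hab⟩ := h.exists_itoIncrement_eq hT hφ hi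
  simp_rw [hab]
  exact memLp_two_linear_add_quadratic (h.hasLaw_gridIncrement hT hi)
    (ha.mono (F.le _)).aestronglyMeasurable haC (hb.mono (F.le _)).aestronglyMeasurable hbC

lemma condExp_itoIncrement_eq_zero [IsFiniteMeasure P] (h : IsNonnegSolution P T F μ W X)
    (hT : 0 ≤ T) (hφ : IsSupersolution μ φ φ₁ φ₂ φ₃ g K) {N i : ℕ} (hi : i < N) :
    P[fun ω ↦ itoIncrement φ₁ φ₂ g (X · ω) (W · ω) T N i | F (gridPoint T N i)] =ᵐ[P] 0 := by
  obtain ⟨a, b, ha, haC, hb, hbC, hab⟩ := h.exists_itoIncrement_eq hT hφ hi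
  simp_rw [hab]
  exact condExp_linear_add_quadratic_eq_zero (F.le _) (h.hasLaw_gridIncrement hT hi)
    ((h.measurable_gridIncrement hT hi).mono (F.le _) le_rfl) (h.indep_gridIncrement hT hi)
    ha haC hb hbC

lemma integral_sq_itoIncrement_le (h : IsNonnegSolution P T F μ W X) (hT : 0 ≤ T)
    (hφ : IsSupersolution μ φ φ₁ φ₂ φ₃ g K) {N i : ℕ} (hi : i < N) :
    ∫ ω, itoIncrement φ₁ φ₂ g (X · ω) (W · ω) T N i ^ 2 ∂P ≤
      2 * (Real.exp (K * T) * K) ^ 2 *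
        (T / N + (T / N) ^ 2 * ∫ x, (x ^ 2 - 1) ^ 2 ∂gaussianReal 0 1) := by
  obtain ⟨a, b, ha, haC, hb, hbC, hab⟩ := h.exists_itoIncrement_eq hT hφ hi
  simp_rw [hab]
  refine (integral_sq_linear_add_quadratic_le (h.hasLaw_gridIncrement hT hi)
    (ha.mono (F.le _)).aestronglyMeasurable haC (hb.mono (F.le _)).aestronglyMeasurable
    hbC).trans_eq ?_
  rw [Real.coe_toNNReal _ (by positivity)]

lemma memLp_itoSum (h : IsNonnegSolution P T F μ W X) (hT : 0 ≤ T)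
    (hφ : IsSupersolution μ φ φ₁ φ₂ φ₃ g K) (N : ℕ) :
    MemLp (fun ω ↦ ∑ i ∈ Finset.range N, itoIncrement φ₁ φ₂ g (X · ω) (W · ω) T N i) 2 P :=
  memLp_finsetSum _ fun _ hi ↦ h.memLp_itoIncrement hT hφ (Finset.mem_range.1 hi)

lemma integral_itoSum_eq_zero [IsFiniteMeasure P] (h : IsNonnegSolution P T F μ W X) (hT : 0 ≤ T)
    (hφ : IsSupersolution μ φ φ₁ φ₂ φ₃ g K) (N : ℕ) :
    ∫ ω, ∑ i ∈ Finset.range N, itoIncrement φ₁ φ₂ g (X · ω) (W · ω) T N i ∂P = 0 :=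
  integral_sum_eq_zero_of_condExp_eq_zero (𝒢 := gridFiltration F hT N)
    (fun _ hi ↦ (h.memLp_itoIncrement hT hφ hi).integrable one_le_two)
    fun _ hi ↦ h.condExp_itoIncrement_eq_zero hT hφ hi

lemma integral_sq_itoSum_le [IsFiniteMeasure P] (h : IsNonnegSolution P T F μ W X) (hT : 0 ≤ T)
    (hφ : IsSupersolution μ φ φ₁ φ₂ φ₃ g K) (N : ℕ) :
    ∫ ω, (∑ i ∈ Finset.range N, itoIncrement φ₁ φ₂ g (X · ω) (W · ω) T N i) ^ 2 ∂P ≤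
      2 * (Real.exp (K * T) * K) ^ 2 * (T + T ^ 2 * ∫ x, (x ^ 2 - 1) ^ 2 ∂gaussianReal 0 1) := by
  have hκ : 0 ≤ ∫ x, (x ^ 2 - 1) ^ 2 ∂gaussianReal 0 1 := integral_nonneg fun x ↦ sq_nonneg _
  have hcell := integral_sq_sum_le_of_condExp_eq_zero (𝒢 := gridFiltration F hT N)
    (fun _ hi ↦ h.stronglyMeasurable_itoIncrement hT hφ hi)
    (fun _ hi ↦ h.memLp_itoIncrement hT hφ hi)
    (fun _ hi ↦ h.condExp_itoIncrement_eq_zero hT hφ hi)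
    fun _ hi ↦ h.integral_sq_itoIncrement_le hT hφ hi
  set κ := ∫ x, (x ^ 2 - 1) ^ 2 ∂gaussianReal 0 1
  have hNT := natCast_mul_div_natCast_le hT N
  calc _ ≤ N * (2 * (Real.exp (K * T) * K) ^ 2 * (T / N + (T / N) ^ 2 * κ)) := hcell
    _ = 2 * (Real.exp (K * T) * K) ^ 2 * (N * (T / N) + N * (T / N) * (T / N) * κ) := by ring
    _ ≤ 2 * (Real.exp (K * T) * K) ^ 2 * (T + T * T * κ) := by
        gcongr
        exact div_natCast_le hT N
    _ = _ := by ring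

lemma memLp_top_comp_mul_expWeight [IsFiniteMeasure P] (h : IsNonnegSolution P T F μ W X)
    (hφ : IsSupersolution μ φ φ₁ φ₂ φ₃ g K) {t : ℝ} (ht : t ∈ Icc 0 T) :
    MemLp (fun ω ↦ φ (X t ω) * expWeight g (X · ω) t) ∞ P := by
  have hφX : Measurable[m0] fun ω ↦ φ (X t ω) :=
    hφ.continuous.measurable.comp ((h.measurable t ht).mono (F.le t) le_rfl)
  have hE : Measurable[m0] fun ω ↦ expWeight g (X · ω) t :=
    (Real.measurable_exp.comp
      (h.measurable_integral_comp ht hφ.continuous_potential.measurable)).mono (F.le t) le_rfl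
  have hK := hφ.toHasBoundedDerivs.nonneg
  refine MemLp.of_bound (hφX.mul hE).aestronglyMeasurable (K * Real.exp (K * T))
    (ae_of_all _ fun ω ↦ ?_)
  have hE0 : 0 ≤ expWeight g (X · ω) t := (Real.exp_pos _).le
  rw [Real.norm_of_nonneg (mul_nonneg (hφ.nonneg_fun _) hE0)]
  exact mul_le_mul (hφ.fun_le _) (expWeight_le hK hφ.potential_le ht) hE0 hK

end Martingale

theorem integral_mul_expWeight_le [IsProbabilityMeasure P] (h : IsNonnegSolution P T F μ W X)
    (hT : 0 ≤ T) {φ φ₁ φ₂ φ₃ g : ℝ → ℝ} {K : ℝ} (hφ : IsSupersolution μ φ φ₁ φ₂ φ₃ g K) :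
    ∫ ω, φ (X T ω) * expWeight g (X · ω) T ∂P ≤ ∫ ω, φ (X 0 ω) ∂P := by
  set A : Ω → ℝ := fun ω ↦ φ (X T ω) * expWeight g (X · ω) T - φ (X 0 ω) with hA
  set S : ℕ → Ω → ℝ :=
    fun N ω ↦ ∑ i ∈ Finset.range N, itoIncrement φ₁ φ₂ g (X · ω) (W · ω) T N i
  have hend := h.memLp_top_comp_mul_expWeight hφ ⟨hT, le_rfl⟩
  have hstart : MemLp (fun ω ↦ φ (X 0 ω)) ∞ P := by
    simpa [expWeight] using h.memLp_top_comp_mul_expWeight hφ ⟨le_rfl, hT⟩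
  have hA2 : MemLp A 2 P := (hend.sub hstart).mono_exponent le_top
  have hS2 (N : ℕ) : MemLp (S N) 2 P := h.memLp_itoSum hT hφ N
  have hAS (N : ℕ) : ∫ ω, (A ω - S N ω) ∂P = ∫ ω, A ω ∂P := by
    rw [integral_sub (hA2.integrable one_le_two) ((hS2 N).integrable one_le_two),
      h.integral_itoSum_eq_zero hT hφ N, sub_zero]
  have hsq (N : ℕ) : ∫ ω, (A ω - S N ω) ^ 2 ∂P ≤ 2 * ((∫ ω, A ω ^ 2 ∂P)
      + 2 * (Real.exp (K * T) * K) ^ 2 *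
        (T + T ^ 2 * ∫ x, (x ^ 2 - 1) ^ 2 ∂gaussianReal 0 1)) := by
    calc ∫ ω, (A ω - S N ω) ^ 2 ∂P ≤ ∫ ω, 2 * (A ω ^ 2 + S N ω ^ 2) ∂P :=
          integral_mono (hA2.sub (hS2 N)).integrable_sq
            ((hA2.integrable_sq.add (hS2 N).integrable_sq).const_mul 2)
            fun ω ↦ by nlinarith [sq_nonneg (A ω + S N ω)]
      _ = 2 * ((∫ ω, A ω ^ 2 ∂P) + ∫ ω, S N ω ^ 2 ∂P) := by
          rw [integral_const_mul, integral_add hA2.integrable_sq (hS2 N).integrable_sq]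
      _ ≤ _ := by gcongr; exact h.integral_sq_itoSum_le hT hφ N
  have hnonpos : ∫ ω, A ω ∂P ≤ 0 :=
    nonpos_of_le_integral_of_eventually_le_mul (fun N ↦ hA2.sub (hS2 N)) hsq
      (fun N ↦ (hAS N).ge) (h.integrable_gridQuadVar hT)
      (fun N ω ↦ Finset.sum_nonneg fun i _ ↦ sq_nonneg _) (h.integral_gridQuadVar_le hT)
      ((h.ae_isSolutionPath hT).mono fun ω hω η hη ↦
        hω.eventually_discounted_sub_itoSum_le hT hφ hη)
  rwa [hA, integral_sub (hend.integrable le_top) (hstart.integrable le_top), sub_nonpos]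
    at hnonpos

end IsNonnegSolution

end Solution

section TestFunctions

lemma abs_pow_mul_sq_add_rpow_le {δ e : ℝ} (hδ : 0 < δ) (k : ℕ) (he : k / 2 + e ≤ 0) (x : ℝ) :
    |x ^ k * (x ^ 2 + δ) ^ e| ≤ δ ^ (k / 2 + e) := by
  have hu : 0 < x ^ 2 + δ := by positivity
  calc |x ^ k * (x ^ 2 + δ) ^ e| = |x| ^ k * (x ^ 2 + δ) ^ e := by
        rw [abs_mul, abs_pow, abs_of_pos (Real.rpow_pos_of_pos hu e)]
    _ ≤ ((x ^ 2 + δ) ^ (1 / 2 : ℝ)) ^ k * (x ^ 2 + δ) ^ e := by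
        gcongr
        rw [← Real.sqrt_eq_rpow]
        exact Real.abs_le_sqrt (by linarith)
    _ = (x ^ 2 + δ) ^ (k / 2 + e) := by
        rw [← Real.rpow_natCast, ← Real.rpow_mul hu.le, ← Real.rpow_add hu, one_div_mul_eq_div]
    _ ≤ δ ^ (k / 2 + e) := Real.rpow_le_rpow_of_nonpos hδ (by nlinarith [sq_nonneg x]) he

lemma hasDerivAt_sq_add_rpow {δ : ℝ} (hδ : 0 < δ) (e x : ℝ) :
    HasDerivAt (fun x : ℝ ↦ (x ^ 2 + δ) ^ e) (2 * e * (x * (x ^ 2 + δ) ^ (e - 1))) x := by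
  have hsq : HasDerivAt (fun x : ℝ ↦ x ^ 2 + δ) (2 * x) x := by
    simpa using (hasDerivAt_pow 2 x).add_const δ
  exact (hsq.rpow_const (Or.inl (by positivity))).congr_deriv (by ring)

lemma exists_hasBoundedDerivs_of_hasDerivAt {f : ℝ → ℝ} {δ θ : ℝ} (hδ : 0 < δ) (hθ : 1 / 2 ≤ θ)
    (hf : ∀ x, HasDerivAt f (x * (x ^ 2 + δ) ^ (-θ)) x) :
    ∃ f₃ K, HasBoundedDerivs f (fun x ↦ x * (x ^ 2 + δ) ^ (-θ))
      (fun x ↦ (x ^ 2 + δ) ^ (-θ) - 2 * θ * (x ^ 2 * (x ^ 2 + δ) ^ (-θ - 1))) f₃ K := by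
  have hmul {c y B : ℝ} (hc : 0 ≤ c) (hy : |y| ≤ B) : |c * y| ≤ c * B := by
    rw [abs_mul, abs_of_nonneg hc]; gcongr
  have hbound (k : ℕ) (e : ℝ) (he : k / 2 + e ≤ 0) : ∃ K ≥ 0, ∀ x : ℝ,
      |x ^ k * (x ^ 2 + δ) ^ e| ≤ K :=
    ⟨_, by positivity, abs_pow_mul_sq_add_rpow_le hδ k he⟩
  obtain ⟨B₁, hB₁, h₁⟩ := hbound 1 (-θ) (by norm_num; linarith)
  obtain ⟨B₀, hB₀, h₀⟩ := hbound 0 (-θ) (by norm_num; linarith)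
  obtain ⟨B₂, hB₂, h₂⟩ := hbound 2 (-θ - 1) (by norm_num; linarith)
  obtain ⟨C₁, hC₁, h₁'⟩ := hbound 1 (-θ - 1) (by norm_num; linarith)
  obtain ⟨C₃, hC₃, h₃⟩ := hbound 3 (-θ - 1 - 1) (by norm_num; linarith)
  simp only [pow_one, pow_zero, one_mul] at h₁ h₀ h₁'
  refine ⟨fun x ↦ 4 * θ * (θ + 1) * (x ^ 3 * (x ^ 2 + δ) ^ (-θ - 1 - 1))
      - 6 * θ * (x * (x ^ 2 + δ) ^ (-θ - 1)),
    B₁ + (B₀ + 2 * θ * B₂) + (4 * θ * (θ + 1) * C₃ + 6 * θ * C₁), hf, fun x ↦ ?_, fun x ↦ ?_,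
    fun x ↦ (h₁ x).trans ?_, fun x ↦ (abs_sub _ _).trans ?_, fun x ↦ (abs_sub _ _).trans ?_⟩
  · exact ((hasDerivAt_id x).mul (hasDerivAt_sq_add_rpow hδ (-θ) x)).congr_deriv
      (by simp only [id]; ring)
  · exact ((hasDerivAt_sq_add_rpow hδ (-θ) x).sub (((hasDerivAt_pow 2 x).mul
      (hasDerivAt_sq_add_rpow hδ (-θ - 1) x)).const_mul (2 * θ))).congr_deriv
      (by push_cast; ring)
  · linarith [show 0 ≤ B₀ + 2 * θ * B₂ + (4 * θ * (θ + 1) * C₃ + 6 * θ * C₁) by positivity]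
  · linarith [hmul (by positivity : 0 ≤ 2 * θ) (h₂ x), h₀ x,
      show 0 ≤ 4 * θ * (θ + 1) * C₃ + 6 * θ * C₁ by positivity]
  · linarith [hmul (by positivity : 0 ≤ 4 * θ * (θ + 1)) (h₃ x),
      hmul (by positivity : 0 ≤ 6 * θ) (h₁' x), show 0 ≤ B₀ + 2 * θ * B₂ by positivity]

lemma exists_hasBoundedDerivs_log {δ : ℝ} (hδ : 0 < δ) :
    ∃ f₃ K, HasBoundedDerivs (fun x ↦ Real.log (x ^ 2 + δ) / 2) (fun x ↦ x * (x ^ 2 + δ)⁻¹)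
      (fun x ↦ (x ^ 2 + δ)⁻¹ - 2 * (x * (x ^ 2 + δ)⁻¹) ^ 2) f₃ K := by
  have hu (x : ℝ) : 0 < x ^ 2 + δ := by positivity
  have hsq (x : ℝ) : (x ^ 2 + δ) ^ (-1 - 1 : ℝ) = (x ^ 2 + δ)⁻¹ ^ 2 := by
    rw [Real.rpow_sub_one (hu x).ne', Real.rpow_neg_one, div_eq_mul_inv, ← sq]
  have hlog (x : ℝ) :
      HasDerivAt (fun x ↦ Real.log (x ^ 2 + δ) / 2) (x * (x ^ 2 + δ) ^ (-1 : ℝ)) x := by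
    refine ((((hasDerivAt_pow 2 x).add_const δ).log (hu x).ne').div_const 2).congr_deriv ?_
    rw [Real.rpow_neg_one]
    push_cast
    ring
  simpa only [Real.rpow_neg_one, hsq, mul_one, ← mul_pow] using
    exists_hasBoundedDerivs_of_hasDerivAt hδ (by norm_num) hlog

lemma exists_hasBoundedDerivs_rpow {δ p : ℝ} (hδ : 0 < δ) (hp : 1 ≤ p) (hp2 : p ≠ 2) :
    ∃ f₃ K, HasBoundedDerivs (fun x ↦ (x ^ 2 + δ) ^ ((2 - p) / 2) / (2 - p))
      (fun x ↦ x * (x ^ 2 + δ) ^ (-(p / 2)))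
      (fun x ↦ (x ^ 2 + δ) ^ (-(p / 2)) - p * (x ^ 2 * (x ^ 2 + δ) ^ (-(p / 2) - 1))) f₃ K := by
  have hp2' : 2 - p ≠ 0 := sub_ne_zero.2 hp2.symm
  have hderiv (x : ℝ) : HasDerivAt (fun x : ℝ ↦ (x ^ 2 + δ) ^ ((2 - p) / 2) / (2 - p))
      (x * (x ^ 2 + δ) ^ (-(p / 2))) x := by
    refine ((hasDerivAt_sq_add_rpow hδ ((2 - p) / 2) x).div_const (2 - p)).congr_deriv ?_
    rw [show (2 - p) / 2 - 1 = -(p / 2) by ring]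
    field_simp
  simpa only [mul_div_cancel₀ p two_ne_zero] using
    exists_hasBoundedDerivs_of_hasDerivAt hδ (by linarith) hderiv

lemma HasBoundedDerivs.exists_isSupersolution_exp_neg {μ f f₁ f₂ f₃ g : ℝ → ℝ} {K L : ℝ}
    (hf : HasBoundedDerivs f f₁ f₂ f₃ K) (hf0 : ∀ x, 0 ≤ f x) (hg : Continuous g)
    (hgL : ∀ x, g x ≤ L)
    (hgen : ∀ x, 0 ≤ x → -(f₁ x * μ x) + 1 / 2 * (f₁ x ^ 2 - f₂ x) + g x ≤ 0) :
    ∃ φ₁ φ₂ φ₃ M, IsSupersolution μ (fun x ↦ Real.exp (-f x)) φ₁ φ₂ φ₃ g M := by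
  refine ⟨_, _, _, max 1 L + _, ⟨(hf.exp_neg hf0).mono (le_add_of_nonneg_left
    (zero_le_one.trans (le_max_left 1 L))), fun x ↦ (Real.exp_pos _).le, fun x ↦ ?_, hg,
    fun x ↦ ?_, fun x hx ↦ ?_⟩⟩
  · exact (Real.exp_le_one_iff.2 (neg_nonpos.2 (hf0 x))).trans
      ((le_max_left 1 L).trans (le_add_of_nonneg_right (hf.exp_neg hf0).nonneg))
  · exact (hgL x).trans ((le_max_right 1 L).trans
      (le_add_of_nonneg_right (hf.exp_neg hf0).nonneg))
  · calc _ = Real.exp (-f x) * (-(f₁ x * μ x) + 1 / 2 * (f₁ x ^ 2 - f₂ x) + g x) := by ring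
      _ ≤ 0 := mul_nonpos_of_nonneg_of_nonpos (Real.exp_pos _).le (hgen x hx)

lemma generator_log_le {μ : ℝ → ℝ} {a b κ : ℝ} (ha : 0 ≤ a) (hb : 1 ≤ b) (hκ : 0 ≤ κ)
    (hdrift : ∀ x, 0 < x → x * μ x ≤ κ * (1 + x ^ 2)) {x u v : ℝ} (hx : 0 ≤ x)
    (hu : u = (x ^ 2 + 1)⁻¹) (hv : v = (x ^ 2 + b)⁻¹) :
    -(2 * a * (x * v - x * u) * μ x) + 1 / 2 * ((2 * a * (x * v - x * u)) ^ 2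
      - 2 * a * ((v - 2 * (x * v) ^ 2) - (u - 2 * (x * u) ^ 2))) + -(2 * a * κ + 2 * a ^ 2 + 3 * a)
      ≤ 0 := by
  have hv0 : 0 ≤ v := by rw [hv]; positivity
  have hvu : v ≤ u := by rw [hu, hv]; gcongr
  have hu1 : u * (1 + x ^ 2) = 1 := by rw [hu, add_comm]; exact inv_mul_cancel₀ (by positivity)
  have hμ : (u - v) * (x * μ x) ≤ κ := by
    rcases hx.eq_or_lt with rfl | hx
    · simpa using hκ
    · calc (u - v) * (x * μ x) ≤ (u - v) * (κ * (1 + x ^ 2)) :=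
            mul_le_mul_of_nonneg_left (hdrift x hx) (sub_nonneg.2 hvu)
        _ ≤ u * (κ * (1 + x ^ 2)) := by gcongr; linarith
        _ = κ := by linear_combination κ * hu1
  have hxu : x * u ≤ 1 := by nlinarith [sq_nonneg (x - 1)]
  have hxv0 : 0 ≤ x * v := mul_nonneg hx hv0
  have hxvu : x * v ≤ x * u := by gcongr
  have hfirst : (x * v - x * u) ^ 2 ≤ 1 := by
    rw [sq_le_one_iff_abs_le_one, abs_le]
    constructor <;> linarith
  have hsecond : -((v - 2 * (x * v) ^ 2) - (u - 2 * (x * u) ^ 2)) ≤ 3 := by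
    nlinarith [sq_nonneg x, sq_nonneg (x * u)]
  nlinarith [mul_le_mul_of_nonneg_left hμ ha, mul_le_mul_of_nonneg_left hfirst (sq_nonneg a),
    mul_le_mul_of_nonneg_left hsecond ha]

end TestFunctions

namespace IsNonnegSolution

variable {Ω : Type*} {m0 : MeasurableSpace Ω} {P : Measure Ω} [IsProbabilityMeasure P] {T : ℝ}
  {F : Filtration ℝ m0} {μ : ℝ → ℝ} {W X : ℝ → Ω → ℝ}

lemma lintegral_exp_neg_mul_expWeight_le (h : IsNonnegSolution P T F μ W X) (hT : 0 ≤ T)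
    {f f₁ f₂ f₃ g : ℝ → ℝ} {K L : ℝ} (hf : HasBoundedDerivs f f₁ f₂ f₃ K) (hf0 : ∀ x, 0 ≤ f x)
    (hg : Continuous g) (hgL : ∀ x, g x ≤ L)
    (hgen : ∀ x, 0 ≤ x → -(f₁ x * μ x) + 1 / 2 * (f₁ x ^ 2 - f₂ x) + g x ≤ 0) :
    ∫⁻ ω, ENNReal.ofReal (Real.exp (-f (X T ω)) * expWeight g (X · ω) T) ∂P ≤
      ∫⁻ ω, ENNReal.ofReal (Real.exp (-f (X 0 ω))) ∂P := by
  obtain ⟨φ₁, φ₂, φ₃, M, hφ⟩ := hf.exists_isSupersolution_exp_neg hf0 hg hgL hgen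
  have hint {t : ℝ} (ht : t ∈ Icc 0 T) :=
    (h.memLp_top_comp_mul_expWeight hφ ht).integrable le_top
  have hstart : Integrable (fun ω ↦ Real.exp (-f (X 0 ω))) P := by
    simpa [expWeight] using hint ⟨le_rfl, hT⟩
  rw [← ofReal_integral_eq_lintegral_ofReal (hint ⟨hT, le_rfl⟩)
      (ae_of_all _ fun ω ↦ mul_nonneg (Real.exp_pos _).le (Real.exp_pos _).le),
    ← ofReal_integral_eq_lintegral_ofReal hstart (ae_of_all _ fun ω ↦ (Real.exp_pos _).le)]
  exact ENNReal.ofReal_le_ofReal (h.integral_mul_expWeight_le hT hφ)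

section PositiveMoments

variable {a b κ : ℝ}

lemma lintegral_rpow_one_add_sq_div_le (h : IsNonnegSolution P T F μ W X) (hT : 0 ≤ T)
    (ha : 0 ≤ a) (hb : 1 ≤ b) (hκ : 0 ≤ κ) (hdrift : ∀ x, 0 < x → x * μ x ≤ κ * (1 + x ^ 2)) :
    ∫⁻ ω, ENNReal.ofReal (((X T ω ^ 2 + 1) / (X T ω ^ 2 + b)) ^ a) ∂P ≤
      ENNReal.ofReal (Real.exp ((2 * a * κ + 2 * a ^ 2 + 3 * a) * T)) *
        ∫⁻ ω, ENNReal.ofReal (((X 0 ω ^ 2 + 1) / (X 0 ω ^ 2 + b)) ^ a) ∂P := by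
  set C := 2 * a * κ + 2 * a ^ 2 + 3 * a
  obtain ⟨l₃, M, hl⟩ := exists_hasBoundedDerivs_log (zero_lt_one.trans_le hb)
  obtain ⟨l₃', M', hl'⟩ := exists_hasBoundedDerivs_log one_pos
  have hexp (x : ℝ) : Real.exp (-(2 * a * (Real.log (x ^ 2 + b) / 2 - Real.log (x ^ 2 + 1) / 2))) =
      ((x ^ 2 + 1) / (x ^ 2 + b)) ^ a := by
    rw [Real.rpow_def_of_pos (by positivity), Real.log_div (by positivity) (by positivity)]
    ring_nf
  have hfk := h.lintegral_exp_neg_mul_expWeight_le hT ((hl.sub hl').const_mul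
    (mul_nonneg zero_le_two ha)) (fun x ↦ ?_) (g := fun _ ↦ -C) continuous_const (fun _ ↦ le_rfl)
    fun x hx ↦ generator_log_le ha hb hκ hdrift hx rfl rfl
  · simp only [hexp, expWeight, intervalIntegral.integral_const, sub_zero, smul_eq_mul, mul_comm T,
      neg_mul] at hfk
    calc _ = ENNReal.ofReal (Real.exp (C * T)) * ∫⁻ ω, ENNReal.ofReal
          (((X T ω ^ 2 + 1) / (X T ω ^ 2 + b)) ^ a * Real.exp (-(C * T))) ∂P := by
          rw [← lintegral_const_mul' _ _ ENNReal.ofReal_ne_top]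
          refine lintegral_congr fun ω ↦ ?_
          rw [← ENNReal.ofReal_mul (Real.exp_pos _).le, mul_left_comm, ← Real.exp_add,
            add_neg_cancel, Real.exp_zero, mul_one]
      _ ≤ _ := mul_le_mul_right hfk _
  · have := Real.log_le_log (by positivity) (by linarith : x ^ 2 + 1 ≤ x ^ 2 + b)
    exact mul_nonneg (by positivity) (by linarith)

theorem lintegral_rpow_one_add_sq_le (h : IsNonnegSolution P T F μ W X) (hT : 0 ≤ T)
    (ha : 0 ≤ a) (hκ : 0 ≤ κ) (hdrift : ∀ x, 0 < x → x * μ x ≤ κ * (1 + x ^ 2)) :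
    ∫⁻ ω, ENNReal.ofReal ((X T ω ^ 2 + 1) ^ a) ∂P ≤
      ENNReal.ofReal (Real.exp ((2 * a * κ + 2 * a ^ 2 + 3 * a) * T)) *
        ∫⁻ ω, ENNReal.ofReal ((X 0 ω ^ 2 + 1) ^ a) ∂P := by
  have hscale {b x : ℝ} (hb : 0 < b) : ENNReal.ofReal (((x ^ 2 + 1) * (b / (x ^ 2 + b))) ^ a) =
      ENNReal.ofReal (b ^ a) * ENNReal.ofReal (((x ^ 2 + 1) / (x ^ 2 + b)) ^ a) := by
    rw [← ENNReal.ofReal_mul (by positivity), ← Real.mul_rpow hb.le (by positivity)]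
    ring_nf
  have hbound (n : ℕ) :
      ∫⁻ ω, ENNReal.ofReal (((X T ω ^ 2 + 1) * ((n + 1) / (X T ω ^ 2 + (n + 1)))) ^ a) ∂P ≤
        ENNReal.ofReal (Real.exp ((2 * a * κ + 2 * a ^ 2 + 3 * a) * T)) *
          ∫⁻ ω, ENNReal.ofReal ((X 0 ω ^ 2 + 1) ^ a) ∂P := by
    have hb : (0 : ℝ) < n + 1 := by positivity
    simp_rw [hscale hb, lintegral_const_mul' _ _ ENNReal.ofReal_ne_top]
    refine (mul_le_mul_right (h.lintegral_rpow_one_add_sq_div_le hT ha (by simp) hκ hdrift)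
      _).trans ?_
    rw [mul_left_comm, ← lintegral_const_mul' _ _ ENNReal.ofReal_ne_top]
    gcongr with ω
    rw [← hscale hb]
    gcongr
    exact mul_le_of_le_one_right (by positivity)
      (div_le_one_of_le₀ (by nlinarith [sq_nonneg (X 0 ω)]) (by positivity))
  have hlim (x : ℝ) : Tendsto (fun n : ℕ ↦
      ENNReal.ofReal (((x ^ 2 + 1) * ((n + 1) / (x ^ 2 + (n + 1)))) ^ a)) atTop
      (𝓝 (ENNReal.ofReal ((x ^ 2 + 1) ^ a))) := by
    have hfrac := (tendsto_add_atTop_iff_nat 1).2 (tendsto_natCast_div_add_atTop (𝕜 := ℝ) (x ^ 2))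
    push_cast at hfrac
    simp only [add_comm (x ^ 2) (_ + 1)]
    simpa using ENNReal.tendsto_ofReal
      ((hfrac.const_mul (x ^ 2 + 1)).rpow_const (p := a) (Or.inr ha))
  have hmeas : Measurable (X T) := (h.measurable T ⟨hT, le_rfl⟩).mono (F.le T) le_rfl
  calc ∫⁻ ω, ENNReal.ofReal ((X T ω ^ 2 + 1) ^ a) ∂P
      = ∫⁻ ω, liminf (fun n : ℕ ↦ ENNReal.ofReal
          (((X T ω ^ 2 + 1) * ((n + 1) / (X T ω ^ 2 + (n + 1)))) ^ a)) atTop ∂P :=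
        lintegral_congr fun ω ↦ (hlim _).liminf_eq.symm
    _ ≤ _ := (lintegral_liminf_le fun n ↦ by fun_prop).trans (liminf_le_of_le (by isBoundedDefault)
        fun c hc ↦ hc.exists.elim fun n hn ↦ hn.trans (hbound n))

end PositiveMoments

end IsNonnegSolution

section NegativeMomentWeight

/-- The potential in the Feynman–Kac functional with final value
`exp (-L * (x ^ 2 + δ) ^ ((2 - p) / 2) / (2 - p))`. Its leading term is a regularisation of
`L ^ 2 / 2 * x ^ (-p)`; the two subtracted terms make the generator nonpositive. -/
def negMomentPotential (L κ p c δ x : ℝ) : ℝ :=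
  L ^ 2 / 2 * (x ^ 2 + δ) ^ (-(p / 2)) - (L ^ 2 / 2 + L * κ * |x| ^ (c - p))

variable {L κ α p c δ : ℝ}

lemma sq_add_rpow_neg_le (hδ : 0 < δ) (hp : 0 ≤ p) (x : ℝ) :
    (x ^ 2 + δ) ^ (-(p / 2)) ≤ δ ^ (-(p / 2)) :=
  Real.rpow_le_rpow_of_nonpos hδ (le_add_of_nonneg_left (sq_nonneg x)) (by linarith)

lemma continuous_negMomentPotential (hδ : 0 < δ) (hc : p ≤ c) :
    Continuous (negMomentPotential L κ p c δ) := by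
  have hu : Continuous fun x : ℝ ↦ (x ^ 2 + δ) ^ (-(p / 2)) :=
    (by fun_prop : Continuous fun x : ℝ ↦ x ^ 2 + δ).rpow_const fun x ↦ Or.inl (by positivity)
  have hx : Continuous fun x : ℝ ↦ |x| ^ (c - p) :=
    continuous_abs.rpow_const fun x ↦ Or.inr (sub_nonneg.2 hc)
  exact (continuous_const.mul hu).sub (continuous_const.add (continuous_const.mul hx))

lemma negMomentPotential_le (hL : 0 ≤ L) (hκ : 0 ≤ κ) (hδ : 0 < δ) (hp : 0 ≤ p) (x : ℝ) :
    negMomentPotential L κ p c δ x ≤ L ^ 2 / 2 * δ ^ (-(p / 2)) :=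
  (sub_le_self _ (by positivity)).trans
    (mul_le_mul_of_nonneg_left (sq_add_rpow_neg_le hδ hp x) (by positivity))

lemma sq_mul_sq_rpow_le (hδ : 0 < δ) (hp : 1 ≤ p) (hp2 : p ≤ 2) (x : ℝ) :
    x ^ 2 * ((x ^ 2 + δ) ^ (-(p / 2))) ^ 2 ≤ (x ^ 2 + δ) ^ (-(p / 2)) + 1 := by
  have hu : 0 < x ^ 2 + δ := by positivity
  calc x ^ 2 * ((x ^ 2 + δ) ^ (-(p / 2))) ^ 2
      ≤ (x ^ 2 + δ) * ((x ^ 2 + δ) ^ (-(p / 2))) ^ 2 := by gcongr; linarith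
    _ = (x ^ 2 + δ) ^ (1 - p) := by
        rw [← Real.rpow_mul_natCast hu.le, sub_eq_add_neg, Real.rpow_add hu, Real.rpow_one]
        push_cast
        ring_nf
    _ ≤ (x ^ 2 + δ) ^ (-(p / 2)) + 1 := by
        rcases le_total (x ^ 2 + δ) 1 with h | h
        · exact (Real.rpow_le_rpow_of_exponent_ge hu h (by linarith : -(p / 2) ≤ 1 - p)).trans
            (le_add_of_nonneg_right zero_le_one)
        · exact (Real.rpow_le_one_of_one_le_of_nonpos h (by linarith)).trans
            (le_add_of_nonneg_left (by positivity))

lemma rpow_mul_sq_add_rpow_le (hδ : 0 ≤ δ) (hp : 0 ≤ p) {x : ℝ} (hx : 0 < x) :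
    x ^ c * (x ^ 2 + δ) ^ (-(p / 2)) ≤ x ^ (c - p) := by
  have hpow : (x ^ 2 + δ) ^ (-(p / 2)) ≤ x ^ (-p) :=
    calc (x ^ 2 + δ) ^ (-(p / 2)) ≤ (x ^ 2) ^ (-(p / 2)) :=
          Real.rpow_le_rpow_of_nonpos (by positivity) (by linarith) (by linarith)
      _ = x ^ (-p) := by
          rw [← Real.rpow_natCast_mul hx.le]
          push_cast
          ring_nf
  calc x ^ c * (x ^ 2 + δ) ^ (-(p / 2)) ≤ x ^ c * x ^ (-p) := by gcongr
    _ = x ^ (c - p) := by rw [← Real.rpow_add hx, sub_eq_add_neg]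

lemma generator_rpow_le {μ : ℝ → ℝ} (hp : 1 ≤ p) (hp2 : p ≤ 2) (hL : 0 ≤ L) (hL1 : L ≤ 1)
    (hLα : L ≤ α - (p - 1) / 2) (hκ : 0 ≤ κ) (hδ : 0 < δ)
    (hdrift : ∀ x, 0 < x → α - κ * x ^ c ≤ x * μ x) {x : ℝ} (hx : 0 ≤ x) :
    -(L * (x * (x ^ 2 + δ) ^ (-(p / 2))) * μ x) +
      1 / 2 * ((L * (x * (x ^ 2 + δ) ^ (-(p / 2)))) ^ 2 - L * ((x ^ 2 + δ) ^ (-(p / 2)) -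
        p * (x ^ 2 * (x ^ 2 + δ) ^ (-(p / 2) - 1)))) + negMomentPotential L κ p c δ x ≤ 0 := by
  have hu : 0 < x ^ 2 + δ := by positivity
  have hmid := sq_mul_sq_rpow_le hδ hp hp2 x
  have hcurv : x ^ 2 * (x ^ 2 + δ) ^ (-(p / 2) - 1) ≤ (x ^ 2 + δ) ^ (-(p / 2)) := by
    rw [Real.rpow_sub_one hu.ne', mul_div_left_comm]
    exact mul_le_of_le_one_right (by positivity) ((div_le_one hu).2 (by linarith))
  have hA : 0 ≤ (x ^ 2 + δ) ^ (-(p / 2)) := by positivity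
  have hpot : 0 ≤ L * κ * |x| ^ (c - p) := by positivity
  rw [negMomentPotential]
  set A := (x ^ 2 + δ) ^ (-(p / 2))
  set V := L * κ * |x| ^ (c - p) with hV
  set B := x ^ 2 * (x ^ 2 + δ) ^ (-(p / 2) - 1) with hB
  rcases hx.eq_or_lt with rfl | hx
  · simp only [zero_pow two_ne_zero, zero_mul] at hB
    rw [hB]
    nlinarith [mul_le_mul_of_nonneg_right hL1 (mul_nonneg hL hA), sq_nonneg L]
  · have hdriftA : L * A * α - V ≤ L * A * (x * μ x) := by
      have hpow : L * κ * (x ^ c * A) ≤ V := by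
        rw [hV, abs_of_pos hx]
        exact mul_le_mul_of_nonneg_left
          (rpow_mul_sq_add_rpow_le hδ.le (zero_le_one.trans hp) hx) (by positivity)
      linarith [mul_le_mul_of_nonneg_left (hdrift x hx) (mul_nonneg hL hA)]
    linarith [mul_le_mul_of_nonneg_left hmid (sq_nonneg L),
      mul_le_mul_of_nonneg_left hcurv (mul_nonneg hL (zero_le_one.trans hp)),
      mul_le_mul_of_nonneg_left hLα (mul_nonneg hL hA)]

end NegativeMomentWeight

namespace IsNonnegSolution

variable {Ω : Type*} {m0 : MeasurableSpace Ω} {P : Measure Ω} [IsProbabilityMeasure P] {T : ℝ}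
  {F : Filtration ℝ m0} {μ : ℝ → ℝ} {W X : ℝ → Ω → ℝ}

lemma lintegral_exp_negMomentPotential_le_one (h : IsNonnegSolution P T F μ W X) (hT : 0 ≤ T)
    {L κ α p c δ : ℝ} (hp : 1 ≤ p) (hp2 : p < 2) (hL : 0 ≤ L) (hL1 : L ≤ 1)
    (hLα : L ≤ α - (p - 1) / 2) (hκ : 0 ≤ κ) (hc : p ≤ c) (hδ : 0 < δ)
    (hdrift : ∀ x, 0 < x → α - κ * x ^ c ≤ x * μ x) :
    ∫⁻ ω, ENNReal.ofReal (Real.exp ((∫ r in (0 : ℝ)..T, negMomentPotential L κ p c δ (X r ω)) -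
      L * ((X T ω ^ 2 + δ) ^ ((2 - p) / 2) / (2 - p)))) ∂P ≤ 1 := by
  obtain ⟨f₃, K, hf⟩ := exists_hasBoundedDerivs_rpow hδ hp hp2.ne
  have hf0 (x : ℝ) : 0 ≤ L * ((x ^ 2 + δ) ^ ((2 - p) / 2) / (2 - p)) :=
    mul_nonneg hL (div_nonneg (by positivity) (sub_nonneg.2 hp2.le))
  have hfk := h.lintegral_exp_neg_mul_expWeight_le hT (hf.const_mul hL) hf0
    (continuous_negMomentPotential hδ hc) (negMomentPotential_le hL hκ hδ (zero_le_one.trans hp))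
    fun x hx ↦ generator_rpow_le hp hp2.le hL hL1 hLα hκ hδ hdrift hx
  simp only [expWeight, ← Real.exp_add, neg_add_eq_sub] at hfk
  exact hfk.trans ((lintegral_mono fun ω ↦ ENNReal.ofReal_le_one.2
    (Real.exp_le_one_iff.2 (neg_nonpos.2 (hf0 _)))).trans_eq (by simp))

end IsNonnegSolution

section PowerInequalities

lemma lintegral_le_rpow_lintegral_rpow_mul {E : Type*} {m : MeasurableSpace E} {ν : Measure E}
    {f : E → ℝ≥0∞} (hf : AEMeasurable f ν) {s : ℝ} (hs : 1 ≤ s) :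
    ∫⁻ x, f x ∂ν ≤ (∫⁻ x, f x ^ s ∂ν) ^ (1 / s) * ν univ ^ (1 - 1 / s) := by
  simpa [eLpNorm'] using
    eLpNorm'_le_eLpNorm'_mul_rpow_measure_univ one_pos hs hf.aestronglyMeasurable

lemma rpow_lintegral_le {E : Type*} {m : MeasurableSpace E} {ν : Measure E} {f : E → ℝ≥0∞}
    (hf : AEMeasurable f ν) {s : ℝ} (hs : 1 ≤ s) :
    (∫⁻ x, f x ∂ν) ^ s ≤ (∫⁻ x, f x ^ s ∂ν) * ν univ ^ (s - 1) := by
  have hs0 : 0 < s := zero_lt_one.trans_le hs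
  calc (∫⁻ x, f x ∂ν) ^ s
      ≤ ((∫⁻ x, f x ^ s ∂ν) ^ (1 / s) * ν univ ^ (1 - 1 / s)) ^ s := by
        gcongr
        exact lintegral_le_rpow_lintegral_rpow_mul hf hs
    _ = (∫⁻ x, f x ^ s ∂ν) * ν univ ^ (s - 1) := by
        rw [ENNReal.mul_rpow_of_nonneg _ _ hs0.le, ← ENNReal.rpow_mul, ← ENNReal.rpow_mul, sub_mul,
          one_div_mul_cancel hs0.ne', one_mul, ENNReal.rpow_one]

lemma lintegral_const_mul_rpow_lt_top {E : Type*} {m : MeasurableSpace E} {ν : Measure E}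
    {f : E → ℝ≥0∞} {k : ℝ≥0∞} {s : ℝ} (hs : 0 ≤ s) (hk : k ≠ ⊤) (hf : ∫⁻ x, f x ^ s ∂ν < ⊤) :
    ∫⁻ x, (k * f x) ^ s ∂ν < ⊤ := by
  have hks : k ^ s ≠ ⊤ := ENNReal.rpow_ne_top_of_nonneg hs hk
  simp_rw [ENNReal.mul_rpow_of_nonneg _ _ hs]
  rw [lintegral_const_mul' _ _ hks]
  exact ENNReal.mul_lt_top hks.lt_top hf

lemma ofReal_rpow_le_mul_ofReal_exp {s : ℝ} (hs : 0 < s) (x : ℝ) :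
    ENNReal.ofReal x ^ s ≤ ENNReal.ofReal (s ^ s) * ENNReal.ofReal (Real.exp x) := by
  have hlin : x ≤ s * Real.exp (x / s) := by
    calc x = s * (x / s) := by field_simp
      _ ≤ s * Real.exp (x / s) := by gcongr; linarith [Real.add_one_le_exp (x / s)]
  calc ENNReal.ofReal x ^ s ≤ ENNReal.ofReal (s * Real.exp (x / s)) ^ s := by gcongr
    _ = ENNReal.ofReal (s ^ s) * ENNReal.ofReal (Real.exp x) := by
        rw [ENNReal.ofReal_rpow_of_pos (by positivity), Real.mul_rpow hs.le (Real.exp_pos _).le,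
          ← Real.exp_mul, div_mul_cancel₀ x hs.ne', ENNReal.ofReal_mul (by positivity)]

lemma lintegral_mul_ofReal_add_rpow_le {E : Type*} {m : MeasurableSpace E} {ν : Measure E}
    {ξ : E → ℝ} {Z : E → ℝ≥0∞} {k : ℝ≥0∞} {s : ℝ} (hs : 1 ≤ s) (hk : k ≠ ⊤)
    (hZ : AEMeasurable Z ν) :
    ∫⁻ x, (k * (ENNReal.ofReal (ξ x) + Z x)) ^ s ∂ν ≤ k ^ s * 2 ^ (s - 1) *
      (ENNReal.ofReal (s ^ s) * ∫⁻ x, ENNReal.ofReal (Real.exp (ξ x)) ∂ν + ∫⁻ x, Z x ^ s ∂ν) := by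
  have hs0 : 0 < s := zero_lt_one.trans_le hs
  have hk' : k ^ s * 2 ^ (s - 1) ≠ ⊤ :=
    ENNReal.mul_ne_top (ENNReal.rpow_ne_top_of_nonneg hs0.le hk)
      (ENNReal.rpow_ne_top_of_nonneg (sub_nonneg.2 hs) ENNReal.ofNat_ne_top)
  rw [← lintegral_const_mul' _ _ ENNReal.ofReal_ne_top, ← lintegral_add_right' _ (hZ.pow_const s),
    ← lintegral_const_mul' _ _ hk']
  refine lintegral_mono fun x ↦ ?_
  rw [ENNReal.mul_rpow_of_nonneg _ _ hs0.le, mul_assoc]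
  gcongr
  refine (ENNReal.rpow_add_le_mul_rpow_add_rpow _ _ hs).trans ?_
  gcongr
  exact ofReal_rpow_le_mul_ofReal_exp hs0 (ξ x)

lemma ofReal_rpow_rpow {x s : ℝ} (hx : 0 ≤ x) (hs : 0 ≤ s) (a : ℝ) :
    ENNReal.ofReal (x ^ a) ^ s = ENNReal.ofReal (x ^ (a * s)) := by
  rw [ENNReal.ofReal_rpow_of_nonneg (by positivity) hs, ← Real.rpow_mul hx]

lemma abs_rpow_le_sq_add_one_rpow {e a : ℝ} (he : 0 ≤ e) (hea : e / 2 ≤ a) (x : ℝ) :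
    |x| ^ e ≤ (x ^ 2 + 1) ^ a := by
  calc |x| ^ e = (x ^ 2) ^ (e / 2) := by
        rw [← sq_abs, ← Real.rpow_natCast_mul (abs_nonneg x), Nat.cast_ofNat,
          mul_div_cancel₀ e two_ne_zero]
    _ ≤ (x ^ 2 + 1) ^ (e / 2) := by gcongr; linarith
    _ ≤ (x ^ 2 + 1) ^ a := Real.rpow_le_rpow_of_exponent_le (by nlinarith [sq_nonneg x]) hea

lemma ofReal_intervalIntegral_eq_lintegral {f : ℝ → ℝ} {a b : ℝ} (hab : a ≤ b)
    (hf : ContinuousOn f (Icc a b)) (hf0 : ∀ r, 0 ≤ f r) :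
    ENNReal.ofReal (∫ r in a..b, f r) = ∫⁻ r in Ioc a b, ENNReal.ofReal (f r) := by
  rw [intervalIntegral.integral_of_le hab]
  exact ofReal_integral_eq_lintegral_ofReal (hf.integrableOn_Icc.mono_set Ioc_subset_Icc_self)
    (ae_of_all _ hf0)

end PowerInequalities

section NegativeMomentPath

variable {L κ p c δ a T : ℝ} {x : ℝ → ℝ}

lemma sq_add_rpow_neg_le_negMomentPotential_add (hL : 0 < L) (hκ : 0 ≤ κ) (hc : p ≤ c) (ha : 0 ≤ a)
    (ha' : (c - p) / 2 ≤ a) (x : ℝ) :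
    (x ^ 2 + δ) ^ (-(p / 2)) ≤ 2 / L ^ 2 *
      (negMomentPotential L κ p c δ x + (L ^ 2 / 2 + L * κ) * (x ^ 2 + 1) ^ a) := by
  have hone : 1 ≤ (x ^ 2 + 1) ^ a := Real.one_le_rpow (by nlinarith [sq_nonneg x]) ha
  have hpow := abs_rpow_le_sq_add_one_rpow (sub_nonneg.2 hc) ha' x
  have hgap : L ^ 2 / 2 + L * κ * |x| ^ (c - p) ≤ (L ^ 2 / 2 + L * κ) * (x ^ 2 + 1) ^ a := by
    rw [add_mul]
    gcongr
    exact le_mul_of_one_le_right (by positivity) hone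
  calc (x ^ 2 + δ) ^ (-(p / 2)) = 2 / L ^ 2 * (L ^ 2 / 2 * (x ^ 2 + δ) ^ (-(p / 2))) := by
        field_simp
    _ ≤ _ := by
        gcongr
        rw [negMomentPotential]
        linarith

lemma continuousOn_sq_add_rpow (hx : ContinuousOn x (Icc 0 T)) (hδ : 0 < δ) (e : ℝ) :
    ContinuousOn (fun r ↦ (x r ^ 2 + δ) ^ e) (Icc 0 T) :=
  ((hx.pow 2).add continuousOn_const).rpow_const fun r _ ↦
    Or.inl (add_pos_of_nonneg_of_pos (sq_nonneg (x r)) hδ).ne'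

lemma intervalIntegral_sq_add_rpow_neg_le (hT : 0 ≤ T) (hL : 0 < L) (hκ : 0 ≤ κ) (hc : p ≤ c)
    (hδ : 0 < δ) (ha : 0 ≤ a) (ha' : (c - p) / 2 ≤ a) (hx : ContinuousOn x (Icc 0 T)) :
    ∫ r in (0 : ℝ)..T, (x r ^ 2 + δ) ^ (-(p / 2)) ≤ 2 / L ^ 2 *
      ((∫ r in (0 : ℝ)..T, negMomentPotential L κ p c δ (x r)) +
        (L ^ 2 / 2 + L * κ) * ∫ r in (0 : ℝ)..T, (x r ^ 2 + 1) ^ a) := by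
  have hint {g : ℝ → ℝ} (hg : ContinuousOn g (Icc 0 T)) : IntervalIntegrable g volume 0 T :=
    hg.intervalIntegrable_of_Icc hT
  have hV : IntervalIntegrable (fun r ↦ negMomentPotential L κ p c δ (x r)) volume 0 T :=
    hint ((continuous_negMomentPotential hδ hc).comp_continuousOn hx)
  have hw := (hint (continuousOn_sq_add_rpow hx one_pos a)).const_mul (L ^ 2 / 2 + L * κ)
  calc ∫ r in (0 : ℝ)..T, (x r ^ 2 + δ) ^ (-(p / 2))
      ≤ ∫ r in (0 : ℝ)..T, 2 / L ^ 2 *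
          (negMomentPotential L κ p c δ (x r) + (L ^ 2 / 2 + L * κ) * (x r ^ 2 + 1) ^ a) :=
        intervalIntegral.integral_mono_on hT (hint (continuousOn_sq_add_rpow hx hδ _))
          ((hV.add hw).const_mul _)
          fun r _ ↦ sq_add_rpow_neg_le_negMomentPotential_add hL hκ hc ha ha' (x r)
    _ = _ := by
        rw [intervalIntegral.integral_const_mul, intervalIntegral.integral_add hV hw,
          intervalIntegral.integral_const_mul]

lemma lintegral_sq_add_rpow_neg_le (hT : 0 ≤ T) (hL : 0 < L) (hκ : 0 ≤ κ) (hp2 : p < 2)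
    (hc : p ≤ c) (hδ : 0 < δ) (hδ1 : δ ≤ 1) (ha : (2 - p) / 2 ≤ a) (ha' : (c - p) / 2 ≤ a)
    (hx : ContinuousOn x (Icc 0 T)) :
    ∫⁻ r in Ioc 0 T, ENNReal.ofReal ((x r ^ 2 + δ) ^ (-(p / 2))) ≤ ENNReal.ofReal (2 / L ^ 2) *
      (ENNReal.ofReal ((∫ r in (0 : ℝ)..T, negMomentPotential L κ p c δ (x r)) -
          L * ((x T ^ 2 + δ) ^ ((2 - p) / 2) / (2 - p))) +
        (ENNReal.ofReal (L / (2 - p)) * ENNReal.ofReal ((x T ^ 2 + 1) ^ a) +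
          ENNReal.ofReal (L ^ 2 / 2 + L * κ) *
            ∫⁻ r in Ioc 0 T, ENNReal.ofReal ((x r ^ 2 + 1) ^ a))) := by
  have hp : 0 < 2 - p := sub_pos.2 hp2
  have hpath := intervalIntegral_sq_add_rpow_neg_le hT hL hκ hc hδ
    ((div_pos hp two_pos).le.trans ha) ha' hx
  have hend : L * ((x T ^ 2 + δ) ^ ((2 - p) / 2) / (2 - p)) ≤ L / (2 - p) * (x T ^ 2 + 1) ^ a := by
    rw [mul_div_assoc', div_mul_eq_mul_div]
    gcongr
    calc (x T ^ 2 + δ) ^ ((2 - p) / 2) ≤ (x T ^ 2 + 1) ^ ((2 - p) / 2) := by gcongr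
      _ ≤ (x T ^ 2 + 1) ^ a :=
          Real.rpow_le_rpow_of_exponent_le (by nlinarith [sq_nonneg (x T)]) ha
  rw [← ofReal_intervalIntegral_eq_lintegral hT (continuousOn_sq_add_rpow hx hδ _)
      fun r ↦ by positivity,
    ← ofReal_intervalIntegral_eq_lintegral hT (continuousOn_sq_add_rpow hx one_pos _)
      fun r ↦ by positivity,
    ← ENNReal.ofReal_mul (by positivity), ← ENNReal.ofReal_mul (by positivity),
    ← ENNReal.ofReal_add (by positivity) (mul_nonneg (by positivity)
      (intervalIntegral.integral_nonneg hT fun r _ ↦ by positivity))]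
  exact (ENNReal.ofReal_le_ofReal (hpath.trans (mul_le_mul_of_nonneg_left (by linarith)
    (by positivity)))).trans ((ENNReal.ofReal_mul (by positivity)).trans_le
      (mul_le_mul_right ENNReal.ofReal_add_le _))

end NegativeMomentPath

section Regularisation

lemma monotone_ofReal_sq_add_rpow_neg {p : ℝ} (hp : 0 ≤ p) (x : ℝ) :
    Monotone fun n : ℕ ↦ ENNReal.ofReal ((x ^ 2 + 1 / ((n : ℝ) + 1)) ^ (-(p / 2))) :=
  fun _ _ hnk ↦ ENNReal.ofReal_le_ofReal (Real.rpow_le_rpow_of_nonpos (by positivity)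
    (by gcongr) (by linarith))

lemma tendsto_ofReal_sq_add_rpow_neg {x : ℝ} (hx : 0 ≤ x) (p : ℝ) :
    Tendsto (fun n : ℕ ↦ ENNReal.ofReal ((x ^ 2 + 1 / ((n : ℝ) + 1)) ^ (-(p / 2)))) atTop
      (𝓝 (ENNReal.ofReal x ^ (-p))) := by
  have hlim : ENNReal.ofReal x ^ (-p) = ENNReal.ofReal (x ^ 2 + 0) ^ (-(p / 2)) := by
    rw [add_zero, ENNReal.ofReal_pow hx, ← ENNReal.rpow_natCast_mul, Nat.cast_ofNat, mul_neg,
      mul_div_cancel₀ p two_ne_zero]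
  have hreg (n : ℕ) : ENNReal.ofReal ((x ^ 2 + 1 / ((n : ℝ) + 1)) ^ (-(p / 2))) =
      ENNReal.ofReal (x ^ 2 + 1 / ((n : ℝ) + 1)) ^ (-(p / 2)) :=
    (ENNReal.ofReal_rpow_of_pos (by positivity)).symm
  simp_rw [hreg, hlim]
  exact (ENNReal.continuous_rpow_const.tendsto _).comp
    (ENNReal.tendsto_ofReal (tendsto_one_div_add_atTop_nhds_zero_nat.const_add _))

end Regularisation

namespace IsNonnegSolution

variable {Ω : Type*} {m0 : MeasurableSpace Ω} {P : Measure Ω} [IsProbabilityMeasure P] {T : ℝ}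
  {F : Filtration ℝ m0} {μ : ℝ → ℝ} {W X : ℝ → Ω → ℝ}

section TimeIntegralMoments

variable {a κ s : ℝ}

lemma exists_lintegral_rpow_one_add_sq_le (h : IsNonnegSolution P T F μ W X) (ha : 0 ≤ a)
    (hκ : 0 ≤ κ) (hdrift : ∀ x, 0 < x → x * μ x ≤ κ * (1 + x ^ 2))
    (hmom : ∫⁻ ω, ENNReal.ofReal ((X 0 ω ^ 2 + 1) ^ a) ∂P < ⊤) :
    ∃ C < ⊤, ∀ t ∈ Icc 0 T, ∫⁻ ω, ENNReal.ofReal ((X t ω ^ 2 + 1) ^ a) ∂P ≤ C := by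
  refine ⟨ENNReal.ofReal (Real.exp ((2 * a * κ + 2 * a ^ 2 + 3 * a) * T)) * _,
    ENNReal.mul_lt_top ENNReal.ofReal_lt_top hmom, fun t ht ↦ ?_⟩
  refine ((h.restrict ht).lintegral_rpow_one_add_sq_le ht.1 ha hκ hdrift).trans ?_
  gcongr
  exact ht.2

lemma lintegral_rpow_lintegral_sq_add_one_rpow_lt_top (h : IsNonnegSolution P T F μ W X)
    (hT : 0 ≤ T) (ha : 0 ≤ a) (hs : 1 ≤ s) (hκ : 0 ≤ κ)
    (hdrift : ∀ x, 0 < x → x * μ x ≤ κ * (1 + x ^ 2))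
    (hmom : ∫⁻ ω, ENNReal.ofReal ((X 0 ω ^ 2 + 1) ^ (a * s)) ∂P < ⊤) :
    ∫⁻ ω, (∫⁻ r in Ioc 0 T, ENNReal.ofReal ((X r ω ^ 2 + 1) ^ a)) ^ s ∂P < ⊤ := by
  have hs0 : 0 ≤ s := zero_le_one.trans hs
  obtain ⟨C, hC, hXC⟩ := h.exists_lintegral_rpow_one_add_sq_le (mul_nonneg ha hs0) hκ hdrift hmom
  have hpow (x : ℝ) : ENNReal.ofReal ((x ^ 2 + 1) ^ a) ^ s =
      ENNReal.ofReal ((x ^ 2 + 1) ^ (a * s)) := ofReal_rpow_rpow (by positivity) hs0 a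
  have hmeas : Measurable fun x : ℝ ↦ ENNReal.ofReal ((x ^ 2 + 1) ^ (a * s)) := by fun_prop
  have htop : ENNReal.ofReal T ^ (s - 1) < ⊤ :=
    (ENNReal.rpow_ne_top_of_nonneg (sub_nonneg.2 hs) ENNReal.ofReal_ne_top).lt_top
  calc ∫⁻ ω, (∫⁻ r in Ioc 0 T, ENNReal.ofReal ((X r ω ^ 2 + 1) ^ a)) ^ s ∂P
      ≤ ∫⁻ ω, (∫⁻ r in Ioc 0 T, ENNReal.ofReal ((X r ω ^ 2 + 1) ^ (a * s))) *
          ENNReal.ofReal T ^ (s - 1) ∂P := by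
        refine lintegral_mono fun ω ↦ ?_
        have hpath := h.aemeasurable_path ω
        simp_rw [← hpow]
        simpa using rpow_lintegral_le (ν := volume.restrict (Ioc 0 T))
          (f := fun r ↦ ENNReal.ofReal ((X r ω ^ 2 + 1) ^ a)) (by fun_prop) hs
    _ = (∫⁻ r in Ioc 0 T, ∫⁻ ω, ENNReal.ofReal ((X r ω ^ 2 + 1) ^ (a * s)) ∂P) *
          ENNReal.ofReal T ^ (s - 1) := by
        rw [lintegral_mul_const' _ _ htop.ne, lintegral_lintegral_swap
          (hmeas.comp_aemeasurable (h.aemeasurable_uncurry hT)).prod_swap]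
    _ ≤ (∫⁻ _ in Ioc 0 T, C) * ENNReal.ofReal T ^ (s - 1) :=
        mul_le_mul_left (setLIntegral_mono measurable_const
          fun r hr ↦ hXC r (Ioc_subset_Icc_self hr)) _
    _ < ⊤ := ENNReal.mul_lt_top (by simpa using ENNReal.mul_lt_top hC ENNReal.ofReal_lt_top) htop

lemma lintegral_endpoint_add_lintegral_rpow_lt_top (h : IsNonnegSolution P T F μ W X)
    (hT : 0 ≤ T) (ha : 0 ≤ a) (hs : 1 ≤ s) (hκ : 0 ≤ κ)
    (hdrift : ∀ x, 0 < x → x * μ x ≤ κ * (1 + x ^ 2))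
    (hmom : ∫⁻ ω, ENNReal.ofReal ((X 0 ω ^ 2 + 1) ^ (a * s)) ∂P < ⊤) {k₁ k₂ : ℝ≥0∞}
    (hk₁ : k₁ ≠ ⊤) (hk₂ : k₂ ≠ ⊤) :
    ∫⁻ ω, (k₁ * ENNReal.ofReal ((X T ω ^ 2 + 1) ^ a) +
      k₂ * ∫⁻ r in Ioc 0 T, ENNReal.ofReal ((X r ω ^ 2 + 1) ^ a)) ^ s ∂P < ⊤ := by
  have hs0 : 0 ≤ s := zero_le_one.trans hs
  have hmeas : Measurable (X T) := (h.measurable T ⟨hT, le_rfl⟩).mono (F.le T) le_rfl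
  obtain ⟨C, hC, hXC⟩ := h.exists_lintegral_rpow_one_add_sq_le (mul_nonneg ha hs0) hκ hdrift hmom
  refine ENNReal.lintegral_rpow_add_lt_top_of_lintegral_rpow_lt_top (by fun_prop)
    (lintegral_const_mul_rpow_lt_top hs0 hk₁ ?_)
    (lintegral_const_mul_rpow_lt_top hs0 hk₂
      (h.lintegral_rpow_lintegral_sq_add_one_rpow_lt_top hT ha hs hκ hdrift hmom)) hs
  refine lt_of_eq_of_lt (lintegral_congr fun ω ↦ ?_) ((hXC T ⟨hT, le_rfl⟩).trans_lt hC)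
  exact ofReal_rpow_rpow (by positivity) hs0 a

end TimeIntegralMoments

section NegativeMoments

variable {α κ p c a s : ℝ}

lemma exists_lintegral_rpow_lintegral_sq_add_rpow_neg_le (h : IsNonnegSolution P T F μ W X)
    (hT : 0 ≤ T) (hp : 1 ≤ p) (hp2 : p < 2) (hpα : p < 1 + 2 * α) (hc : p ≤ c) (hκ : 0 ≤ κ)
    (hs : 1 ≤ s) (ha : (2 - p) / 2 ≤ a) (ha' : (c - p) / 2 ≤ a)
    (hdrift : ∀ x, 0 < x → α - κ * x ^ c ≤ x * μ x ∧ x * μ x ≤ κ * (1 + x ^ 2))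
    (hmom : ∫⁻ ω, ENNReal.ofReal ((X 0 ω ^ 2 + 1) ^ (a * s)) ∂P < ⊤) :
    ∃ C < ⊤, ∀ δ, 0 < δ → δ ≤ 1 →
      ∫⁻ ω, (∫⁻ r in Ioc 0 T, ENNReal.ofReal ((X r ω ^ 2 + δ) ^ (-(p / 2)))) ^ s ∂P ≤ C := by
  have hs0 : 0 ≤ s := zero_le_one.trans hs
  have ha0 : 0 ≤ a := by linarith
  have hmeas : Measurable (X T) := (h.measurable T ⟨hT, le_rfl⟩).mono (F.le T) le_rfl
  have htime := h.aemeasurable_lintegral_comp hT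
    (by fun_prop : Measurable fun x : ℝ ↦ ENNReal.ofReal ((x ^ 2 + 1) ^ a))
  set L := min 1 (α - (p - 1) / 2)
  have hL : 0 < L := lt_min one_pos (by linarith)
  have hZ := h.lintegral_endpoint_add_lintegral_rpow_lt_top hT ha0 hs hκ
    (fun x hx ↦ (hdrift x hx).2) hmom (k₁ := ENNReal.ofReal (L / (2 - p)))
    (k₂ := ENNReal.ofReal (L ^ 2 / 2 + L * κ)) ENNReal.ofReal_ne_top ENNReal.ofReal_ne_top
  refine ⟨ENNReal.ofReal (2 / L ^ 2) ^ s * 2 ^ (s - 1) * (ENNReal.ofReal (s ^ s) * 1 + _),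
    ENNReal.mul_lt_top (ENNReal.mul_lt_top
        (ENNReal.rpow_lt_top_of_nonneg hs0 ENNReal.ofReal_ne_top)
        (ENNReal.rpow_lt_top_of_nonneg (sub_nonneg.2 hs) ENNReal.ofNat_ne_top))
      (ENNReal.add_lt_top.2 ⟨by simp, hZ⟩), fun δ hδ hδ1 ↦ ?_⟩
  refine (lintegral_mono fun ω ↦ ENNReal.rpow_le_rpow (lintegral_sq_add_rpow_neg_le hT hL hκ hp2 hc
    hδ hδ1 ha ha' (h.continuousOn ω)) hs0).trans ?_
  refine (lintegral_mul_ofReal_add_rpow_le hs ENNReal.ofReal_ne_top (by fun_prop)).trans ?_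
  gcongr
  exact h.lintegral_exp_negMomentPotential_le_one hT hp hp2 hL.le (min_le_left _ _)
    (min_le_right _ _) hκ hc hδ fun x hx ↦ (hdrift x hx).1

theorem lintegral_rpow_lintegral_rpow_neg_lt_top (h : IsNonnegSolution P T F μ W X)
    (hT : 0 ≤ T) (hp : 1 ≤ p) (hp2 : p < 2) (hpα : p < 1 + 2 * α) (hc : p ≤ c) (hκ : 0 ≤ κ)
    (hs : 1 ≤ s) (ha : (2 - p) / 2 ≤ a) (ha' : (c - p) / 2 ≤ a)
    (hdrift : ∀ x, 0 < x → α - κ * x ^ c ≤ x * μ x ∧ x * μ x ≤ κ * (1 + x ^ 2))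
    (hmom : ∫⁻ ω, ENNReal.ofReal ((X 0 ω ^ 2 + 1) ^ (a * s)) ∂P < ⊤) :
    ∫⁻ ω, (∫⁻ r in Ioc 0 T, ENNReal.ofReal (X r ω) ^ (-p)) ^ s ∂P < ⊤ := by
  obtain ⟨C, hC, hδC⟩ := h.exists_lintegral_rpow_lintegral_sq_add_rpow_neg_le hT hp hp2 hpα hc hκ hs
    ha ha' hdrift hmom
  have hmono (x : ℝ) := monotone_ofReal_sq_add_rpow_neg (zero_le_one.trans hp) x
  have hinner (ω : Ω) : Tendsto (fun n : ℕ ↦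
      ∫⁻ r in Ioc 0 T, ENNReal.ofReal ((X r ω ^ 2 + 1 / (n + 1)) ^ (-(p / 2)))) atTop
      (𝓝 (∫⁻ r in Ioc 0 T, ENNReal.ofReal (X r ω) ^ (-p))) := by
    have hpath := h.aemeasurable_path ω
    exact lintegral_tendsto_of_tendsto_of_monotone (fun n ↦ by fun_prop)
      (ae_of_all _ fun r ↦ hmono _) ((ae_restrict_mem measurableSet_Ioc).mono fun r hr ↦
        tendsto_ofReal_sq_add_rpow_neg (h.nonneg r (Ioc_subset_Icc_self hr) ω) p)
  have houter : Tendsto (fun n : ℕ ↦ ∫⁻ ω,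
      (∫⁻ r in Ioc 0 T, ENNReal.ofReal ((X r ω ^ 2 + 1 / (n + 1)) ^ (-(p / 2)))) ^ s ∂P) atTop
      (𝓝 (∫⁻ ω, (∫⁻ r in Ioc 0 T, ENNReal.ofReal (X r ω) ^ (-p)) ^ s ∂P)) :=
    lintegral_tendsto_of_tendsto_of_monotone
      (fun n ↦ (h.aemeasurable_lintegral_comp hT (by fun_prop : Measurable fun x : ℝ ↦
        ENNReal.ofReal ((x ^ 2 + 1 / (n + 1)) ^ (-(p / 2))))).pow_const s)
      (ae_of_all _ fun ω n k hnk ↦ ENNReal.rpow_le_rpow (lintegral_mono fun r ↦ hmono _ hnk)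
        (zero_le_one.trans hs))
      (ae_of_all _ fun ω ↦ (ENNReal.continuous_rpow_const.tendsto _).comp (hinner ω))
  exact (le_of_tendsto' houter fun n ↦ hδC _ Nat.one_div_pos_of_nat
    (div_le_one_of_le₀ (by simp) (by positivity))).trans_lt hC

end NegativeMoments

end IsNonnegSolution

section DriftBound

variable {μ : ℝ → ℝ} {α κ c k p : ℝ}

lemma abs_drift_le (hα : 0 ≤ α) (hκ : 0 ≤ κ) (hc : 1 ≤ c) (hck : c - 1 ≤ k) (hk : 1 ≤ k)
    (hdrift : ∀ x, 0 < x → α - κ * x ^ c ≤ x * μ x ∧ x * μ x ≤ κ * (1 + x ^ 2)) {x : ℝ}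
    (hx : 0 < x) : |μ x| ≤ κ * (x⁻¹ + (x ^ 2 + 1) ^ (k / 2)) := by
  obtain ⟨hlow, hupp⟩ := hdrift x hx
  have hlin : x ≤ (x ^ 2 + 1) ^ (k / 2) := by
    simpa [abs_of_pos hx] using
      abs_rpow_le_sq_add_one_rpow zero_le_one (by linarith : (1 : ℝ) / 2 ≤ k / 2) x
  have hpow : x ^ (c - 1) ≤ (x ^ 2 + 1) ^ (k / 2) := by
    simpa [abs_of_pos hx] using
      abs_rpow_le_sq_add_one_rpow (sub_nonneg.2 hc) (by linarith : (c - 1) / 2 ≤ k / 2) x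
  have hlow' : -(κ * x ^ (c - 1)) ≤ μ x := by
    rw [Real.rpow_sub_one hx.ne', mul_div_assoc', ← neg_div, div_le_iff₀ hx]
    linarith
  have hupp' : μ x ≤ κ * (x⁻¹ + x) := by
    refine le_of_mul_le_mul_left (hupp.trans_eq ?_) hx
    field_simp
  have hinv : 0 ≤ κ * x⁻¹ := by positivity
  refine abs_le.2 ⟨?_, hupp'.trans (by gcongr)⟩
  linarith [mul_le_mul_of_nonneg_left hpow hκ]

lemma ofReal_abs_drift_rpow_le (hα : 0 ≤ α) (hκ : 0 ≤ κ) (hp : 1 ≤ p) (hc : 1 ≤ c)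
    (hck : c - 1 ≤ k) (hk : 1 ≤ k)
    (hdrift : ∀ x, 0 < x → α - κ * x ^ c ≤ x * μ x ∧ x * μ x ≤ κ * (1 + x ^ 2)) {x : ℝ}
    (hx : 0 ≤ x) :
    ENNReal.ofReal (|μ x| ^ p) ≤ ENNReal.ofReal (κ + 1) ^ p * 2 ^ (p - 1) *
      (ENNReal.ofReal x ^ (-p) + ENNReal.ofReal ((x ^ 2 + 1) ^ (k / 2 * p))) := by
  have hp0 : 0 < p := zero_lt_one.trans_le hp
  have hlin : ENNReal.ofReal |μ x| ≤ ENNReal.ofReal (κ + 1) *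
      ((ENNReal.ofReal x)⁻¹ + ENNReal.ofReal ((x ^ 2 + 1) ^ (k / 2))) := by
    rcases hx.eq_or_lt with rfl | hx
    · simp [ENNReal.mul_top, hκ.trans_lt (lt_add_one κ)]
    · rw [← ENNReal.ofReal_inv_of_pos hx, ← ENNReal.ofReal_add (by positivity) (by positivity),
        ← ENNReal.ofReal_mul (by positivity)]
      refine ENNReal.ofReal_le_ofReal ((abs_drift_le hα hκ hc hck hk hdrift hx).trans ?_)
      gcongr
      exact (lt_add_one κ).le
  rw [← ENNReal.ofReal_rpow_of_nonneg (abs_nonneg _) hp0.le]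
  refine (ENNReal.rpow_le_rpow hlin hp0.le).trans ?_
  rw [ENNReal.mul_rpow_of_nonneg _ _ hp0.le, mul_assoc]
  gcongr
  refine (ENNReal.rpow_add_le_mul_rpow_add_rpow _ _ hp).trans_eq ?_
  rw [ENNReal.inv_rpow, ← ENNReal.rpow_neg, ofReal_rpow_rpow (by positivity) hp0.le]

end DriftBound

section Moments

variable {Ω : Type*} {m : MeasurableSpace Ω} {P : Measure Ω} [IsFiniteMeasure P] {d e : ℝ}

lemma lintegral_rpow_lt_top_of_exponent_le {f : Ω → ℝ≥0∞} (hd : 0 ≤ d) (hde : d ≤ e)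
    (hmom : ∫⁻ ω, f ω ^ e ∂P < ⊤) : ∫⁻ ω, f ω ^ d ∂P < ⊤ := by
  have hbound (ω : Ω) : f ω ^ d ≤ 1 + f ω ^ e := by
    rcases le_total (f ω) 1 with h | h
    · exact (ENNReal.rpow_le_one h hd).trans le_self_add
    · exact (ENNReal.rpow_le_rpow_of_exponent_le h hde).trans le_add_self
  refine (lintegral_mono hbound).trans_lt ?_
  rw [lintegral_add_left measurable_const]
  exact ENNReal.add_lt_top.2 ⟨by simp, hmom⟩

variable {Y : Ω → ℝ}

lemma lintegral_ofReal_rpow_lt_top_of_exponent_le (hY : ∀ ω, 0 ≤ Y ω) (hd : 0 ≤ d) (hde : d ≤ e)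
    (hmom : ∫⁻ ω, ENNReal.ofReal (Y ω ^ e) ∂P < ⊤) : ∫⁻ ω, ENNReal.ofReal (Y ω ^ d) ∂P < ⊤ := by
  simp only [← ENNReal.ofReal_rpow_of_nonneg (hY _) (hd.trans hde)] at hmom
  simpa only [ENNReal.ofReal_rpow_of_nonneg (hY _) hd] using
    lintegral_rpow_lt_top_of_exponent_le hd hde hmom

lemma lintegral_ofReal_sq_add_one_rpow_lt_top (hY : ∀ ω, 0 ≤ Y ω) (he : 0 ≤ e)
    (hmom : ∫⁻ ω, ENNReal.ofReal (Y ω ^ e) ∂P < ⊤) :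
    ∫⁻ ω, ENNReal.ofReal ((Y ω ^ 2 + 1) ^ (e / 2)) ∂P < ⊤ := by
  have hbound (ω : Ω) : (Y ω ^ 2 + 1) ^ (e / 2) ≤ 2 ^ (e / 2) * (1 + Y ω ^ e) := by
    have hYe := Real.rpow_nonneg (hY ω) e
    rcases le_total (Y ω) 1 with h | h
    · calc (Y ω ^ 2 + 1) ^ (e / 2) ≤ 2 ^ (e / 2) := by
            gcongr
            nlinarith [hY ω]
        _ ≤ 2 ^ (e / 2) * (1 + Y ω ^ e) := le_mul_of_one_le_right (by positivity) (by linarith)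
    · calc (Y ω ^ 2 + 1) ^ (e / 2) ≤ (2 * Y ω ^ 2) ^ (e / 2) := by
            gcongr
            nlinarith
        _ = 2 ^ (e / 2) * Y ω ^ e := by
            rw [Real.mul_rpow zero_le_two (sq_nonneg _), ← Real.rpow_natCast_mul (hY ω),
              Nat.cast_ofNat, mul_div_cancel₀ e two_ne_zero]
        _ ≤ 2 ^ (e / 2) * (1 + Y ω ^ e) := by
            gcongr
            linarith
  calc ∫⁻ ω, ENNReal.ofReal ((Y ω ^ 2 + 1) ^ (e / 2)) ∂P
      ≤ ∫⁻ ω, ENNReal.ofReal (2 ^ (e / 2)) * (1 + ENNReal.ofReal (Y ω ^ e)) ∂P := by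
        refine lintegral_mono fun ω ↦ (ENNReal.ofReal_le_ofReal (hbound ω)).trans_eq ?_
        rw [ENNReal.ofReal_mul (by positivity),
          ENNReal.ofReal_add zero_le_one (Real.rpow_nonneg (hY ω) e), ENNReal.ofReal_one]
    _ < ⊤ := by
        rw [lintegral_const_mul' _ _ ENNReal.ofReal_ne_top, lintegral_add_left measurable_const]
        exact ENNReal.mul_lt_top ENNReal.ofReal_lt_top (ENNReal.add_lt_top.2 ⟨by simp, hmom⟩)

end Moments

section HolderPath

variable {T p : ℝ}

lemma ofReal_abs_intervalIntegral_div_rpow_le {f : ℝ → ℝ} {s t : ℝ} (hst : s < t) (hp : 1 ≤ p)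
    (hf : AEMeasurable f (volume.restrict (Ioc s t))) :
    ENNReal.ofReal (|∫ r in s..t, f r| / |t - s| ^ (1 - 1 / p)) ≤
      (∫⁻ r in Ioc s t, ENNReal.ofReal (|f r| ^ p)) ^ (1 / p) := by
  have hts : 0 < t - s := sub_pos.2 hst
  rw [abs_of_pos hts, ENNReal.ofReal_div_of_pos (by positivity), ← ENNReal.ofReal_rpow_of_pos hts]
  refine ENNReal.div_le_of_le_mul ?_
  calc ENNReal.ofReal |∫ r in s..t, f r| ≤ ∫⁻ r in Ioc s t, ENNReal.ofReal |f r| := by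
        simpa only [intervalIntegral.integral_of_le hst.le, Real.enorm_eq_ofReal_abs] using
          enorm_integral_le_lintegral_enorm (μ := volume.restrict (Ioc s t)) f
    _ ≤ (∫⁻ r in Ioc s t, ENNReal.ofReal |f r| ^ p) ^ (1 / p) *
          ENNReal.ofReal (t - s) ^ (1 - 1 / p) := by
        simpa using lintegral_le_rpow_lintegral_rpow_mul
          (f := fun r ↦ ENNReal.ofReal |f r|) hf.abs.ennreal_ofReal hp
    _ = _ := by
        simp_rw [ENNReal.ofReal_rpow_of_nonneg (abs_nonneg _) (zero_le_one.trans hp)]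

lemma IsSolutionPath.iSup_ofReal_abs_sub_div_rpow_le {μ : ℝ → ℝ} {x w : ℝ → ℝ}
    (h : IsSolutionPath T μ x w) (hμ : Measurable μ) (hp : 1 ≤ p) :
    ⨆ s ∈ Icc (0 : ℝ) T, ⨆ t ∈ Icc (0 : ℝ) T, ⨆ _ : s ≠ t,
        ENNReal.ofReal (|(x t - w t) - (x s - w s)| / |t - s| ^ (1 - 1 / p)) ≤
      (∫⁻ r in Ioc 0 T, ENNReal.ofReal (|μ (x r)| ^ p)) ^ (1 / p) := by
  have hlt {s t : ℝ} (hs : s ∈ Icc 0 T) (ht : t ∈ Icc 0 T) (hst : s < t) :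
      ENNReal.ofReal (|(x t - w t) - (x s - w s)| / |t - s| ^ (1 - 1 / p)) ≤
        (∫⁻ r in Ioc 0 T, ENNReal.ofReal (|μ (x r)| ^ p)) ^ (1 / p) := by
    have hsub : Ioc s t ⊆ Ioc 0 T := Ioc_subset_Ioc hs.1 ht.2
    have hmeas : AEMeasurable (fun r ↦ μ (x r)) (volume.restrict (Ioc s t)) :=
      hμ.comp_aemeasurable ((h.continuousOn.aemeasurable measurableSet_Icc).mono_set
        (hsub.trans Ioc_subset_Icc_self))
    have hincr : (x t - w t) - (x s - w s) = ∫ r in s..t, μ (x r) := by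
      linarith [h.sub_eq hs ht]
    rw [hincr]
    refine (ofReal_abs_intervalIntegral_div_rpow_le hst hp hmeas).trans ?_
    gcongr
  refine iSup₂_le fun s hs ↦ iSup₂_le fun t ht ↦ iSup_le fun hne ↦ ?_
  rcases hne.lt_or_gt with hst | hts
  · exact hlt hs ht hst
  · rw [abs_sub_comm, abs_sub_comm t]
    exact hlt ht hs hts

end HolderPath

section LpNorm

variable {Ω : Type*} {m0 : MeasurableSpace Ω} {P : Measure Ω}

lemma ofReal_intervalIntegral_rpow_eq {f : ℝ → ℝ} {a b e : ℝ} (hab : a ≤ b) (he : 0 ≤ e)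
    (hf0 : ∀ r, 0 ≤ f r) (hf : AEMeasurable f (volume.restrict (Ioc a b)))
    (hfin : ∫⁻ r in Ioc a b, ENNReal.ofReal (f r) < ⊤) :
    ENNReal.ofReal ((∫ r in a..b, f r) ^ e) = (∫⁻ r in Ioc a b, ENNReal.ofReal (f r)) ^ e := by
  have hint : IntegrableOn f (Ioc a b) :=
    ⟨hf.aestronglyMeasurable, (hasFiniteIntegral_iff_ofReal (ae_of_all _ hf0)).2 hfin⟩
  rw [← ENNReal.ofReal_rpow_of_nonneg (intervalIntegral.integral_nonneg hab fun r _ ↦ hf0 r) he,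
    intervalIntegral.integral_of_le hab, ofReal_integral_eq_lintegral_ofReal hint (ae_of_all _ hf0)]

lemma eLpNorm_ofReal_eq_lintegral_ofReal {f : Ω → ℝ} {q : ℝ} (hq : 0 < q) (hf : ∀ ω, 0 ≤ f ω) :
    eLpNorm f (ENNReal.ofReal q) P = (∫⁻ ω, ENNReal.ofReal (f ω) ^ q ∂P) ^ (1 / q) := by
  rw [eLpNorm_eq_lintegral_rpow_enorm_toReal (ENNReal.ofReal_pos.2 hq).ne' ENNReal.ofReal_ne_top,
    ENNReal.toReal_ofReal hq.le]
  simp only [Real.enorm_of_nonneg (hf _)]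

end LpNorm

namespace IsNonnegSolution

variable {Ω : Type*} {m0 : MeasurableSpace Ω} {P : Measure Ω} {T : ℝ} {F : Filtration ℝ m0}
  {μ : ℝ → ℝ} {W X : ℝ → Ω → ℝ} {α κ p q c k s : ℝ}

lemma eLpNorm_integral_abs_drift_rpow (h : IsNonnegSolution P T F μ W X) (hT : 0 ≤ T)
    (hp : 0 ≤ p) (hq : 0 < q)
    (hfin : ∀ᵐ ω ∂P, ∫⁻ r in Ioc 0 T, ENNReal.ofReal (|μ (X r ω)| ^ p) < ⊤) :
    eLpNorm (fun ω ↦ (∫ r in (0 : ℝ)..T, |μ (X r ω)| ^ p) ^ (1 / p)) (ENNReal.ofReal q) P =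
      (∫⁻ ω, ((∫⁻ r in Ioc 0 T, ENNReal.ofReal (|μ (X r ω)| ^ p)) ^ (1 / p)) ^ q ∂P) ^
        (1 / q) := by
  have hnonneg (ω : Ω) : 0 ≤ ∫ r in (0 : ℝ)..T, |μ (X r ω)| ^ p :=
    intervalIntegral.integral_nonneg hT fun r _ ↦ by positivity
  rw [eLpNorm_ofReal_eq_lintegral_ofReal hq fun ω ↦ Real.rpow_nonneg (hnonneg ω) _]
  congr 1
  refine lintegral_congr_ae ?_
  filter_upwards [hfin] with ω hω
  have hdrift : AEMeasurable (fun r ↦ μ (X r ω)) (volume.restrict (Ioc 0 T)) :=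
    h.measurable_drift.comp_aemeasurable (h.aemeasurable_path ω)
  rw [ofReal_intervalIntegral_rpow_eq hT (by positivity) (fun r ↦ by positivity)
    (hdrift.abs.pow_const p) hω]

variable [IsProbabilityMeasure P]

theorem lintegral_rpow_lintegral_abs_drift_rpow_lt_top (h : IsNonnegSolution P T F μ W X)
    (hT : 0 ≤ T) (hp : 1 ≤ p) (hp2 : p < 2) (hpα : p < 1 + 2 * α) (hc : p ≤ c) (hκ : 0 ≤ κ)
    (hs : 1 ≤ s) (hck : c - 1 ≤ k) (hk : 1 ≤ k)
    (hdrift : ∀ x, 0 < x → α - κ * x ^ c ≤ x * μ x ∧ x * μ x ≤ κ * (1 + x ^ 2))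
    (hmom : ∫⁻ ω, ENNReal.ofReal (X 0 ω ^ (k * (p * s))) ∂P < ⊤) :
    ∫⁻ ω, (∫⁻ r in Ioc 0 T, ENNReal.ofReal (|μ (X r ω)| ^ p)) ^ s ∂P < ⊤ := by
  have hs0 : 0 ≤ s := zero_le_one.trans hs
  have hmom' : ∫⁻ ω, ENNReal.ofReal ((X 0 ω ^ 2 + 1) ^ (k / 2 * p * s)) ∂P < ⊤ := by
    rw [show k / 2 * p * s = k * (p * s) / 2 by ring]
    exact lintegral_ofReal_sq_add_one_rpow_lt_top (h.nonneg 0 ⟨le_rfl, hT⟩) (by positivity) hmom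
  have hneg := h.lintegral_rpow_lintegral_rpow_neg_lt_top (a := k / 2 * p) hT hp hp2 hpα hc hκ hs
    (by nlinarith) (by nlinarith) hdrift hmom'
  have hpos := h.lintegral_rpow_lintegral_sq_add_one_rpow_lt_top (a := k / 2 * p) hT
    (by positivity) hs hκ (fun x hx ↦ (hdrift x hx).2) hmom'
  set A := ENNReal.ofReal (κ + 1) ^ p * 2 ^ (p - 1)
  have hA : A ≠ ⊤ := by finiteness
  have hbound (ω : Ω) : ∫⁻ r in Ioc 0 T, ENNReal.ofReal (|μ (X r ω)| ^ p) ≤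
      A * ((∫⁻ r in Ioc 0 T, ENNReal.ofReal (X r ω) ^ (-p)) +
        ∫⁻ r in Ioc 0 T, ENNReal.ofReal ((X r ω ^ 2 + 1) ^ (k / 2 * p))) := by
    have hpath := h.aemeasurable_path ω
    rw [← lintegral_add_left' (by fun_prop), ← lintegral_const_mul' _ _ hA]
    exact setLIntegral_mono' measurableSet_Ioc fun r hr ↦ ofReal_abs_drift_rpow_le (by linarith) hκ
      hp (hp.trans hc) hck hk hdrift (h.nonneg r (Ioc_subset_Icc_self hr) ω)
  refine (lintegral_mono fun ω ↦ ENNReal.rpow_le_rpow (hbound ω) hs0).trans_lt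
    (lintegral_const_mul_rpow_lt_top hs0 hA ?_)
  exact ENNReal.lintegral_rpow_add_lt_top_of_lintegral_rpow_lt_top
    (h.aemeasurable_lintegral_comp hT
      (by fun_prop : Measurable fun x : ℝ ↦ ENNReal.ofReal x ^ (-p))) hneg hpos hs

end IsNonnegSolution

lemma holderExponent_bounds {α ε p : ℝ} (hα : 0 < α)
    (hε1 : max (α - 1 / 2) 0 / (1 + 2 * α) < ε) (hε2 : ε < 2 * α / (1 + 2 * α))
    (hp : p = (1 + 2 * α) / (ε * (1 + 2 * α) + 1)) :
    1 < p ∧ p < 2 ∧ p < 1 + 2 * α ∧ 2 * α / (1 + 2 * α) - ε = 1 - 1 / p := by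
  have hD : 0 < 1 + 2 * α := by linarith
  obtain ⟨hlow, hpos⟩ := max_lt_iff.1 ((div_lt_iff₀ hD).1 hε1)
  have hupp := (lt_div_iff₀ hD).1 hε2
  have hden : 0 < ε * (1 + 2 * α) + 1 := by linarith
  rw [hp, one_div_div]
  refine ⟨?_, ?_, ?_, ?_⟩
  · rw [lt_div_iff₀ hden]
    linarith
  · rw [div_lt_iff₀ hden]
    linarith
  · exact div_lt_self hD (by linarith)
  · field_simp
    ring

theorem temporal_Holder_regularity_Bessel_type_pathwise_general {Ω : Type*} {m0 : MeasurableSpace Ω}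
    {P : Measure Ω} [IsProbabilityMeasure P] {T : ℝ} (hT : 0 ≤ T) {F : Filtration ℝ m0} {μ : ℝ → ℝ}
    {W X : ℝ → Ω → ℝ} (h : IsNonnegSolution P T F μ W X) {α κ c p q : ℝ} (hp : 1 ≤ p) (hp2 : p < 2)
    (hpα : p < 1 + 2 * α) (hc : p ≤ c) (hκ : 0 ≤ κ) (hq : 0 < q)
    (hdrift : ∀ x, 0 < x → α - κ * x ^ c ≤ x * μ x ∧ x * μ x ≤ κ * (1 + x ^ 2))
    (hmom : ∫⁻ ω, ENNReal.ofReal (X 0 ω ^ (max (c - 1) 1 * max p q)) ∂P < ⊤) :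
    (∫⁻ ω, (⨆ s ∈ Icc (0 : ℝ) T, ⨆ t ∈ Icc (0 : ℝ) T, ⨆ _ : s ≠ t,
        ENNReal.ofReal (|(X t ω - W t ω) - (X s ω - W s ω)| / |t - s| ^ (1 - 1 / p))) ^ q ∂P) ^
          (1 / q) ≤
      eLpNorm (fun ω ↦ (∫ r in (0 : ℝ)..T, |μ (X r ω)| ^ p) ^ (1 / p)) (ENNReal.ofReal q) P ∧
    eLpNorm (fun ω ↦ (∫ r in (0 : ℝ)..T, |μ (X r ω)| ^ p) ^ (1 / p)) (ENNReal.ofReal q) P < ⊤ := by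
  have hp0 : 0 < p := zero_lt_one.trans_le hp
  have hμ := h.measurable_drift
  set I : Ω → ℝ≥0∞ := fun ω ↦ ∫⁻ r in Ioc 0 T, ENNReal.ofReal (|μ (X r ω)| ^ p)
  have hI : ∫⁻ ω, I ω ^ (max p q / p) ∂P < ⊤ :=
    h.lintegral_rpow_lintegral_abs_drift_rpow_lt_top hT hp hp2 hpα hc hκ
      ((one_le_div hp0).2 (le_max_left p q)) (le_max_left _ _) (le_max_right _ _) hdrift
      (by rwa [mul_div_cancel₀ _ hp0.ne'])
  have hIexp {d : ℝ} (hd : 0 ≤ d) (hdpq : d ≤ max p q / p) : ∫⁻ ω, I ω ^ d ∂P < ⊤ :=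
    lintegral_rpow_lt_top_of_exponent_le hd hdpq hI
  have hfin : ∀ᵐ ω ∂P, I ω < ⊤ := ae_lt_top' (h.aemeasurable_lintegral_comp hT
      (by fun_prop : Measurable fun x ↦ ENNReal.ofReal (|μ x| ^ p)))
    (by simpa using (hIexp zero_le_one ((one_le_div hp0).2 (le_max_left p q))).ne)
  rw [h.eLpNorm_integral_abs_drift_rpow hT hp0.le hq hfin]
  refine ⟨ENNReal.rpow_le_rpow (lintegral_mono_ae ?_) (by positivity),
    ENNReal.rpow_lt_top_of_nonneg (by positivity) (ne_of_lt ?_)⟩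
  · filter_upwards [h.ae_isSolutionPath hT] with ω hω
    exact ENNReal.rpow_le_rpow (hω.iSup_ofReal_abs_sub_div_rpow_le hμ hp) hq.le
  · simp_rw [← ENNReal.rpow_mul, one_div_mul_eq_div]
    exact hIexp (by positivity) (by gcongr; exact le_max_right p q)

theorem temporal_Holder_regularity_Bessel_type_pathwise
    {Ω : Type*} [MeasurableSpace Ω] (P : Measure Ω) [IsProbabilityMeasure P]
    (T : ℝ) (hT : 0 ≤ T)
    (F : ℝ → MeasurableSpace Ω)
    (hF_mono : ∀ s t : ℝ, s ≤ t → F s ≤ F t)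
    (hF_le : ∀ t : ℝ, F t ≤ (inferInstance : MeasurableSpace Ω))
    (μ : ℝ → ℝ) (hμmeas : Measurable μ)
    (W X : ℝ → Ω → ℝ)
    (hW0 : ∀ ω, W 0 ω = 0)
    (hWadapt : ∀ t ∈ Set.Icc (0:ℝ) T, @Measurable Ω ℝ (F t) _ (W t))
    (hWcont : ∀ ω, ContinuousOn (fun t => W t ω) (Set.Icc 0 T))
    (hWlaw : ∀ s t : ℝ, 0 ≤ s → s ≤ t → t ≤ T →
      Measure.map (fun ω => W t ω - W s ω) P = gaussianReal 0 (Real.toNNReal (t - s)))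
    (hWindep : ∀ s t : ℝ, 0 ≤ s → s ≤ t → t ≤ T →
      Indep (MeasurableSpace.comap (fun ω => W t ω - W s ω) inferInstance) (F s) P)
    (hXnonneg : ∀ t ω, 0 ≤ X t ω)
    (hXadapt : ∀ t ∈ Set.Icc (0:ℝ) T, @Measurable Ω ℝ (F t) _ (X t))
    (hXcont : ∀ ω, ContinuousOn (fun t => X t ω) (Set.Icc 0 T))
    (hXint : ∀ᵐ ω ∂P, IntervalIntegrable (fun s => |μ (X s ω)|) volume 0 T)
    (hSDE : ∀ t ∈ Set.Icc (0:ℝ) T, ∀ᵐ ω ∂P,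
      X t ω = X 0 ω + (∫ s in (0:ℝ)..t, μ (X s ω)) + W t ω)
    (α q ε p ct c : ℝ) (hα : 0 < α) (hq : 0 < q)
    (hε1 : max (α - 1 / 2) 0 / (1 + 2 * α) < ε) (hε2 : ε < 2 * α / (1 + 2 * α))
    (hp : p = (1 + 2 * α) / (ε * (1 + 2 * α) + 1))
    (hc : p ≤ c) (hct : 0 ≤ ct)
    (hdrift : ∀ x : ℝ, 0 < x → α - ct * x ^ c ≤ x * μ x ∧ x * μ x ≤ ct * (1 + x ^ 2))
    (hmom : ∫⁻ ω, ENNReal.ofReal ((X 0 ω) ^ (max (c - 1) 1 *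
        max p (max q ((q - p) * (1 + 2 * α + p) / (1 + 2 * α - p))))) ∂P < ⊤) :
    (∫⁻ ω, (⨆ s ∈ Set.Icc (0:ℝ) T, ⨆ t ∈ Set.Icc (0:ℝ) T, ⨆ _ : s ≠ t,
          ENNReal.ofReal (|(X t ω - W t ω) - (X s ω - W s ω)|
            / |t - s| ^ (2 * α / (1 + 2 * α) - ε))) ^ q ∂P) ^ (1 / q)
      ≤ eLpNorm (fun ω => (∫ r in (0:ℝ)..T, |μ (X r ω)| ^ p) ^ (1 / p)) (ENNReal.ofReal q) P
    ∧ eLpNorm (fun ω => (∫ r in (0:ℝ)..T, |μ (X r ω)| ^ p) ^ (1 / p)) (ENNReal.ofReal q) P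
        < ⊤ := by
  obtain ⟨hp1, hp2, hpα, hexponent⟩ := holderExponent_bounds hα hε1 hε2 hp
  have hmeas {t : ℝ} (ht : t ∈ Icc 0 T) : Measurable (W t) := (hWadapt t ht).mono (hF_le t) le_rfl
  have hX : IsNonnegSolution P T ⟨F, hF_mono, hF_le⟩ μ W X :=
    ⟨hμmeas, hWadapt, hWcont, fun s t hs hst ht ↦ ⟨((hmeas ⟨hs.trans hst, ht⟩).sub
      (hmeas ⟨hs, hst.trans ht⟩)).aemeasurable, hWlaw s t hs hst ht⟩, hWindep,
      fun t _ ↦ hXnonneg t, hXadapt, hXcont, hXint, hSDE⟩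
  have hmom' : ∫⁻ ω, ENNReal.ofReal (X 0 ω ^ (max (c - 1) 1 * max p q)) ∂P < ⊤ :=
    lintegral_ofReal_rpow_lt_top_of_exponent_le (hXnonneg 0) (by positivity)
      (by gcongr; exact le_max_left _ _) hmom
  rw [hexponent]
  exact temporal_Holder_regularity_Bessel_type_pathwise_general hT hX hp1.le hp2 hpα hc hct hq
    hdrift hmom'

end
end

section
/- Let T ∈ [0,∞), c ∈ (0,∞), let f : [0,∞) → ℝ be Borel measurable, let (Ω, 𝓕, ℙ) be a probability space, let X : [0,T]×Ω → [0,∞) be a stochastic process (each X_t measurable), and assume that sup_{t∈[0,T]} ℙ[X_t = 0] = 0 and that |f(x)−f(y)| ≤ c|x−y|·( 1/x + 1/y + 1/(xy) + x^c + y^c ) for all x, y ∈ (0,∞). Then for all θ, δ, q ∈ (0,∞) and γ ∈ (0,1] it holds that sup_{s,t∈[0,T], s≠t} ‖ f(X_t) − f(X_s) ‖_{L^q(Ω;ℝ)} / |t−s|^{γθ} ≤ c · 7^{max{1, 1/(q(1+δ))}} · ( sup_{s,t∈[0,T], s≠t} ‖ X_t − X_s ‖_{L^{qγ(1/δ+1)}(Ω;ℝ)}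 / |t−s|^θ )^γ · sup_{u∈[0,T]} [ 1 + ‖ 1/X_u ‖_{L^{q(1+γ)(1+δ)}(Ω;ℝ)}^{1+γ} + ‖ X_u ‖_{L^{q(1+δ)(max{1/γ, c+1} − γ)}(Ω;ℝ)}^{max{1/γ, c+1} − γ} ]. -/
open MeasureTheory ProbabilityTheory Filter Set
open scoped ENNReal NNReal

noncomputable section

/-!
If `0 < x ≤ y`, then `|x - y| ≤ |x - y| ^ γ * y ^ (1 - γ)`, and Young's inequality absorbs the
factor `y ^ (1 - γ)` into the singular Lipschitz weight. This leaves the increment of `f` bounded by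
`3 * |x - y| ^ γ` times the sum of `1 + x⁻¹ ^ (1 + γ) + x ^ (max (1 / γ) (c + 1) - γ)` and the same
expression in `y`. Hölder's inequality separates the two factors in `L^q`. The second factor is a
sum of two sums of three terms, so for `r < 1`, when `L^r` is only quasi-normed, it costs a factor
`(2 * 3) ^ (1 / r - 1)`.
-/

section Weight

variable {c γ x y : ℝ}

/-- The power of `x` that controls the growth at infinity of the singular Lipschitz weight after
interpolation: `1 / γ - γ` comes from Young's inequality applied to `y ^ (1 - γ) / x`, and
`c + 1 - γ` from `y ^ (1 - γ) * y ^ c`. -/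
def growthExponent (c γ : ℝ) : ℝ := max (1 / γ) (c + 1) - γ

/-- The one-variable weight that dominates, up to the factor `|x - y| ^ γ`, the increments of a
function satisfying the singular Lipschitz condition. It is only meant for `0 < x`, since
`0⁻¹ = 0`. -/
def singularWeight (c γ x : ℝ) : ℝ := 1 + x⁻¹ ^ (1 + γ) + x ^ growthExponent c γ

lemma inv_sub_le_growthExponent : 1 / γ - γ ≤ growthExponent c γ :=
  sub_le_sub_right (le_max_left _ _) γ

lemma add_one_sub_le_growthExponent : c + 1 - γ ≤ growthExponent c γ :=
  sub_le_sub_right (le_max_right _ _) γ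

lemma one_sub_le_inv_sub (hγ : 0 < γ) (hγ₁ : γ ≤ 1) : 1 - γ ≤ 1 / γ - γ :=
  sub_le_sub_right ((one_le_div hγ).2 hγ₁) γ

lemma growthExponent_pos (hc : 0 < c) (hγ₁ : γ ≤ 1) : 0 < growthExponent c γ := by
  linarith [add_one_sub_le_growthExponent (c := c) (γ := γ)]

lemma rpow_le_one_add_rpow {a b : ℝ} (hx : 0 ≤ x) (ha : 0 ≤ a) (hab : a ≤ b) :
    x ^ a ≤ 1 + x ^ b := by
  rcases le_total 1 x with h | h
  · linarith [Real.rpow_le_rpow_of_exponent_le h hab]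
  · linarith [Real.rpow_le_one hx h ha, Real.rpow_nonneg hx b]

lemma rpow_one_sub_mul_inv_le (hx : 0 ≤ x) (hy : 0 ≤ y) (hγ : 0 < γ) :
    y ^ (1 - γ) * x⁻¹ ≤ x⁻¹ ^ (1 + γ) + y ^ (1 / γ - γ) := by
  have hconj : (1 + γ).HolderConjugate (1 / γ + 1) := by
    refine Real.holderConjugate_iff.2 ⟨by linarith, ?_⟩
    field_simp
  have hpow : (y ^ (1 - γ)) ^ (1 / γ + 1) = y ^ (1 / γ - γ) := by
    rw [← Real.rpow_mul hy]
    congr 1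
    field_simp
    ring
  calc y ^ (1 - γ) * x⁻¹ = x⁻¹ * y ^ (1 - γ) := mul_comm _ _
    _ ≤ x⁻¹ ^ (1 + γ) / (1 + γ) + (y ^ (1 - γ)) ^ (1 / γ + 1) / (1 / γ + 1) :=
      Real.young_inequality_of_nonneg (by positivity) (by positivity) hconj
    _ ≤ x⁻¹ ^ (1 + γ) + (y ^ (1 - γ)) ^ (1 / γ + 1) :=
      add_le_add (div_le_self (by positivity) hconj.lt.le)
        (div_le_self (by positivity) hconj.symm.lt.le)
    _ = x⁻¹ ^ (1 + γ) + y ^ (1 / γ - γ) := by rw [hpow]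

lemma rpow_one_sub_mul_singular_le (hx : 0 < x) (hxy : x ≤ y) (hc : 0 ≤ c) (hγ : 0 < γ)
    (hγ₁ : γ ≤ 1) :
    y ^ (1 - γ) * (1 / x + 1 / y + 1 / (x * y) + x ^ c + y ^ c) ≤
      3 * (singularWeight c γ x + singularWeight c γ y) := by
  have hy : 0 < y := hx.trans_le hxy
  have hsplit : y ^ (1 - γ) * y⁻¹ = y⁻¹ ^ γ := by
    rw [Real.inv_rpow hy.le, Real.rpow_sub hy, Real.rpow_one]
    field_simp
  have h_inv_x : y ^ (1 - γ) * x⁻¹ ≤ x⁻¹ ^ (1 + γ) + (1 + y ^ growthExponent c γ) :=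
    (rpow_one_sub_mul_inv_le hx.le hy.le hγ).trans <| add_le_add_right
      (rpow_le_one_add_rpow hy.le (by linarith [one_sub_le_inv_sub hγ hγ₁])
        inv_sub_le_growthExponent) _
  have h_inv_y : y ^ (1 - γ) * y⁻¹ ≤ 1 + y⁻¹ ^ (1 + γ) := by
    rw [hsplit]
    exact rpow_le_one_add_rpow (by positivity) hγ.le (by linarith)
  have h_inv_xy : y ^ (1 - γ) * (x⁻¹ * y⁻¹) ≤ x⁻¹ ^ (1 + γ) := by
    calc y ^ (1 - γ) * (x⁻¹ * y⁻¹) = x⁻¹ * y⁻¹ ^ γ := by rw [← hsplit]; ring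
      _ ≤ x⁻¹ * x⁻¹ ^ γ := by gcongr
      _ = x⁻¹ ^ (1 + γ) := by rw [Real.rpow_add (by positivity), Real.rpow_one]
  have h_pow_y : y ^ (1 - γ) * y ^ c ≤ 1 + y ^ growthExponent c γ := by
    rw [← Real.rpow_add hy]
    exact rpow_le_one_add_rpow hy.le (by linarith)
      (by linarith [add_one_sub_le_growthExponent (c := c) (γ := γ)])
  have h_pow_x : y ^ (1 - γ) * x ^ c ≤ 1 + y ^ growthExponent c γ :=
    le_trans (by gcongr) h_pow_y
  have h_inv_nonneg : 0 ≤ x⁻¹ ^ (1 + γ) ∧ 0 ≤ y⁻¹ ^ (1 + γ) := by constructor <;> positivity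
  have h_pow_nonneg : 0 ≤ x ^ growthExponent c γ := by positivity
  simp only [singularWeight, one_div, mul_inv, mul_add]
  linarith

lemma abs_sub_mul_singular_le (hx : 0 < x) (hy : 0 < y) (hc : 0 ≤ c) (hγ : 0 < γ) (hγ₁ : γ ≤ 1) :
    |x - y| * (1 / x + 1 / y + 1 / (x * y) + x ^ c + y ^ c) ≤
      3 * (|x - y| ^ γ * (singularWeight c γ x + singularWeight c γ y)) := by
  wlog hxy : x ≤ y generalizing x y
  · convert this hy hx (le_of_not_ge hxy) using 2
    · exact abs_sub_comm x y
    · ring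
    · rw [abs_sub_comm, add_comm]
  have hsplit : |x - y| = |x - y| ^ γ * |x - y| ^ (1 - γ) := by
    rw [← Real.rpow_add' (abs_nonneg _) (by norm_num), add_sub_cancel, Real.rpow_one]
  have hdist : |x - y| ≤ y := abs_sub_le_of_nonneg_of_le hx.le hxy hy.le le_rfl
  calc |x - y| * (1 / x + 1 / y + 1 / (x * y) + x ^ c + y ^ c)
      = |x - y| ^ γ * (|x - y| ^ (1 - γ) * (1 / x + 1 / y + 1 / (x * y) + x ^ c + y ^ c)) := by
        rw [← mul_assoc, ← hsplit]
    _ ≤ |x - y| ^ γ * (y ^ (1 - γ) * (1 / x + 1 / y + 1 / (x * y) + x ^ c + y ^ c)) := by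
        gcongr
    _ ≤ |x - y| ^ γ * (3 * (singularWeight c γ x + singularWeight c γ y)) :=
        mul_le_mul_of_nonneg_left (rpow_one_sub_mul_singular_le hx hxy hc hγ hγ₁) (by positivity)
    _ = 3 * (|x - y| ^ γ * (singularWeight c γ x + singularWeight c γ y)) := by ring

lemma norm_sub_le_of_singular_lipschitz {E : Type*} [NormedAddCommGroup E] {K : ℝ} (hK : 0 ≤ K)
    (hc : 0 ≤ c) (hγ : 0 < γ) (hγ₁ : γ ≤ 1) {f : ℝ → E}
    (hf : ∀ x y : ℝ, 0 < x → 0 < y →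
      ‖f x - f y‖ ≤ K * |x - y| * (1 / x + 1 / y + 1 / (x * y) + x ^ c + y ^ c))
    (hx : 0 < x) (hy : 0 < y) :
    ‖f x - f y‖ ≤ 3 * K * (|x - y| ^ γ * (singularWeight c γ x + singularWeight c γ y)) := by
  calc ‖f x - f y‖ ≤ K * (|x - y| * (1 / x + 1 / y + 1 / (x * y) + x ^ c + y ^ c)) :=
        (hf x y hx hy).trans_eq (mul_assoc _ _ _)
    _ ≤ K * (3 * (|x - y| ^ γ * (singularWeight c γ x + singularWeight c γ y))) :=
        mul_le_mul_of_nonneg_left (abs_sub_mul_singular_le hx hy hc hγ hγ₁) hK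
    _ = 3 * K * (|x - y| ^ γ * (singularWeight c γ x + singularWeight c γ y)) := by ring

end Weight

lemma holderTriple_one_div_add_one {q δ : ℝ} (hq : 0 < q) (hδ : 0 < δ) :
    (q * (1 / δ + 1)).HolderTriple (q * (1 + δ)) q where
  inv_add_inv_eq_inv := by
    field_simp
    ring
  left_pos := by positivity
  right_pos := by positivity

section LpNorm

variable {Ω : Type*} {mΩ : MeasurableSpace Ω} {μ : Measure Ω}

lemma eLpNorm'_sum_le_card_rpow_mul {ε κ : Type*} [TopologicalSpace ε] [ESeminormedAddCommMonoid ε]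
    {p : ℝ} (hp : 0 < p) (hp₁ : p ≤ 1) {s : Finset κ} {Z : κ → Ω → ε}
    (hZ : ∀ i ∈ s, AEStronglyMeasurable (Z i) μ) :
    eLpNorm' (∑ i ∈ s, Z i) p μ ≤ (s.card : ℝ≥0∞) ^ (1 / p - 1) * ∑ i ∈ s, eLpNorm' (Z i) p μ := by
  have hpow (ω : Ω) : ‖(∑ i ∈ s, Z i) ω‖ₑ ^ p ≤ ∑ i ∈ s, ‖Z i ω‖ₑ ^ p := by
    rw [Finset.sum_apply]
    refine Finset.le_sum_of_subadditive (‖·‖ₑ ^ p) (by simp [hp]) (fun a b => ?_) s (Z · ω)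
    exact (ENNReal.rpow_le_rpow (enorm_add_le a b) hp.le).trans
      (ENNReal.rpow_add_le_add_rpow _ _ hp.le hp₁)
  calc (∫⁻ ω, ‖(∑ i ∈ s, Z i) ω‖ₑ ^ p ∂μ) ^ (1 / p)
      ≤ (∫⁻ ω, ∑ i ∈ s, ‖Z i ω‖ₑ ^ p ∂μ) ^ (1 / p) := by
        gcongr with ω
        exact hpow ω
    _ = (∑ i ∈ s, ∫⁻ ω, ‖Z i ω‖ₑ ^ p ∂μ) ^ (1 / p) := by
        rw [lintegral_finsetSum' _ fun i hi => (hZ i hi).enorm.pow_const p]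
    _ ≤ (s.card : ℝ≥0∞) ^ (1 / p - 1) * ∑ i ∈ s, (∫⁻ ω, ‖Z i ω‖ₑ ^ p ∂μ) ^ (1 / p) :=
        ENNReal.rpow_sum_le_const_mul_sum_rpow _ _ ((one_le_div hp).2 hp₁)

lemma eLpNorm_sum_le_card_rpow_mul {ε κ : Type*} [TopologicalSpace ε] [ESeminormedAddCommMonoid ε]
    [ContinuousAdd ε] {p : ℝ} (hp : 0 < p) {s : Finset κ} {Z : κ → Ω → ε}
    (hZ : ∀ i ∈ s, AEStronglyMeasurable (Z i) μ) :
    eLpNorm (∑ i ∈ s, Z i) (ENNReal.ofReal p) μ ≤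
      (s.card : ℝ≥0∞) ^ (max 1 (1 / p) - 1) * ∑ i ∈ s, eLpNorm (Z i) (ENNReal.ofReal p) μ := by
  rcases le_total 1 p with hp₁ | hp₁
  · rw [max_eq_left ((div_le_one hp).2 hp₁), sub_self, ENNReal.rpow_zero, one_mul]
    exact eLpNorm_sum_le hZ (ENNReal.one_le_ofReal.2 hp₁)
  · have hp₀ : ENNReal.ofReal p ≠ 0 := by simpa using hp
    rw [max_eq_right ((one_le_div hp).2 hp₁)]
    simp only [eLpNorm_eq_eLpNorm' hp₀ ENNReal.ofReal_ne_top, ENNReal.toReal_ofReal hp.le]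
    exact eLpNorm'_sum_le_card_rpow_mul hp hp₁ hZ

lemma eLpNorm_rpow_of_ae_nonneg {Y : Ω → ℝ} (hY : ∀ᵐ ω ∂μ, 0 ≤ Y ω) {a : ℝ} (ha : 0 < a) {p : ℝ}
    (hp : 0 ≤ p) :
    eLpNorm (fun ω => Y ω ^ a) (ENNReal.ofReal p) μ = eLpNorm Y (ENNReal.ofReal (p * a)) μ ^ a := by
  rw [ENNReal.ofReal_mul hp, ← eLpNorm_norm_rpow Y ha]
  refine eLpNorm_congr_ae (hY.mono fun ω hω => ?_)
  simp only [Real.norm_of_nonneg hω]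

lemma eLpNorm_inv_of_ae_pos {Y : Ω → ℝ} (hY : ∀ᵐ ω ∂μ, 0 < Y ω) (p : ℝ≥0∞) :
    eLpNorm (fun ω => (Y ω)⁻¹) p μ = eLpNorm (fun ω => (ENNReal.ofReal (Y ω))⁻¹) p μ := by
  refine eLpNorm_congr_enorm_ae (hY.mono fun ω hω => ?_)
  rw [enorm_inv hω.ne', Real.enorm_of_nonneg hω.le, enorm_eq_self]

/-- The moment quantity `1 + ‖1/Y‖ ^ (1 + γ) + ‖Y‖ ^ growthExponent c γ` attached to
`singularWeight`, the norms being those of `L^{r (1 + γ)}` and `L^{r * growthExponent c γ}`. The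
reciprocal is taken in `[0, ∞]`, so that `1/0 = ∞`. -/
def weightMoment (c γ r : ℝ) (μ : Measure Ω) (Y : Ω → ℝ) : ℝ≥0∞ :=
  1 + eLpNorm (fun ω => (ENNReal.ofReal (Y ω))⁻¹) (ENNReal.ofReal (r * (1 + γ))) μ ^ (1 + γ)
    + eLpNorm Y (ENNReal.ofReal (r * growthExponent c γ)) μ ^ growthExponent c γ

lemma weightMoment_eq_lintegral {c γ r : ℝ}
    (hr : 0 < r) (hγ : 0 < 1 + γ) (Y : Ω → ℝ) :
    weightMoment c γ r μ Y =
      1 + ((∫⁻ ω, ((ENNReal.ofReal (Y ω))⁻¹) ^ (r * (1 + γ)) ∂μ) ^ (1 / (r * (1 + γ)))) ^ (1 + γ)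
        + eLpNorm Y (ENNReal.ofReal (r * (max (1 / γ) (c + 1) - γ))) μ ^
          (max (1 / γ) (c + 1) - γ) := by
  have hp : 0 < r * (1 + γ) := mul_pos hr hγ
  rw [weightMoment, growthExponent, eLpNorm_eq_lintegral_rpow_enorm_toReal
    (ENNReal.ofReal_pos.2 hp).ne' ENNReal.ofReal_ne_top, ENNReal.toReal_ofReal hp.le]
  simp only [enorm_eq_self]

lemma ae_pos_of_nonneg_of_measure_eq_zero {Y : Ω → ℝ} (hY : ∀ ω, 0 ≤ Y ω)
    (hzero : μ {ω | Y ω = 0} = 0) : ∀ᵐ ω ∂μ, 0 < Y ω :=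
  (measure_eq_zero_iff_ae_notMem.1 hzero).mono fun ω hω => (hY ω).lt_of_ne' hω

lemma ofReal_mul_six_rpow {K a : ℝ} (hK : 0 ≤ K) :
    ENNReal.ofReal (K * 6 ^ a) = ENNReal.ofReal (3 * K) * (2 * 6 ^ (a - 1)) := by
  have hpow : (6 : ℝ≥0∞) ^ a = 6 ^ (a - 1) * 6 := by
    rw [ENNReal.rpow_sub _ _ (by norm_num) (by norm_num), ENNReal.rpow_one,
      ENNReal.div_mul_cancel (by norm_num) (by norm_num)]
  rw [ENNReal.ofReal_mul hK, ENNReal.ofReal_mul (by norm_num),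
    ← ENNReal.ofReal_rpow_of_pos (by norm_num), ENNReal.ofReal_ofNat, ENNReal.ofReal_ofNat, hpow]
  ring

lemma eLpNorm_singularWeight_le [IsProbabilityMeasure μ] {c γ r : ℝ} (hc : 0 < c) (hγ : 0 < γ)
    (hγ₁ : γ ≤ 1) (hr : 0 < r) {Y : Ω → ℝ} (hYm : AEMeasurable Y μ) (hY : ∀ᵐ ω ∂μ, 0 < Y ω) :
    eLpNorm (fun ω => singularWeight c γ (Y ω)) (ENNReal.ofReal r) μ ≤
      3 ^ (max 1 (1 / r) - 1) * weightMoment c γ r μ Y := by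
  let Z : Fin 3 → Ω → ℝ := ![fun _ => 1, fun ω => (Y ω)⁻¹ ^ (1 + γ),
    fun ω => Y ω ^ growthExponent c γ]
  have hZ : ∀ i ∈ Finset.univ, AEStronglyMeasurable (Z i) μ := by
    intro i _
    fin_cases i
    · exact aestronglyMeasurable_const
    · exact (hYm.inv.pow_const _).aestronglyMeasurable
    · exact (hYm.pow_const _).aestronglyMeasurable
  have hsum : (fun ω => singularWeight c γ (Y ω)) = ∑ i, Z i := by
    ext ω
    simp [Z, singularWeight, Fin.sum_univ_three]
  have hone : eLpNorm (Z 0) (ENNReal.ofReal r) μ = 1 := by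
    simp [Z, eLpNorm_const, hr, NeZero.ne μ]
  have hinv : eLpNorm (Z 1) (ENNReal.ofReal r) μ =
      eLpNorm (fun ω => (ENNReal.ofReal (Y ω))⁻¹) (ENNReal.ofReal (r * (1 + γ))) μ ^ (1 + γ) := by
    rw [← eLpNorm_inv_of_ae_pos hY]
    exact eLpNorm_rpow_of_ae_nonneg (hY.mono fun ω hω => inv_nonneg.2 hω.le) (by linarith) hr.le
  have hgrowth : eLpNorm (Z 2) (ENNReal.ofReal r) μ =
      eLpNorm Y (ENNReal.ofReal (r * growthExponent c γ)) μ ^ growthExponent c γ :=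
    eLpNorm_rpow_of_ae_nonneg (hY.mono fun ω hω => hω.le) (growthExponent_pos hc hγ₁) hr.le
  have hquasi := eLpNorm_sum_le_card_rpow_mul hr hZ
  rwa [← hsum, Fin.sum_univ_three, hone, hinv, hgrowth, Finset.card_fin] at hquasi

lemma aestronglyMeasurable_singularWeight {c γ : ℝ} {Y : Ω → ℝ} (hY : AEMeasurable Y μ) :
    AEStronglyMeasurable (fun ω => singularWeight c γ (Y ω)) μ :=
  ((aemeasurable_const.add (hY.inv.pow_const _)).add (hY.pow_const _)).aestronglyMeasurable

lemma eLpNorm_singularWeight_add_le [IsProbabilityMeasure μ] {c γ r : ℝ} (hc : 0 < c) (hγ : 0 < γ)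
    (hγ₁ : γ ≤ 1) (hr : 0 < r) {X Y : Ω → ℝ} (hXm : AEMeasurable X μ) (hX : ∀ᵐ ω ∂μ, 0 < X ω)
    (hYm : AEMeasurable Y μ) (hY : ∀ᵐ ω ∂μ, 0 < Y ω) :
    eLpNorm (fun ω => singularWeight c γ (X ω) + singularWeight c γ (Y ω)) (ENNReal.ofReal r) μ ≤
      2 * 6 ^ (max 1 (1 / r) - 1) * max (weightMoment c γ r μ X) (weightMoment c γ r μ Y) := by
  set M := max (weightMoment c γ r μ X) (weightMoment c γ r μ Y)
  have hquasi := eLpNorm_sum_le_card_rpow_mul (μ := μ) hr (s := Finset.univ)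
    (Z := ![fun ω => singularWeight c γ (X ω), fun ω => singularWeight c γ (Y ω)])
    (by simp [Fin.forall_fin_two, aestronglyMeasurable_singularWeight, hXm, hYm])
  simp only [Fin.sum_univ_two, Matrix.cons_val_zero, Matrix.cons_val_one, Finset.card_fin]
    at hquasi
  calc _ ≤ 2 ^ (max 1 (1 / r) - 1) *
        (eLpNorm (fun ω => singularWeight c γ (X ω)) (ENNReal.ofReal r) μ +
          eLpNorm (fun ω => singularWeight c γ (Y ω)) (ENNReal.ofReal r) μ) := hquasi
    _ ≤ 2 ^ (max 1 (1 / r) - 1) *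
        (3 ^ (max 1 (1 / r) - 1) * M + 3 ^ (max 1 (1 / r) - 1) * M) := by
        gcongr
        · exact (eLpNorm_singularWeight_le hc hγ hγ₁ hr hXm hX).trans <|
            mul_right_mono (le_max_left _ _)
        · exact (eLpNorm_singularWeight_le hc hγ hγ₁ hr hYm hY).trans <|
            mul_right_mono (le_max_right _ _)
    _ = 2 * (2 * 3) ^ (max 1 (1 / r) - 1) * M := by
        rw [ENNReal.mul_rpow_of_nonneg _ _ (sub_nonneg.2 (le_max_left 1 (1 / r)))]
        ring
    _ = 2 * 6 ^ (max 1 (1 / r) - 1) * M := by norm_num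

lemma eLpNorm_comp_sub_le [IsProbabilityMeasure μ] {E : Type*} [NormedAddCommGroup E]
    {K c γ p q r : ℝ} (hK : 0 ≤ K) (hc : 0 < c) (hγ : 0 < γ) (hγ₁ : γ ≤ 1)
    (hpqr : p.HolderTriple r q) {f : ℝ → E}
    (hf : ∀ x y : ℝ, 0 < x → 0 < y →
      ‖f x - f y‖ ≤ K * |x - y| * (1 / x + 1 / y + 1 / (x * y) + x ^ c + y ^ c))
    {X Y : Ω → ℝ} (hXm : AEMeasurable X μ) (hX : ∀ᵐ ω ∂μ, 0 < X ω)
    (hYm : AEMeasurable Y μ) (hY : ∀ᵐ ω ∂μ, 0 < Y ω) :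
    eLpNorm (fun ω => f (X ω) - f (Y ω)) (ENNReal.ofReal q) μ ≤
      ENNReal.ofReal (K * 6 ^ max 1 (1 / r)) *
        eLpNorm (fun ω => X ω - Y ω) (ENNReal.ofReal (p * γ)) μ ^ γ *
        max (weightMoment c γ r μ X) (weightMoment c γ r μ Y) := by
  set N := eLpNorm (fun ω => X ω - Y ω) (ENNReal.ofReal (p * γ)) μ
  set M := max (weightMoment c γ r μ X) (weightMoment c γ r μ Y)
  set A : Ω → ℝ := fun ω => |X ω - Y ω| ^ γ
  set B : Ω → ℝ := fun ω => singularWeight c γ (X ω) + singularWeight c γ (Y ω)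
  have hA : AEStronglyMeasurable A μ := ((hXm.sub hYm).norm.pow_const γ).aestronglyMeasurable
  have hB : AEStronglyMeasurable B μ :=
    (aestronglyMeasurable_singularWeight hXm).add (aestronglyMeasurable_singularWeight hYm)
  have hpointwise : ∀ᵐ ω ∂μ, ‖f (X ω) - f (Y ω)‖ ≤ 3 * K * ‖(A • B) ω‖ := by
    filter_upwards [hX, hY] with ω hXω hYω
    exact (norm_sub_le_of_singular_lipschitz hK hc.le hγ hγ₁ hf hXω hYω).trans
      (mul_le_mul_of_nonneg_left (Real.le_norm_self _) (by positivity))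
  have : ENNReal.HolderTriple (ENNReal.ofReal p) (ENNReal.ofReal r) (ENNReal.ofReal q) :=
    hpqr.toNNReal.coe_ennreal (Real.toNNReal_pos.2 hpqr.pos').ne'
  have hA_norm : eLpNorm A (ENNReal.ofReal p) μ = N ^ γ := by
    simp only [A, N, ENNReal.ofReal_mul hpqr.nonneg, ← eLpNorm_norm_rpow _ hγ, Real.norm_eq_abs]
  calc eLpNorm (fun ω => f (X ω) - f (Y ω)) (ENNReal.ofReal q) μ
      ≤ ENNReal.ofReal (3 * K) * eLpNorm (A • B) (ENNReal.ofReal q) μ :=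
        eLpNorm_le_mul_eLpNorm_of_ae_le_mul hpointwise _
    _ ≤ ENNReal.ofReal (3 * K) *
          (eLpNorm A (ENNReal.ofReal p) μ * eLpNorm B (ENNReal.ofReal r) μ) := by
        gcongr
        exact eLpNorm_smul_le_mul_eLpNorm hB hA
    _ ≤ ENNReal.ofReal (3 * K) * (N ^ γ * (2 * 6 ^ (max 1 (1 / r) - 1) * M)) := by
        rw [hA_norm]
        gcongr
        exact eLpNorm_singularWeight_add_le hc hγ hγ₁ hpqr.symm.pos hXm hX hYm hY
    _ = ENNReal.ofReal (K * 6 ^ max 1 (1 / r)) * N ^ γ * M := by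
        rw [ofReal_mul_six_rpow hK]
        ring

end LpNorm

section HolderSeminorm

variable {ι Ω E : Type*} [MetricSpace ι] {mΩ : MeasurableSpace Ω} [NormedAddCommGroup E]

/-- The `θ`-Hölder seminorm on `I` of a process `X`, regarded as a curve in `L^p(μ; E)`. -/
def lpHolderSeminorm (I : Set ι) (X : ι → Ω → E) (θ : ℝ) (p : ℝ≥0∞) (μ : Measure Ω) : ℝ≥0∞ :=
  ⨆ s ∈ I, ⨆ t ∈ I, ⨆ _ : s ≠ t,
    eLpNorm (fun ω => X t ω - X s ω) p μ / ENNReal.ofReal (dist t s ^ θ)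

lemma eLpNorm_sub_div_le_lpHolderSeminorm {I : Set ι} {X : ι → Ω → E} {θ : ℝ} {p : ℝ≥0∞}
    {μ : Measure Ω} {s t : ι} (hs : s ∈ I) (ht : t ∈ I) (hst : s ≠ t) :
    eLpNorm (fun ω => X t ω - X s ω) p μ / ENNReal.ofReal (dist t s ^ θ) ≤
      lpHolderSeminorm I X θ p μ :=
  le_iSup₂_of_le s hs <| le_iSup₂_of_le t ht <| le_iSup_of_le hst le_rfl

lemma ofReal_dist_rpow_mul {s t : ι} (hst : s ≠ t) (γ θ : ℝ) :
    ENNReal.ofReal (dist t s ^ (γ * θ)) = ENNReal.ofReal (dist t s ^ θ) ^ γ := by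
  rw [ENNReal.ofReal_rpow_of_pos (Real.rpow_pos_of_pos (dist_pos.2 hst.symm) θ),
    ← Real.rpow_mul dist_nonneg, mul_comm]

theorem Holder_regularity_transfer_under_singular_Lipschitz_condition_general
    {P : Measure Ω} [IsProbabilityMeasure P] {I : Set ι} {X : ι → Ω → ℝ}
    (hXm : ∀ t ∈ I, AEMeasurable (X t) P) (hXpos : ∀ t ∈ I, ∀ᵐ ω ∂P, 0 < X t ω)
    {K c γ p q r θ : ℝ} (hK : 0 ≤ K) (hc : 0 < c) (hγ : 0 < γ) (hγ₁ : γ ≤ 1)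
    (hpqr : p.HolderTriple r q) {f : ℝ → E}
    (hf : ∀ x y : ℝ, 0 < x → 0 < y →
      ‖f x - f y‖ ≤ K * |x - y| * (1 / x + 1 / y + 1 / (x * y) + x ^ c + y ^ c)) :
    lpHolderSeminorm I (fun t ω => f (X t ω)) (γ * θ) (ENNReal.ofReal q) P ≤
      ENNReal.ofReal (K * 6 ^ max 1 (1 / r)) *
        lpHolderSeminorm I X θ (ENNReal.ofReal (p * γ)) P ^ γ *
        ⨆ u ∈ I, weightMoment c γ r P (X u) := by
  refine iSup₂_le fun s hs => iSup₂_le fun t ht => iSup_le fun hst => ?_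
  set C := ENNReal.ofReal (K * 6 ^ max 1 (1 / r))
  set D := ENNReal.ofReal (dist t s ^ θ)
  set N := eLpNorm (fun ω => X t ω - X s ω) (ENNReal.ofReal (p * γ)) P
  set M := max (weightMoment c γ r P (X t)) (weightMoment c γ r P (X s))
  have hM : M ≤ ⨆ u ∈ I, weightMoment c γ r P (X u) :=
    max_le (le_iSup₂_of_le t ht le_rfl) (le_iSup₂_of_le s hs le_rfl)
  rw [ofReal_dist_rpow_mul hst]
  calc eLpNorm (fun ω => f (X t ω) - f (X s ω)) (ENNReal.ofReal q) P / D ^ γ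
      ≤ C * N ^ γ * M / D ^ γ := by
        gcongr
        exact eLpNorm_comp_sub_le hK hc hγ hγ₁ hpqr hf (hXm t ht) (hXpos t ht) (hXm s hs)
          (hXpos s hs)
    _ = C * (N / D) ^ γ * M := by
        rw [ENNReal.div_rpow_of_nonneg _ _ hγ.le]
        simp only [div_eq_mul_inv]
        ring
    _ ≤ _ := by
        gcongr
        exact eLpNorm_sub_div_le_lpHolderSeminorm hs ht hst

end HolderSeminorm

theorem Holder_regularity_transfer_under_singular_Lipschitz_condition
    {Ω : Type*} [MeasurableSpace Ω] (P : Measure Ω) [IsProbabilityMeasure P]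
    (T : ℝ) (hT : 0 ≤ T) (c : ℝ) (hc : 0 < c)
    (f : ℝ → ℝ) (hfmeas : Measurable f)
    (X : ℝ → Ω → ℝ) (hXnonneg : ∀ t ω, 0 ≤ X t ω)
    (hXmeas : ∀ t, Measurable (X t))
    (hXzero : ∀ t ∈ Set.Icc (0:ℝ) T, P {ω | X t ω = 0} = 0)
    (hf : ∀ x y : ℝ, 0 < x → 0 < y →
      |f x - f y| ≤ c * |x - y| * (1 / x + 1 / y + 1 / (x * y) + x ^ c + y ^ c)) :
    ∀ θ δ q γ : ℝ, 0 < θ → 0 < δ → 0 < q → 0 < γ → γ ≤ 1 →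
      (⨆ s ∈ Set.Icc (0:ℝ) T, ⨆ t ∈ Set.Icc (0:ℝ) T, ⨆ _ : s ≠ t,
          eLpNorm (fun ω => f (X t ω) - f (X s ω)) (ENNReal.ofReal q) P
            / ENNReal.ofReal (|t - s| ^ (γ * θ)))
        ≤ ENNReal.ofReal (c * (7:ℝ) ^ (max 1 (1 / (q * (1 + δ)))))
          * (⨆ s ∈ Set.Icc (0:ℝ) T, ⨆ t ∈ Set.Icc (0:ℝ) T, ⨆ _ : s ≠ t,
              eLpNorm (fun ω => X t ω - X s ω) (ENNReal.ofReal (q * γ * (1 / δ + 1))) P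
                / ENNReal.ofReal (|t - s| ^ θ)) ^ γ
          * ⨆ u ∈ Set.Icc (0:ℝ) T,
              (1
                + ((∫⁻ ω, ((ENNReal.ofReal (X u ω))⁻¹) ^ (q * (1 + γ) * (1 + δ)) ∂P)
                      ^ (1 / (q * (1 + γ) * (1 + δ)))) ^ (1 + γ)
                + (eLpNorm (fun ω => X u ω)
                      (ENNReal.ofReal (q * (1 + δ) * (max (1 / γ) (c + 1) - γ))) P)
                    ^ (max (1 / γ) (c + 1) - γ)) := by
  intro θ δ q γ _ hδ hq hγ hγ₁
  have htransfer := Holder_regularity_transfer_under_singular_Lipschitz_condition_general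
    (f := f) (θ := θ) (fun t _ => (hXmeas t).aemeasurable)
    (fun t ht => ae_pos_of_nonneg_of_measure_eq_zero (hXnonneg t) (hXzero t ht))
    hc.le hc hγ hγ₁ (holderTriple_one_div_add_one hq hδ) hf
  simp only [lpHolderSeminorm, Real.dist_eq, mul_right_comm q _ γ,
    weightMoment_eq_lintegral (by positivity : 0 < q * (1 + δ)) (by positivity : 0 < 1 + γ),
    mul_right_comm q (1 + δ) (1 + γ)] at htransfer
  exact htransfer.trans (by gcongr; norm_num)

end
end

section
/- Let T ∈ [0,∞), c₁, c₂, c₃ ∈ [0,∞), let σ : [0,∞) → [0,∞) be Borel measurable with σ(z) ≥ c₁√z / (1 + c₃·z^{c₂}) for all z ∈ [0,∞), let (Ω, 𝓕, ℙ) be a probability space, and let X, Y : Ω → [0,∞) be random variables. Then for all p ∈ (0,∞] and r ∈ [0,∞] it holds that ‖ ∫_Y^X 1/σ(z) dz ‖_{L^p(Ω;ℝ)} ≤ (2/c₁) · ‖ 1 + c₃·X^{c₂} + c₃·Y^{c₂} ‖_{L^{p(1+1/r)}(Ω;ℝ)} · min{ ‖ |Y−X|^{1/2} ‖_{L^{p(1+r)}(Ω;ℝ)},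 ‖ |Y−X|/(√Y + √X) ‖_{L^{p(1+r)}(Ω;ℝ)} }, where ∫_Y^X 1/σ(z) dz denotes ∫_{Y(ω)}^{X(ω)} 1/σ(z) dz (a signed Lebesgue integral, with value computed in the extended reals when σ vanishes). -/
open MeasureTheory ProbabilityTheory Filter Set
open scoped ENNReal NNReal

noncomputable section

/-!
Since `1 / √z` has primitive `2√z`, the lower bound on `σ` and the monotonicity of `z ↦ z ^ c₂`
give, for every `ω`, that the integral of `1 / σ` between `Y` and `X` is at most
`(2 / c₁) (1 + c₃ X ^ c₂ + c₃ Y ^ c₂) |√Y - √X|`, where `|√Y - √X| = |Y - X| / (√Y + √X)`.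
Hölder's inequality with the conjugate exponents `1 + r⁻¹` and `1 + r` then separates the two
factors. The second term of the minimum is the smaller one, because
`|√Y - √X| ^ 2 ≤ |√Y - √X| (√Y + √X) = |Y - X|`.
-/

theorem holderTriple_mul_of_holderConjugate {p a b : ℝ≥0∞} (hp : p ≠ 0)
    (h : a.HolderConjugate b) : (p * a).HolderTriple (p * b) p where
  inv_add_inv_eq_inv := by
    rw [ENNReal.mul_inv (.inl hp) (.inr (ENNReal.HolderConjugate.ne_zero a b)),
      ENNReal.mul_inv (.inl hp) (.inr (ENNReal.HolderConjugate.ne_zero b a)), ← mul_add,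
      h.inv_add_inv_eq_inv, inv_one, mul_one]

theorem holderConjugate_one_add_inv_one_add (r : ℝ≥0∞) : (1 + r⁻¹).HolderConjugate (1 + r) := by
  have h := ENNReal.HolderConjugate.conjExponent (p := 1 + r) le_self_add
  rw [ENNReal.conjExponent, ENNReal.add_sub_cancel_left ENNReal.one_ne_top] at h
  exact h.symm

theorem abs_sqrt_sub_sqrt_mul_sqrt_add_sqrt {a b : ℝ} (ha : 0 ≤ a) (hb : 0 ≤ b) :
    |√a - √b| * (√a + √b) = |a - b| := by
  calc |√a - √b| * (√a + √b) = |√a - √b| * |√a + √b| := by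
        rw [abs_of_nonneg (by positivity : 0 ≤ √a + √b)]
    _ = |√a * √a - √b * √b| := by rw [mul_comm, ← abs_mul, ← mul_self_sub_mul_self]
    _ = |a - b| := by rw [Real.mul_self_sqrt ha, Real.mul_self_sqrt hb]

theorem abs_sqrt_sub_sqrt_eq_div {a b : ℝ} (ha : 0 ≤ a) (hb : 0 ≤ b) :
    |√a - √b| = |a - b| / (√a + √b) := by
  rw [← abs_sqrt_sub_sqrt_mul_sqrt_add_sqrt ha hb]
  refine (mul_div_cancel_of_imp fun h => ?_).symm
  obtain ⟨ha0, hb0⟩ := (add_eq_zero_iff_of_nonneg (Real.sqrt_nonneg a) (Real.sqrt_nonneg b)).1 h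
  simp [ha0, hb0]

theorem abs_sqrt_sub_sqrt_le_sqrt_abs_sub {a b : ℝ} (ha : 0 ≤ a) (hb : 0 ≤ b) :
    |√a - √b| ≤ √|a - b| := by
  refine Real.abs_le_sqrt ?_
  calc (√a - √b) ^ 2 = |√a - √b| * |√a - √b| := by rw [← sq_abs, sq]
    _ ≤ |√a - √b| * (√a + √b) := by
        gcongr
        exact abs_sub_le_of_nonneg_of_le (Real.sqrt_nonneg a) (by simp) (Real.sqrt_nonneg b)
          (by simp)
    _ = |a - b| := abs_sqrt_sub_sqrt_mul_sqrt_add_sqrt ha hb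

theorem pos_of_mem_uIoc {α : Type*} [LinearOrder α] [Zero α] {a b z : α} (ha : 0 ≤ a)
    (hb : 0 ≤ b) (hz : z ∈ uIoc a b) : 0 < z :=
  (le_min ha hb).trans_lt hz.1

theorem rpow_le_rpow_add_rpow_of_mem_uIoc {a b c z : ℝ} (ha : 0 ≤ a) (hb : 0 ≤ b) (hc : 0 ≤ c)
    (hz : z ∈ uIoc a b) : z ^ c ≤ a ^ c + b ^ c := by
  have hz0 : 0 ≤ z := (pos_of_mem_uIoc ha hb hz).le
  rcases le_max_iff.1 hz.2 with hza | hzb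
  · exact le_add_of_le_of_nonneg (Real.rpow_le_rpow hz0 hza hc) (Real.rpow_nonneg hb c)
  · exact le_add_of_nonneg_of_le (Real.rpow_nonneg ha c) (Real.rpow_le_rpow hz0 hzb hc)

theorem lintegral_uIoc_inv_sqrt {a b : ℝ} (ha : 0 ≤ a) (hb : 0 ≤ b) :
    ∫⁻ z in uIoc a b, (ENNReal.ofReal √z)⁻¹ = 2 * ENNReal.ofReal |√a - √b| := by
  wlog hab : a ≤ b generalizing a b
  · rw [uIoc_comm, abs_sub_comm]
    exact this hb ha (le_of_not_ge hab)
  have hint : IntervalIntegrable (fun z : ℝ => z ^ (-(1 / 2) : ℝ)) volume a b :=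
    intervalIntegral.intervalIntegrable_rpow' (by norm_num)
  have hval : ∫ z in a..b, z ^ (-(1 / 2) : ℝ) = 2 * (√b - √a) := by
    rw [integral_rpow (.inl (by norm_num)), (by norm_num : (-(1 / 2) : ℝ) + 1 = 1 / 2),
      ← Real.sqrt_eq_rpow, ← Real.sqrt_eq_rpow]
    ring
  calc ∫⁻ z in uIoc a b, (ENNReal.ofReal √z)⁻¹
      = ∫⁻ z in Ioc a b, ENNReal.ofReal (z ^ (-(1 / 2) : ℝ)) := by
        rw [uIoc_of_le hab]
        refine setLIntegral_congr_fun measurableSet_Ioc fun z hz => ?_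
        have hz0 : 0 < z := ha.trans_lt hz.1
        simp only [Real.rpow_neg hz0.le, ← Real.sqrt_eq_rpow,
          ENNReal.ofReal_inv_of_pos (Real.sqrt_pos.2 hz0)]
    _ = ENNReal.ofReal (∫ z in a..b, z ^ (-(1 / 2) : ℝ)) := by
        rw [intervalIntegral.integral_of_le hab]
        refine (ofReal_integral_eq_lintegral_ofReal hint.1 ?_).symm
        filter_upwards [ae_restrict_mem measurableSet_Ioc] with z hz
        exact Real.rpow_nonneg (ha.trans hz.1.le) _
    _ = 2 * ENNReal.ofReal |√a - √b| := by
        rw [hval, ENNReal.ofReal_mul zero_le_two, ENNReal.ofReal_ofNat, abs_sub_comm,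
          abs_of_nonneg (sub_nonneg.2 (Real.sqrt_le_sqrt hab))]

theorem lintegral_uIoc_inv_le_of_mul_sqrt_le {a b : ℝ} (ha : 0 ≤ a) (hb : 0 ≤ b) {κ : ℝ≥0∞}
    {f : ℝ → ℝ≥0∞} (hf : ∀ z ∈ uIoc a b, κ * ENNReal.ofReal √z ≤ f z) :
    ∫⁻ z in uIoc a b, (f z)⁻¹ ≤ κ⁻¹ * (2 * ENNReal.ofReal |√a - √b|) := by
  calc ∫⁻ z in uIoc a b, (f z)⁻¹
      ≤ ∫⁻ z in uIoc a b, κ⁻¹ * (ENNReal.ofReal √z)⁻¹ := by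
        refine setLIntegral_mono' measurableSet_uIoc fun z hz => ?_
        have hz0 : ENNReal.ofReal √z ≠ 0 := by simpa using pos_of_mem_uIoc ha hb hz
        rw [← ENNReal.mul_inv (.inr ENNReal.ofReal_ne_top) (.inr hz0)]
        exact ENNReal.inv_le_inv.2 (hf z hz)
    _ = κ⁻¹ * (2 * ENNReal.ofReal |√a - √b|) := by
        rw [lintegral_const_mul _ (by fun_prop), lintegral_uIoc_inv_sqrt ha hb]

theorem lintegral_uIoc_inv_le_of_sqrt_div_one_add_rpow_le {c₁ c₂ c₃ : ℝ} (hc₁ : 0 ≤ c₁)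
    (hc₂ : 0 ≤ c₂) (hc₃ : 0 ≤ c₃) {σ : ℝ → ℝ}
    (hσlow : ∀ z : ℝ, 0 ≤ z → c₁ * √z / (1 + c₃ * z ^ c₂) ≤ σ z)
    {x y : ℝ} (hx : 0 ≤ x) (hy : 0 ≤ y) :
    ∫⁻ z in uIoc y x, (ENNReal.ofReal (σ z))⁻¹ ≤ 2 / ENNReal.ofReal c₁ *
      ENNReal.ofReal ((1 + c₃ * x ^ c₂ + c₃ * y ^ c₂) * (|y - x| / (√y + √x))) := by
  set M : ℝ := 1 + c₃ * x ^ c₂ + c₃ * y ^ c₂ with hM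
  have hM0 : 0 < M := by positivity
  have hσM : ∀ z ∈ uIoc y x,
      ENNReal.ofReal c₁ / ENNReal.ofReal M * ENNReal.ofReal √z ≤ ENNReal.ofReal (σ z) := by
    intro z hz
    have hz0 : 0 ≤ z := (pos_of_mem_uIoc hy hx hz).le
    have hzM : 1 + c₃ * z ^ c₂ ≤ M := by
      rw [hM, add_assoc, ← mul_add, add_comm (x ^ c₂)]
      gcongr
      exact rpow_le_rpow_add_rpow_of_mem_uIoc hy hx hc₂ hz
    rw [← ENNReal.ofReal_div_of_pos hM0, ← ENNReal.ofReal_mul (by positivity)]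
    refine ENNReal.ofReal_le_ofReal ?_
    calc c₁ / M * √z = c₁ * √z / M := div_mul_eq_mul_div ..
      _ ≤ c₁ * √z / (1 + c₃ * z ^ c₂) := by gcongr
      _ ≤ σ z := hσlow z hz0
  calc ∫⁻ z in uIoc y x, (ENNReal.ofReal (σ z))⁻¹
      ≤ (ENNReal.ofReal c₁ / ENNReal.ofReal M)⁻¹ * (2 * ENNReal.ofReal |√y - √x|) :=
        lintegral_uIoc_inv_le_of_mul_sqrt_le hy hx hσM
    _ = 2 / ENNReal.ofReal c₁ * (ENNReal.ofReal M * ENNReal.ofReal |√y - √x|) := by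
        rw [ENNReal.inv_div (.inl ENNReal.ofReal_ne_top) (.inl (ENNReal.ofReal_pos.2 hM0).ne'),
          div_eq_mul_inv, div_eq_mul_inv]
        ring
    _ = 2 / ENNReal.ofReal c₁ * ENNReal.ofReal (M * (|y - x| / (√y + √x))) := by
        rw [← ENNReal.ofReal_mul hM0.le, abs_sqrt_sub_sqrt_eq_div hy hx]

theorem enorm_inv_le_inv_ofReal (x : ℝ) : ‖x⁻¹‖ₑ ≤ (ENNReal.ofReal x)⁻¹ := by
  rcases eq_or_ne x 0 with rfl | hx
  · simp
  · rw [enorm_inv hx]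
    exact ENNReal.inv_le_inv.2 (Real.ofReal_le_enorm x)

theorem enorm_intervalIntegral_inv_le_lintegral (f : ℝ → ℝ) (a b : ℝ) (μ : Measure ℝ) :
    ‖∫ z in a..b, (f z)⁻¹ ∂μ‖ₑ ≤ ∫⁻ z in uIoc a b, (ENNReal.ofReal (f z))⁻¹ ∂μ := by
  rw [enorm_eq_iff_norm_eq.2 (intervalIntegral.norm_integral_eq_norm_integral_uIoc _)]
  exact (enorm_integral_le_lintegral_enorm _).trans
    (lintegral_mono fun z => enorm_inv_le_inv_ofReal (f z))

theorem eLpNorm_abs_sub_div_sqrt_add_sqrt_le {Ω : Type*} [MeasurableSpace Ω] {μ : Measure Ω}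
    {X Y : Ω → ℝ} (hX : 0 ≤ᵐ[μ] X) (hY : 0 ≤ᵐ[μ] Y) (q : ℝ≥0∞) :
    eLpNorm (fun ω => |Y ω - X ω| / (√(Y ω) + √(X ω))) q μ
      ≤ eLpNorm (fun ω => |Y ω - X ω| ^ ((1 : ℝ) / 2)) q μ := by
  refine eLpNorm_mono_ae_real ?_
  filter_upwards [hX, hY] with ω hXω hYω
  rw [← abs_sqrt_sub_sqrt_eq_div hYω hXω, ← Real.sqrt_eq_rpow, Real.norm_eq_abs, abs_abs]
  exact abs_sqrt_sub_sqrt_le_sqrt_abs_sub hYω hXω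

/-- The integral of `1 / σ` is taken in `[0, ∞]`, with `1 / 0 = ∞`; it dominates the absolute value
of the signed Bochner integral. -/
theorem Lp_bound_for_integral_of_inverse_diffusion_coefficient_general
    {Ω : Type*} [MeasurableSpace Ω] {μ : Measure Ω}
    {c₁ c₂ c₃ : ℝ} (hc₁ : 0 ≤ c₁) (hc₂ : 0 ≤ c₂) (hc₃ : 0 ≤ c₃)
    {σ : ℝ → ℝ} (hσlow : ∀ z : ℝ, 0 ≤ z → c₁ * √z / (1 + c₃ * z ^ c₂) ≤ σ z)
    {X Y : Ω → ℝ} (hXmeas : AEMeasurable X μ) (hYmeas : AEMeasurable Y μ)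
    (hXnonneg : 0 ≤ᵐ[μ] X) (hYnonneg : 0 ≤ᵐ[μ] Y) {p : ℝ≥0∞} (hp : p ≠ 0) (r : ℝ≥0∞) :
    eLpNorm (fun ω => ∫⁻ z in uIoc (Y ω) (X ω), (ENNReal.ofReal (σ z))⁻¹) p μ
      ≤ (2 / ENNReal.ofReal c₁)
        * eLpNorm (fun ω => 1 + c₃ * (X ω) ^ c₂ + c₃ * (Y ω) ^ c₂) (p * (1 + r⁻¹)) μ
        * min
            (eLpNorm (fun ω => |Y ω - X ω| ^ ((1 : ℝ) / 2)) (p * (1 + r)) μ)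
            (eLpNorm (fun ω => |Y ω - X ω| / (√(Y ω) + √(X ω))) (p * (1 + r)) μ) := by
  rw [min_eq_right (eLpNorm_abs_sub_div_sqrt_add_sqrt_le hXnonneg hYnonneg _), mul_assoc]
  set growth : Ω → ℝ := fun ω => 1 + c₃ * (X ω) ^ c₂ + c₃ * (Y ω) ^ c₂
  set sqrtDist : Ω → ℝ := fun ω => |Y ω - X ω| / (√(Y ω) + √(X ω))
  have hgrowth : AEStronglyMeasurable growth μ := AEMeasurable.aestronglyMeasurable (by fun_prop)
  have hsqrtDist : AEStronglyMeasurable sqrtDist μ :=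
    AEMeasurable.aestronglyMeasurable (by fun_prop)
  have := holderTriple_mul_of_holderConjugate hp (holderConjugate_one_add_inv_one_add r)
  calc eLpNorm (fun ω => ∫⁻ z in uIoc (Y ω) (X ω), (ENNReal.ofReal (σ z))⁻¹) p μ
      ≤ 2 / ENNReal.ofReal c₁ * eLpNorm (growth • sqrtDist) p μ := by
        refine eLpNorm_le_mul_eLpNorm_of_ae_le_mul'' p (hgrowth.smul hsqrtDist) ?_
        filter_upwards [hXnonneg, hYnonneg] with ω hXω hYω
        rw [enorm_eq_self]
        refine (lintegral_uIoc_inv_le_of_sqrt_div_one_add_rpow_le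
          hc₁ hc₂ hc₃ hσlow hXω hYω).trans ?_
        gcongr
        exact Real.ofReal_le_enorm _
    _ ≤ 2 / ENNReal.ofReal c₁ *
          (eLpNorm growth (p * (1 + r⁻¹)) μ * eLpNorm sqrtDist (p * (1 + r)) μ) := by
        gcongr
        exact eLpNorm_smul_le_mul_eLpNorm hsqrtDist hgrowth

theorem Lp_bound_for_integral_of_inverse_diffusion_coefficient
    {Ω : Type*} [MeasurableSpace Ω] (P : Measure Ω) [IsProbabilityMeasure P]
    (T : ℝ) (hT : 0 ≤ T) (c₁ c₂ c₃ : ℝ) (hc₁ : 0 ≤ c₁) (hc₂ : 0 ≤ c₂) (hc₃ : 0 ≤ c₃)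
    (σ : ℝ → ℝ) (hσmeas : Measurable σ) (hσnonneg : ∀ z : ℝ, 0 ≤ z → 0 ≤ σ z)
    (hσlow : ∀ z : ℝ, 0 ≤ z → c₁ * Real.sqrt z / (1 + c₃ * z ^ c₂) ≤ σ z)
    (X Y : Ω → ℝ) (hXmeas : Measurable X) (hYmeas : Measurable Y)
    (hXnonneg : ∀ ω, 0 ≤ X ω) (hYnonneg : ∀ ω, 0 ≤ Y ω) :
    ∀ p r : ℝ≥0∞, 0 < p →
      eLpNorm (fun ω => ∫ z in Y ω..X ω, (σ z)⁻¹) p P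
        ≤ (2 / ENNReal.ofReal c₁)
          * eLpNorm (fun ω => 1 + c₃ * (X ω) ^ c₂ + c₃ * (Y ω) ^ c₂) (p * (1 + r⁻¹)) P
          * min
              (eLpNorm (fun ω => |Y ω - X ω| ^ ((1:ℝ) / 2)) (p * (1 + r)) P)
              (eLpNorm (fun ω => |Y ω - X ω| / (Real.sqrt (Y ω) + Real.sqrt (X ω)))
                (p * (1 + r)) P) := fun _ r hp =>
  (eLpNorm_mono_enorm fun _ => enorm_intervalIntegral_inv_le_lintegral σ _ _ volume).trans <|
    Lp_bound_for_integral_of_inverse_diffusion_coefficient_general hc₁ hc₂ hc₃ hσlow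
      hXmeas.aemeasurable hYmeas.aemeasurable (ae_of_all P hXnonneg) (ae_of_all P hYnonneg)
      hp.ne' r

end
end

section
/- Let (H, ⟨·,·⟩_H, ‖·‖_H) be a real Hilbert space, let I ⊆ H be a non-empty set, let L ∈ [0,∞), let μ : I → H satisfy ⟨x−y, μ(x)−μ(y)⟩_H ≤ L‖x−y‖_H² for all x, y ∈ I, and for t ∈ (0,∞) with tL < 1 define F_t : I → H by F_t(x) := x − t·μ(x). Then for every t ∈ (0,∞) with tL < 1 the map F_t is injective, and for all such t and all x, y ∈ F_t(I) it holds that ‖F_t^{−1}(x) − F_t^{−1}(y)‖_H ≤ (1/(1−tL))·‖x−y‖_H, where F_t^{−1} : F_t(I) → I denotes the inverse of F_t onto its image. -/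
open MeasureTheory Filter Set
open scoped RealInnerProductSpace

noncomputable section

/-!
Pairing `x - y - t • (μ x - μ y)` with `x - y` gives at least `(1 - t * L) * ‖x - y‖ ^ 2`, so by
the Cauchy–Schwarz inequality `x ↦ x - t • μ x` expands distances by a factor at least `1 - t * L`.
Thus it is antilipschitz, which is injectivity together with a Lipschitz bound for the inverse.
-/

section Seminormed

variable {E : Type*} [SeminormedAddCommGroup E] [InnerProductSpace ℝ E] {L t : ℝ}

theorem one_sub_mul_norm_sq_le_inner_sub_smul {u v : E} (huv : ⟪u, v⟫ ≤ L * ‖u‖ ^ 2)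
    (ht : 0 ≤ t) : (1 - t * L) * ‖u‖ ^ 2 ≤ ⟪u, u - t • v⟫ :=
  calc (1 - t * L) * ‖u‖ ^ 2 = ‖u‖ ^ 2 - t * (L * ‖u‖ ^ 2) := by ring
    _ ≤ ‖u‖ ^ 2 - t * ⟪u, v⟫ := by gcongr
    _ = ⟪u, u - t • v⟫ := by
      rw [inner_sub_right, real_inner_smul_right, real_inner_self_eq_norm_sq]

theorem one_sub_mul_norm_le_norm_sub_smul {u v : E} (huv : ⟪u, v⟫ ≤ L * ‖u‖ ^ 2)
    (ht : 0 ≤ t) : (1 - t * L) * ‖u‖ ≤ ‖u - t • v‖ := by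
  rcases (norm_nonneg u).eq_or_lt with hu | hu
  · rw [← hu, mul_zero]
    exact norm_nonneg _
  · refine le_of_mul_le_mul_left ?_ hu
    calc ‖u‖ * ((1 - t * L) * ‖u‖) = (1 - t * L) * ‖u‖ ^ 2 := by ring
      _ ≤ ⟪u, u - t • v⟫ := one_sub_mul_norm_sq_le_inner_sub_smul huv ht
      _ ≤ ‖u‖ * ‖u - t • v‖ := real_inner_le_norm _ _

theorem antilipschitzWith_domRestrict_sub_smul {I : Set E} {μ : E → E}
    (hμ : ∀ x ∈ I, ∀ y ∈ I, ⟪x - y, μ x - μ y⟫ ≤ L * ‖x - y‖ ^ 2)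
    (ht : 0 ≤ t) (htL : t * L < 1) :
    AntilipschitzWith (1 / (1 - t * L)).toNNReal (I.domRestrict fun x => x - t • μ x) := by
  have hpos : 0 < 1 - t * L := sub_pos.2 htL
  refine AntilipschitzWith.of_le_mul_dist fun ⟨x, hx⟩ ⟨y, hy⟩ => ?_
  have hexpand : (1 - t * L) * ‖x - y‖ ≤ ‖(x - t • μ x) - (y - t • μ y)‖ := by
    rw [sub_sub_sub_comm, ← smul_sub]
    exact one_sub_mul_norm_le_norm_sub_smul (hμ x hx y hy) ht
  rw [Real.coe_toNNReal _ (one_div_pos.2 hpos).le, one_div, Subtype.dist_eq, dist_eq_norm,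
    dist_eq_norm]
  exact (le_inv_mul_iff₀ hpos).2 hexpand

end Seminormed

theorem injectivity_and_Lipschitz_inverse_of_implicit_Euler_map_general
    {H : Type*} [NormedAddCommGroup H] [InnerProductSpace ℝ H] {I : Set H} {L : ℝ} {μ : H → H}
    (hμ : ∀ x ∈ I, ∀ y ∈ I, ⟪x - y, μ x - μ y⟫ ≤ L * ‖x - y‖ ^ 2)
    {t : ℝ} (ht : 0 ≤ t) (htL : t * L < 1) :
    Set.InjOn (fun x => x - t • μ x) I ∧
    ∀ x ∈ (fun x => x - t • μ x) '' I, ∀ y ∈ (fun x => x - t • μ x) '' I,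
      haveI : Nonempty H := ⟨0⟩
      ‖Function.invFunOn (fun x => x - t • μ x) I x
          - Function.invFunOn (fun x => x - t • μ x) I y‖
        ≤ (1 / (1 - t * L)) * ‖x - y‖ := by
  have hanti := antilipschitzWith_domRestrict_sub_smul hμ ht htL
  refine ⟨injOn_iff_injective.2 hanti.injective, fun x hx y hy => ?_⟩
  have hsurj := surjOn_image (fun x => x - t • μ x) I
  have hlip := hanti.to_rightInvOn' hsurj.mapsTo_invFunOn hsurj.rightInvOn_invFunOn
  have hdist := hlip.dist_le_mul ⟨x, hx⟩ ⟨y, hy⟩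
  rwa [Real.coe_toNNReal _ (one_div_pos.2 (sub_pos.2 htL)).le, Subtype.dist_eq, dist_eq_norm,
    dist_eq_norm] at hdist

theorem injectivity_and_Lipschitz_inverse_of_implicit_Euler_map
    {H : Type*} [NormedAddCommGroup H] [InnerProductSpace ℝ H] [CompleteSpace H]
    (I : Set H) (hI : I.Nonempty) (L : ℝ) (hL : 0 ≤ L)
    (μ : H → H)
    (hμ : ∀ x ∈ I, ∀ y ∈ I, ⟪x - y, μ x - μ y⟫ ≤ L * ‖x - y‖ ^ 2) :
    ∀ t : ℝ, 0 < t → t * L < 1 →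
      Set.InjOn (fun x => x - t • μ x) I ∧
      ∀ x ∈ (fun x => x - t • μ x) '' I, ∀ y ∈ (fun x => x - t • μ x) '' I,
        haveI : Nonempty H := ⟨0⟩
        ‖Function.invFunOn (fun x => x - t • μ x) I x
            - Function.invFunOn (fun x => x - t • μ x) I y‖
          ≤ (1 / (1 - t * L)) * ‖x - y‖ :=
  fun _ ht htL =>
    injectivity_and_Lipschitz_inverse_of_implicit_Euler_map_general hμ ht.le htL

end
end
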